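/- Let Ω be an arbitrary bounded open convex set in ℝ² containing the origin in its interior, and let ε > 0. For ϑ ∈ [−π,π] let A_ϑ be the rotation of ℝ² by the angle ϑ and A_ϑΩ = {A_ϑ x : x ∈ Ω}. Then there exists a measurable function 𝒞_{ε,Ω} : [−π,π] → [0,∞] belonging to weak L², i.e. sup_{s>0} s²·meas{ϑ ∈ [−π,π] : 𝒞_{ε,Ω}(ϑ) > s} < ∞ (in particular 𝒞_{ε,Ω}(ϑ) < ∞ for almost every ϑ), such that for all ϑ, all R ≥ 2, and all h with 1 ≤ h ≤ R one has 𝒢_{A_ϑΩ}(R,h) ≤ 𝒞_{ε,Ω}(ϑ) · R^{1/2} (log R)^{1+ε}. -/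

import Mathlib

/-!
The lattice rest is analysed through its Fourier series, and the rotation averages out the
directions in which the boundary of `Ω` is flat.

*Fourier side.* The count of lattice points in `tD` is replaced by its average over translations in
a square of side `δ ≍ R^{-1/2}`; by `sandwich` this costs a dilation by `t ± η` with
`η ≍ R^{-1/2}`, hence an error `O(√R)`. Parseval's identity on the torus (`parseval`, `tendsto_psum`)
expands the smoothed rest in a series over `k ≠ 0` with terms
`κ_δ(k) t² ∫_D e^{-2πi t k·x} dx`. In coordinates adapted to `k` the integral is one-dimensional: the
chord length function of a planar convex set, cut at a longest chord, is the sum of two monotone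
pieces, each attached to one of the two supporting lines with normals `±k`
(`fourier_decomp`, `fourier_turned`). Comparing a convex profile with its translate by half a period
bounds the amplitude of each piece by `1/λ` times the longest chord within depth `O(1/λ)` of the
supporting line, and its derivative in `λ` by `O(λ^{-2})` (`norm_amp_le`, `norm_deriv_amp_le`). That
chord is in turn controlled by
the second differences of the support function `h` (`chordSup_cap_le`), so that the amplitude at
frequency `λ = 2πt|k|` is `O((N(arg k))^{1/2} λ^{-3/2})`, where `N` (`curvN`) is essentially the
maximal second difference quotient of `h` (`norm_capAmp_sq_le`).

*Mean squares.* Each term oscillates in `t` with frequency `ρ*(k)`, the support function at `k`.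
On an interval of length one, frequencies with different integer parts are almost orthogonal
(`almost_orth`), and a unit shell of `ρ*` around `k` contains `O(|k|)` lattice points (`mult_le`).
The mean square of the smoothed rest is therefore at most a constant times
`R ∑ |κ_δ(k)|² |k|^{-2} N(±k)`, which the decay of `κ_δ` beyond `|k| ≍ R^{1/2}` bounds by
`R (log R)^p ∑ |k|^{-2} (1 + log |k|)^{-p} N(±k)` (`coeff_le`, `psum_window`, `meanSquare_le`). The
last sum (`curvSum`) no longer depends on `R` or `h`.

*Rotations.* Rotating `Ω` by `ϑ` translates the argument of `N` by `-ϑ`. Adding a quadratic term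
makes `h` convex, so `N` is dominated by the Hardy–Littlewood maximal function of a finite measure
and is of weak type `L¹` in the angle (`weak_curvMax`, `weak_curvN`). By the theorem of Stein and
Weiss (`stein_weiss`) the weighted sum is of weak type `L¹` as soon as `∑ w_k log (1 / w_k) < ∞`;
for the weights `|k|^{-2} (1 + log |k|)^{-p}` this means `p > 2` (`sum_wt`). With `p = 2 + 2ε` the
square root of the sum is the required function of weak type `L²`.
-/

open MeasureTheory Set
open scoped Pointwise RealInnerProductSpace NNReal ENNReal

noncomputable section

abbrev E2 := EuclideanSpace ℝ (Fin 2)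

/-- The embedding of an integer vector into the Euclidean plane. -/
def ek (k : Fin 2 → ℤ) : E2 := (WithLp.equiv 2 (Fin 2 → ℝ)).symm fun i => (k i : ℝ)

/-- Number of lattice points in a set. -/
def latticeCount (S : Set E2) : ℕ := Nat.card {k : Fin 2 → ℤ | ek k ∈ S}

/-- The lattice rest `E_Ω(t) = card(tΩ ∩ ℤ²) − t²·area(Ω)`. -/
def latticeRest (Ω : Set E2) (t : ℝ) : ℝ :=
  (latticeCount (t • Ω) : ℝ) - t ^ 2 * (volume Ω).toReal

/-- The mean square discrepancy `𝒢_Ω(R,h) = ((1/h)∫_R^{R+h} |E_Ω(t)|² dt)^{1/2}`. -/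
def meanSquare (Ω : Set E2) (R h : ℝ) : ℝ :=
  Real.sqrt ((1 / h) * ∫ t in R..(R + h), (latticeRest Ω t) ^ 2)

/-- The support function `ρ*(ξ) = sup {⟨x,ξ⟩ : x ∈ Ω}`. -/
def suppFn (Ω : Set E2) (ξ : E2) : ℝ := sSup ((fun x => ⟪x, ξ⟫) '' Ω)

/-- `μ(θ,δ)`, the diameter of the cap `𝒞(θ,δ) = {x ∈ ∂Ω : ⟨x,θ⟩ ≥ ρ*(θ) − δ}`. -/
def capDiam (Ω : Set E2) (θ : E2) (δ : ℝ) : ℝ :=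
  Metric.diam {x ∈ frontier Ω | suppFn Ω θ - δ ≤ ⟪x, θ⟫}

/-- Curvature bounded below in the generalized sense:
`sup_{θ∈S¹} sup_{δ>0} δ^{-1/2} μ(θ,δ) < ∞`. -/
def CurvBddBelow (Ω : Set E2) : Prop :=
  ∃ K : ℝ, ∀ θ : E2, ‖θ‖ = 1 → ∀ δ : ℝ, 0 < δ → capDiam Ω θ δ ≤ K * Real.sqrt δ

/-- Rotation of the plane by the angle `ϑ`. -/
def rot (ϑ : ℝ) (x : E2) : E2 :=
  (WithLp.equiv 2 (Fin 2 → ℝ)).symm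
    ![Real.cos ϑ * x 0 - Real.sin ϑ * x 1, Real.sin ϑ * x 0 + Real.cos ϑ * x 1]

/-! ### One-dimensional oscillatory integrals of convex profiles -/

lemma integrableOn_shift {E : Type*} [NormedAddCommGroup E] {f : ℝ → E} {h : ℝ} (hh : 0 < h)
    (hf : IntegrableOn f (Ioi 0)) : IntegrableOn (fun u => f (u + h)) (Ioi 0) := by
  have h1 : IntegrableOn f (Ioi h) := hf.mono_set (Ioi_subset_Ioi hh.le)
  have := (measurePreserving_add_right volume h).integrableOn_comp_preimage
    (measurableEmbedding_addRight h) (f := f) (s := Ioi h)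
  rw [← this] at h1
  simpa [Function.comp_def] using h1

lemma integral_shift {E : Type*} [NormedAddCommGroup E] [NormedSpace ℝ E]
    {f : ℝ → E} {h : ℝ} :
    ∫ u in Ioi 0, f (u + h) = ∫ u in Ioi h, f u := by
  have := (measurePreserving_add_right volume h).setIntegral_preimage_emb
    (measurableEmbedding_addRight h) f (Ioi h)
  simpa using this

lemma integral_sub_shift {E : Type*} [NormedAddCommGroup E] [NormedSpace ℝ E]
    {f : ℝ → E} {h : ℝ} (hh : 0 < h) (hf : IntegrableOn f (Ioi 0)) :
    ∫ u in Ioi 0, (f u - f (u + h)) = ∫ u in Ioc 0 h, f u := by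
  rw [integral_sub hf (integrableOn_shift hh hf), integral_shift, ← Ioc_union_Ioi_eq_Ioi hh.le,
    setIntegral_union Ioc_disjoint_Ioi_same measurableSet_Ioi
      (hf.mono_set Ioc_subset_Ioi_self) (hf.mono_set (Ioi_subset_Ioi hh.le))]
  simp

/-- The oscillating factor `e^{iλu}`. -/
def osc (l u : ℝ) : ℂ := Complex.exp (Complex.I * (l * u : ℝ))

lemma norm_osc (l u : ℝ) : ‖osc l u‖ = 1 := by
  rw [osc, mul_comm]; exact Complex.norm_exp_ofReal_mul_I _

lemma continuous_osc (l : ℝ) : Continuous (osc l) := by unfold osc; fun_prop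

lemma osc_shift {l h : ℝ} (hlh : l * h = Real.pi) (u : ℝ) : osc l (u + h) = - osc l u := by
  have : Complex.I * ((l * (u + h) : ℝ) : ℂ) = Complex.I * (l * u : ℝ) + Real.pi * Complex.I := by
    rw [mul_add, hlh]; push_cast; ring
  rw [osc, this, Complex.exp_add, Complex.exp_pi_mul_I]; simp [osc]

lemma integrable_mul_osc {f : ℝ → ℝ} {s : Set ℝ} (l : ℝ) (hf : IntegrableOn f s) :
    IntegrableOn (fun u => (f u : ℂ) * osc l u) s := by
  have h1 : IntegrableOn (fun u => (f u : ℂ)) s := Integrable.ofReal hf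
  refine Integrable.mul_bdd (c := 1) h1 (continuous_osc l).aestronglyMeasurable ?_
  exact Filter.Eventually.of_forall fun u => (norm_osc l u).le

lemma norm_integral_mul_osc_le {f : ℝ → ℝ} {s : Set ℝ} (hs : MeasurableSet s) (l : ℝ)
    (h0 : ∀ u ∈ s, 0 ≤ f u) :
    ‖∫ u in s, (f u : ℂ) * osc l u‖ ≤ ∫ u in s, f u := by
  refine (norm_integral_le_integral_norm _).trans_eq ?_
  refine setIntegral_congr_fun hs fun u hu => ?_
  simp [norm_osc, abs_of_nonneg (h0 u hu)]

/-- Translating by the half period `h = π/λ` flips the sign of `e^{iλu}`, which trades a function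
for its first difference. -/
lemma two_mul_integral_osc {f : ℝ → ℝ} {l h : ℝ} (hh : 0 < h) (hlh : l * h = Real.pi)
    (hf : IntegrableOn f (Ioi 0)) :
    2 * ∫ u in Ioi 0, (f u : ℂ) * osc l u =
      (∫ u in Ioc 0 h, (f u : ℂ) * osc l u) +
        ∫ u in Ioi 0, ((f u - f (u + h) : ℝ) : ℂ) * osc l u := by
  have hg := integrable_mul_osc l hf
  have h1 := integral_sub_shift hh hg
  have h2 : ∀ u, ((f u - f (u + h) : ℝ) : ℂ) * osc l u
      = 2 * ((f u : ℂ) * osc l u) - ((f u : ℂ) * osc l u - (f (u + h) : ℂ) * osc l (u + h)) := by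
    intro u
    rw [osc_shift hlh]; push_cast
    -- the shifted summand enters with a flipped sign
    ring_nf
  rw [← h1]
  simp_rw [h2]
  have e1 : (∫ u in Ioi 0, (2 * ((f u : ℂ) * osc l u) -
      ((f u : ℂ) * osc l u - (f (u + h) : ℂ) * osc l (u + h)))) =
      (∫ u in Ioi 0, 2 * ((f u : ℂ) * osc l u)) -
      ∫ u in Ioi 0, ((f u : ℂ) * osc l u - (f (u + h) : ℂ) * osc l (u + h)) :=
    integral_sub (hg.const_mul 2) (hg.sub (integrableOn_shift hh hg))
  rw [e1, integral_const_mul]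
  ring

/-- Shifting by the half period `h = π/λ` changes the sign of the oscillating factor, so the integral
of a nonincreasing function is controlled by the first half period alone. -/
lemma norm_integral_osc_le_of_antitone {f : ℝ → ℝ} {l h : ℝ} (hh : 0 < h) (hlh : l * h = Real.pi)
    (hf : IntegrableOn f (Ioi 0)) (h0 : ∀ u > 0, 0 ≤ f u) (ha : AntitoneOn f (Ioi 0)) :
    ‖∫ u in Ioi 0, (f u : ℂ) * osc l u‖ ≤ ∫ u in Ioc 0 h, f u := by
  have h1 := two_mul_integral_osc hh hlh hf
  have h2 : ‖∫ u in Ioc 0 h, (f u : ℂ) * osc l u‖ ≤ ∫ u in Ioc 0 h, f u :=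
    norm_integral_mul_osc_le measurableSet_Ioc l fun u hu => h0 u hu.1
  have h3 : ‖∫ u in Ioi 0, ((f u - f (u + h) : ℝ) : ℂ) * osc l u‖ ≤ ∫ u in Ioc 0 h, f u := by
    refine (norm_integral_mul_osc_le measurableSet_Ioi l fun u hu => ?_).trans_eq
      (integral_sub_shift hh hf)
    have hu : 0 < u := hu
    exact sub_nonneg.2 (ha hu (show 0 < u + h by linarith) (by linarith))
  have h4 : ‖(2 : ℂ) * ∫ u in Ioi 0, (f u : ℂ) * osc l u‖ ≤
      (∫ u in Ioc 0 h, f u) + ∫ u in Ioc 0 h, f u := by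
    rw [h1]; exact (norm_add_le _ _).trans (add_le_add h2 h3)
  rw [norm_mul] at h4
  simp at h4
  linarith

/-- `C` is a bounded, nonincreasing, convex profile on `(0,∞)` which vanishes beyond `w`. -/
structure Profile (C : ℝ → ℝ) (M w : ℝ) : Prop where
  conv : ConvexOn ℝ (Ioi 0) C
  anti : AntitoneOn C (Ioi 0)
  nonneg : ∀ u > 0, 0 ≤ C u
  le : ∀ u > 0, C u ≤ M
  zero : ∀ u, w ≤ u → C u = 0
  wpos : 0 < w

namespace Profile
variable {C : ℝ → ℝ} {M w : ℝ}

lemma M_nonneg (p : Profile C M w) : 0 ≤ M := (p.nonneg 1 one_pos).trans (p.le 1 one_pos)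

lemma integrable_of_bdd {f : ℝ → ℝ} {K : ℝ} (p : Profile C M w) 
    (hm : AEStronglyMeasurable f (volume.restrict (Ioi 0))) (hb : ∀ u > 0, u < w → |f u| ≤ K)
    (hz : ∀ u, w ≤ u → f u = 0) : IntegrableOn f (Ioi 0) := by
  have h1 : IntegrableOn f (Ioo 0 w) := by
    refine ⟨hm.mono_measure (Measure.restrict_mono Ioo_subset_Ioi_self le_rfl), ?_⟩
    refine HasFiniteIntegral.restrict_of_bounded (C := K) (by simp) ?_
    exact (ae_restrict_mem measurableSet_Ioo).mono fun u hu => hb u hu.1 hu.2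
  have h2 : IntegrableOn f (Ici w) :=
    (integrableOn_zero (ε' := ℝ)).congr_fun (fun u hu => (hz u hu).symm) measurableSet_Ici
  rw [← Ioo_union_Ici_eq_Ioi p.wpos]
  exact h1.union h2

lemma aesm (p : Profile C M w) : AEStronglyMeasurable C (volume.restrict (Ioi 0)) :=
  (aemeasurable_restrict_of_antitoneOn measurableSet_Ioi p.anti).aestronglyMeasurable

lemma integrable (p : Profile C M w) : IntegrableOn C (Ioi 0) :=
  p.integrable_of_bdd (K := M) p.aesm
    (fun u hu _ => by rw [abs_of_nonneg (p.nonneg u hu)]; exact p.le u hu) p.zero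

lemma integrable_mul (p : Profile C M w) : IntegrableOn (fun u => u * C u) (Ioi 0) := by
  refine p.integrable_of_bdd (K := w * M) (measurable_id.aestronglyMeasurable.mul p.aesm) ?_ ?_
  · intro u hu hw
    rw [abs_of_nonneg (mul_nonneg hu.le (p.nonneg u hu))]
    exact mul_le_mul hw.le (p.le u hu) (p.nonneg u hu) p.wpos.le
  · intro u hu; simp [p.zero u hu]

lemma diff_nonneg (p : Profile C M w) {h : ℝ} (hh : 0 < h) {u : ℝ} (hu : 0 < u) :
    0 ≤ C u - C (u + h) :=
  sub_nonneg.2 (p.anti hu (show 0 < u + h by linarith) (by linarith))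

/-- First differences of a convex function are nondecreasing, so `C(u) - C(u+h)` decreases. -/
lemma diff_anti (p : Profile C M w) {h : ℝ} (hh : 0 < h) :
    AntitoneOn (fun u => C u - C (u + h)) (Ioi 0) := by
  intro u hu v hv huv
  have hu : 0 < u := hu
  have hv : 0 < v := hv
  rcases eq_or_lt_of_le huv with rfl | huv
  · exact le_rfl
  show C v - C (v + h) ≤ C u - C (u + h)
  -- both `v` and `u + h` are convex combinations of `u` and `v + h`
  set τ := h / (v + h - u) with hτ
  have hd : 0 < v + h - u := by linarith
  have hτ0 : 0 ≤ τ := by positivity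
  have hτ1 : τ ≤ 1 := by rw [hτ, div_le_one hd]; linarith
  have e : τ * (v + h - u) = h := by rw [hτ]; field_simp
  have c1 := p.conv.2 (show u ∈ Ioi 0 from hu) (show v + h ∈ Ioi 0 from by simp; linarith)
    hτ0 (sub_nonneg.2 hτ1) (by ring)
  have c2 := p.conv.2 (show u ∈ Ioi 0 from hu) (show v + h ∈ Ioi 0 from by simp; linarith)
    (sub_nonneg.2 hτ1) hτ0 (by ring)
  simp only [smul_eq_mul] at c1 c2
  have e1 : τ * u + (1 - τ) * (v + h) = v := by linear_combination -e
  have e2 : (1 - τ) * u + τ * (v + h) = u + h := by linear_combination e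
  rw [e1] at c1; rw [e2] at c2
  linarith

lemma diff_integrable (p : Profile C M w) {h : ℝ} (hh : 0 < h) :
    IntegrableOn (fun u => C u - C (u + h)) (Ioi 0) :=
  p.integrable.sub (integrableOn_shift hh p.integrable)

lemma mul_diff_integrable (p : Profile C M w) {h : ℝ} (hh : 0 < h) :
    IntegrableOn (fun u => u * (C u - C (u + h))) (Ioi 0) := by
  refine p.integrable_of_bdd (K := w * M)
    (measurable_id.aestronglyMeasurable.mul (p.diff_integrable hh).aestronglyMeasurable) ?_ ?_
  · intro u hu hw
    have hd := p.diff_nonneg hh hu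
    rw [abs_of_nonneg (mul_nonneg hu.le hd)]
    refine mul_le_mul hw.le ?_ hd p.wpos.le
    linarith [p.le u hu, p.nonneg (u + h) (by linarith)]
  · intro u hu; simp [p.zero u hu, p.zero (u + h) (by linarith)]

lemma integral_diff_le (p : Profile C M w) {h : ℝ} (hh : 0 < h) :
    ∫ u in Ioi 0, (C u - C (u + h)) ≤ h * M := by
  rw [integral_sub_shift hh p.integrable]
  refine (setIntegral_mono_on (g := fun _ => M) (p.integrable.mono_set Ioc_subset_Ioi_self)
    (by simp) measurableSet_Ioc (fun u hu => p.le u hu.1)).trans_eq ?_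
  simp [hh.le]

/-- The amplitude `iM/λ - ∫₀^∞ C(u) e^{iλu} du` attached to a profile. -/
def amp (C : ℝ → ℝ) (M l : ℝ) : ℂ :=
  Complex.I * M / l - ∫ u in Ioi 0, (C u : ℂ) * osc l u

/-- Size of the amplitude in terms of the complementary concave function `M - C`. -/
lemma norm_amp_le (p : Profile C M w) {l h : ℝ} (hh : 0 < h) (hlh : l * h = Real.pi) :
    ‖amp C M l‖ ≤ h * (M - C (2 * h)) := by
  have hl : l ≠ 0 := by rintro rfl; simp at hlh; exact Real.pi_ne_zero hlh.symm
  have h1 := two_mul_integral_osc hh hlh p.integrable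
  have hconst : ∫ u in Ioc 0 h, (M : ℂ) * osc l u = 2 * (Complex.I * M / l) := by
    rw [← intervalIntegral.integral_of_le hh.le, intervalIntegral.integral_const_mul]
    have : ∀ u : ℝ, osc l u = Complex.exp ((Complex.I * l) * u) := by
      intro u; rw [osc]; push_cast; ring_nf
    simp_rw [this]
    rw [integral_exp_mul_complex (by simp [hl])]
    have e : Complex.I * l * (h : ℂ) = Real.pi * Complex.I := by
      rw [← hlh]; push_cast; ring
    rw [e, Complex.exp_pi_mul_I]
    have hl' : (l : ℂ) ≠ 0 := by exact_mod_cast hl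
    field_simp
    simp
    ring_nf
  have hintg : IntegrableOn C (Ioc 0 h) := p.integrable.mono_set Ioc_subset_Ioi_self
  have h2 : 2 * amp C M l = (∫ u in Ioc 0 h, ((M - C u : ℝ) : ℂ) * osc l u) -
      ∫ u in Ioi 0, ((C u - C (u + h) : ℝ) : ℂ) * osc l u := by
    have : ∀ u, ((M - C u : ℝ) : ℂ) * osc l u = (M : ℂ) * osc l u - (C u : ℂ) * osc l u := by
      intro u; push_cast; ring
    simp_rw [this]
    rw [integral_sub (integrable_mul_osc (f := fun _ => M) l (by simp)) (integrable_mul_osc l hintg),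
      hconst, amp, mul_sub, h1]
    ring
  have hB : ‖∫ u in Ioc 0 h, ((M - C u : ℝ) : ℂ) * osc l u‖ ≤ h * (M - C (2 * h)) := by
    refine (norm_integral_mul_osc_le measurableSet_Ioc l fun u hu =>
      sub_nonneg.2 (p.le u hu.1)).trans ?_
    refine (setIntegral_mono_on (f := fun u => M - C u) (g := fun _ => M - C (2 * h)) (Integrable.sub (by simp) hintg)
      (by simp) measurableSet_Ioc fun u hu => ?_).trans_eq (by simp [hh.le])
    linarith [p.anti (show u ∈ Ioi 0 from hu.1) (show 2 * h ∈ Ioi 0 by simp [hh])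
      (by linarith [hu.2])]
  have hD : ‖∫ u in Ioi 0, ((C u - C (u + h) : ℝ) : ℂ) * osc l u‖ ≤ h * (M - C (2 * h)) := by
    refine (norm_integral_osc_le_of_antitone hh hlh (p.diff_integrable hh)
      (fun u hu => p.diff_nonneg hh hu) (p.diff_anti hh)).trans ?_
    refine (setIntegral_mono_on (g := fun _ => M - C (2 * h))
      ((p.diff_integrable hh).mono_set Ioc_subset_Ioi_self)
      (by simp) measurableSet_Ioc fun u hu => ?_).trans_eq (by simp [hh.le])
    have hu0 := hu.1
    linarith [p.le u hu.1, p.anti (show u + h ∈ Ioi 0 by simp; linarith) 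
      (show 2 * h ∈ Ioi 0 by simp [hh]) (by linarith [hu.2])]
  have h3 : ‖(2 : ℂ) * amp C M l‖ ≤ h * (M - C (2 * h)) + h * (M - C (2 * h)) := by
    rw [h2]; exact (norm_sub_le _ _).trans (add_le_add hB hD)
  rw [norm_mul] at h3
  simp at h3
  linarith

/-- The first moment of a profile against the oscillating factor; the half-period shift gains
two powers of `h = π/λ`. -/
lemma norm_integral_mul_le (p : Profile C M w) {l h : ℝ} (hh : 0 < h) (hlh : l * h = Real.pi) :
    ‖∫ u in Ioi 0, ((u * C u : ℝ) : ℂ) * osc l u‖ ≤ 2 * h ^ 2 * M := by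
  have hM := p.M_nonneg
  have hI := p.integral_diff_le hh
  have hDi := p.diff_integrable hh
  have h1 := two_mul_integral_osc hh hlh p.integrable_mul
  have hT1 : ‖∫ u in Ioc 0 h, ((u * C u : ℝ) : ℂ) * osc l u‖ ≤ h ^ 2 * M := by
    refine (norm_integral_mul_osc_le measurableSet_Ioc l fun u hu =>
      mul_nonneg hu.1.le (p.nonneg u hu.1)).trans ?_
    refine (setIntegral_mono_on (g := fun _ => h * M)
      (p.integrable_mul.mono_set Ioc_subset_Ioi_self)
      (integrable_const _) measurableSet_Ioc fun u hu => ?_).trans_eq (by simp [hh.le]; ring_nf)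
    exact mul_le_mul hu.2 (p.le u hu.1) (p.nonneg u hu.1) hh.le
  have hshi : IntegrableOn (fun u => C (u + h)) (Ioi 0) := integrableOn_shift hh p.integrable
  have hT2 : ‖∫ u in Ioi 0, (C (u + h) : ℂ) * osc l u‖ ≤ h * M := by
    refine (norm_integral_osc_le_of_antitone (f := fun u => C (u + h)) hh hlh hshi
      (fun u hu => p.nonneg _ (by linarith)) ?_).trans ?_
    · intro u hu v hv huv
      have hu : 0 < u := hu
      have hv : 0 < v := hv
      exact p.anti (show 0 < u + h by linarith) (show 0 < v + h by linarith) (by linarith)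
    · refine (setIntegral_mono_on (g := fun _ => M) (hshi.mono_set Ioc_subset_Ioi_self)
        (by simp) measurableSet_Ioc fun u hu => p.le _ (by linarith [hu.1])).trans_eq
        (by simp [hh.le])
  -- second use of the half-period shift, now for `u (C(u) - C(u+h))`
  set D : ℝ → ℝ := fun u => C u - C (u + h) with hD
  have hD0 : ∀ u > 0, 0 ≤ D u := fun u hu => p.diff_nonneg hh hu
  have hDI0 : 0 ≤ ∫ u in Ioi 0, D u := setIntegral_nonneg measurableSet_Ioi fun u hu => hD0 u hu
  have hmD : IntegrableOn (fun u => u * D u) (Ioi 0) := p.mul_diff_integrable hh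
  have h2 := two_mul_integral_osc hh hlh hmD
  have hloc : ∫ u in Ioc 0 h, u * D u ≤ h * ∫ u in Ioi 0, D u := by
    rw [← integral_const_mul]
    refine (setIntegral_mono_on (hmD.mono_set Ioc_subset_Ioi_self)
      (IntegrableOn.mono_set (hDi.const_mul h) Ioc_subset_Ioi_self) measurableSet_Ioc 
      fun u hu => mul_le_mul_of_nonneg_right hu.2 (hD0 u hu.1)).trans ?_
    refine setIntegral_mono_set (hDi.const_mul h) ?_ Ioc_subset_Ioi_self.eventuallyLE
    exact (ae_restrict_mem measurableSet_Ioi).mono fun u hu => mul_nonneg hh.le (hD0 u hu)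
  have hS1 : ‖∫ u in Ioc 0 h, ((u * D u : ℝ) : ℂ) * osc l u‖ ≤ h * ∫ u in Ioi 0, D u :=
    (norm_integral_mul_osc_le measurableSet_Ioc l fun u hu =>
      mul_nonneg hu.1.le (hD0 u hu.1)).trans hloc
  have hDs : IntegrableOn (fun u => D (u + h)) (Ioi 0) := integrableOn_shift hh hDi
  have hDsle : ∫ u in Ioi 0, D (u + h) ≤ ∫ u in Ioi 0, D u := by
    rw [integral_shift]
    refine setIntegral_mono_set hDi ?_ (Ioi_subset_Ioi hh.le).eventuallyLE
    exact (ae_restrict_mem measurableSet_Ioi).mono fun u hu => hD0 u hu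
  have hS2 : ‖∫ u in Ioi 0, ((u * D u - (u + h) * D (u + h) : ℝ) : ℂ) * osc l u‖ ≤
      3 * (h * ∫ u in Ioi 0, D u) := by
    have hsub := integral_sub_shift hh hmD
    have hintg1 : IntegrableOn (fun u => u * D u - (u + h) * D (u + h)) (Ioi 0) :=
      hmD.sub (integrableOn_shift hh hmD)
    have hpt : ∀ u ∈ Ioi (0 : ℝ), ‖((u * D u - (u + h) * D (u + h) : ℝ) : ℂ) * osc l u‖ ≤
        (u * D u - (u + h) * D (u + h)) + 2 * h * D (u + h) := by
      intro u hu
      have hu : 0 < u := hu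
      have a1 : D (u + h) ≤ D u := p.diff_anti hh hu (show 0 < u + h by linarith) (by linarith)
      have a2 := hD0 (u + h) (by linarith)
      rw [norm_mul, norm_osc, mul_one, Complex.norm_real, Real.norm_eq_abs, abs_le]
      constructor <;> nlinarith
    refine (norm_integral_le_integral_norm _).trans ?_
    refine (setIntegral_mono_on (g := fun u => (u * D u - (u + h) * D (u + h)) + 2 * h * D (u + h))
      (integrable_mul_osc l hintg1).norm (hintg1.add (hDs.const_mul (2 * h))) measurableSet_Ioi hpt).trans ?_
    rw [integral_add hintg1 (hDs.const_mul (2 * h)), hsub, integral_const_mul]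
    nlinarith
  have hT3 : ‖∫ u in Ioi 0, ((u * D u : ℝ) : ℂ) * osc l u‖ ≤ 2 * (h ^ 2 * M) := by
    have : ‖(2 : ℂ) * ∫ u in Ioi 0, ((u * D u : ℝ) : ℂ) * osc l u‖ ≤
        h * (∫ u in Ioi 0, D u) + 3 * (h * ∫ u in Ioi 0, D u) := by
      rw [h2]; exact (norm_add_le _ _).trans (add_le_add hS1 hS2)
    rw [norm_mul, Complex.norm_ofNat] at this
    nlinarith
  have hsplit : ∫ u in Ioi 0, ((u * C u - (u + h) * C (u + h) : ℝ) : ℂ) * osc l u =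
      (∫ u in Ioi 0, ((u * D u : ℝ) : ℂ) * osc l u) -
        h * ∫ u in Ioi 0, (C (u + h) : ℂ) * osc l u := by
    rw [← integral_const_mul, ← integral_sub (integrable_mul_osc l hmD)
      ((integrable_mul_osc (f := fun u => C (u + h)) l hshi).const_mul _)]
    refine integral_congr_ae (Filter.Eventually.of_forall fun u => ?_)
    simp only [hD]; push_cast; ring
  have : ‖(2 : ℂ) * ∫ u in Ioi 0, ((u * C u : ℝ) : ℂ) * osc l u‖ ≤
      h ^ 2 * M + (2 * (h ^ 2 * M) + h * (h * M)) := by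
    rw [h1, hsplit]
    refine (norm_add_le _ _).trans (add_le_add hT1 ((norm_sub_le _ _).trans (add_le_add hT3 ?_)))
    rw [norm_mul, Complex.norm_real, Real.norm_eq_abs, abs_of_pos hh]
    exact mul_le_mul_of_nonneg_left hT2 hh.le
  rw [norm_mul, Complex.norm_ofNat] at this
  linarith

lemma hasDerivAt_amp (p : Profile C M w) {l : ℝ} (hl : 0 < l) :
    HasDerivAt (amp C M) (-(Complex.I * M / l ^ 2) -
      Complex.I * ∫ u in Ioi 0, ((u * C u : ℝ) : ℂ) * osc l u) l := by
  have h1 : HasDerivAt (fun l : ℝ => Complex.I * M / (l : ℂ)) (-(Complex.I * M / l ^ 2)) l := by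
    have hl' : (l : ℂ) ≠ 0 := by exact_mod_cast hl.ne'
    have := ((hasDerivAt_inv hl').comp_ofReal).const_mul (Complex.I * M)
    simpa [div_eq_mul_inv] using this
  have h2 := (hasDerivAt_integral_of_dominated_loc_of_deriv_le (𝕜 := ℝ)
    (μ := volume.restrict (Ioi 0)) (F := fun l u => (C u : ℂ) * osc l u)
    (F' := fun l u => Complex.I * (((u * C u : ℝ) : ℂ) * osc l u)) (x₀ := l)
    (s := univ) (bound := fun u => ‖u * C u‖) Filter.univ_mem
    (Filter.Eventually.of_forall fun l =>
      (integrable_mul_osc l p.integrable).aestronglyMeasurable)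
    (integrable_mul_osc l p.integrable)
    ((integrable_mul_osc l p.integrable_mul).const_mul _).aestronglyMeasurable
    (Filter.Eventually.of_forall fun u l _ => by
      simp only [norm_mul, norm_osc, Complex.norm_I, Complex.norm_real, one_mul, mul_one]; exact le_rfl)
    p.integrable_mul.norm
    (Filter.Eventually.of_forall fun u l _ => by
      have : HasDerivAt (fun l : ℝ => osc l u) (osc l u * (Complex.I * u)) l := by
        unfold osc
        refine HasDerivAt.cexp ?_
        have := ((hasDerivAt_mul_const u (x := l)).ofReal_comp).const_mul Complex.I
        simpa using this
      have := this.const_mul (C u : ℂ)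
      refine this.congr_deriv ?_
      push_cast; ring)).2
  rw [integral_const_mul] at h2
  exact h1.sub h2

/-- The derivative of the amplitude is `O(M/λ²)`. -/
lemma norm_deriv_amp_le (p : Profile C M w) {l : ℝ} (hl : 0 < l) :
    ‖-(Complex.I * M / l ^ 2) - Complex.I * ∫ u in Ioi 0, ((u * C u : ℝ) : ℂ) * osc l u‖
      ≤ 24 * M / l ^ 2 := by
  have hlh : l * (Real.pi / l) = Real.pi := by field_simp
  have h1 := p.norm_integral_mul_le (by positivity) hlh
  have hM := p.M_nonneg
  have h2 : ‖-(Complex.I * M / l ^ 2)‖ = M / l ^ 2 := by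
    simp [abs_of_nonneg hM]
  refine (norm_sub_le _ _).trans ?_
  rw [h2, norm_mul, Complex.norm_I, one_mul]
  refine (add_le_add le_rfl h1).trans ?_
  have hpi : Real.pi ^ 2 ≤ 11 := by nlinarith [Real.pi_lt_d2, Real.pi_pos]
  have : M / l ^ 2 + 2 * (Real.pi / l) ^ 2 * M = (1 + 2 * Real.pi ^ 2) * M / l ^ 2 := by
    field_simp
  rw [this]
  gcongr
  linarith

end Profile

/-! ### Sections of planar convex sets and the Fourier transform of their indicator -/

/-- Lengths of the vertical chords of `W` over abscissas in `S`. -/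
def chords (W : Set (ℝ × ℝ)) (S : Set ℝ) : Set ℝ :=
  {L | ∃ s ∈ S, ∃ y y', (s, y) ∈ W ∧ (s, y') ∈ W ∧ L = y' - y}

lemma chords_mono {W : Set (ℝ × ℝ)} {S T : Set ℝ} (h : S ⊆ T) : chords W S ⊆ chords W T :=
  fun _ ⟨s, hs, r⟩ => ⟨s, h hs, r⟩

/-- Supremum of the chord lengths over abscissas in `S`. -/
def chordSup (W : Set (ℝ × ℝ)) (S : Set ℝ) : ℝ := sSup (chords W S)

section
variable {W : Set (ℝ × ℝ)} {K : ℝ}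

lemma chordSup_nonneg {S : Set ℝ} (hK : ∀ L ∈ chords W univ, L ≤ K) : 0 ≤ chordSup W S := by
  by_cases h : (chords W S).Nonempty
  · obtain ⟨L, s, hs, y, y', h1, h2, rfl⟩ := h
    refine le_csSup ⟨K, fun L hL => hK L (chords_mono (subset_univ _) hL)⟩ ?_
    exact ⟨s, hs, y, y, h1, h1, by simp⟩
  · rw [not_nonempty_iff_eq_empty] at h
    simp [chordSup, h]

lemma chordSup_le {S : Set ℝ} {c : ℝ} (hc : 0 ≤ c) (h : ∀ L ∈ chords W S, L ≤ c) :
    chordSup W S ≤ c := Real.sSup_le h hc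

lemma le_chordSup (hK : ∀ L ∈ chords W univ, L ≤ K) {S : Set ℝ} {L : ℝ} (hL : L ∈ chords W S) :
    L ≤ chordSup W S :=
  le_csSup ⟨K, fun L hL => hK L (chords_mono (subset_univ _) hL)⟩ hL

lemma chordSup_mono (hK : ∀ L ∈ chords W univ, L ≤ K) {S T : Set ℝ} (h : S ⊆ T) :
    chordSup W S ≤ chordSup W T :=
  chordSup_le (chordSup_nonneg hK) fun _ hL => le_chordSup hK (chords_mono h hL)

/-- The deficit `M - B(u)`, where `B(u)` is the largest chord over `[a-u, ∞)` and `M` the largest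
chord overall. -/
def deficit (W : Set (ℝ × ℝ)) (a u : ℝ) : ℝ := chordSup W univ - chordSup W (Ici (a - u))

/-- Brunn's theorem in the plane: chord lengths are concave in the abscissa, so the deficit is a
convex profile. -/
lemma profile_deficit (hW : Convex ℝ W) (hK : ∀ L ∈ chords W univ, L ≤ K) {a b : ℝ}
    (ha : IsLUB (Prod.fst '' W) a) (hb : ∀ p ∈ W, -b < p.1) (hab : 0 < a + b) :
    Profile (deficit W a) (chordSup W univ) (a + b) where
  conv := by
    refine ⟨convex_Ioi 0, ?_⟩
    intro u hu v hv x y hx hy hxy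
    have hne : ∀ u : ℝ, 0 < u → (chords W (Ici (a - u))).Nonempty := by
      intro u hu
      obtain ⟨_, ⟨p, hp, rfl⟩, h1, -⟩ := ha.exists_between (sub_lt_self a hu)
      exact ⟨_, p.1, h1.le, p.2, p.2, hp, hp, rfl⟩
    have hbd : ∀ u : ℝ, BddAbove (chords W (Ici (a - u))) := fun u =>
      ⟨K, fun L hL => hK L (chords_mono (subset_univ _) hL)⟩
    have key : x * chordSup W (Ici (a - u)) + y * chordSup W (Ici (a - v)) ≤
        chordSup W (Ici (a - (x * u + y * v))) := by
      rw [chordSup, chordSup, ← smul_eq_mul, ← smul_eq_mul, ← Real.sSup_smul_of_nonneg hx,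
        ← Real.sSup_smul_of_nonneg hy, ← csSup_add ((hne u hu).smul_set)
        ((hbd u).smul_of_nonneg hx) ((hne v hv).smul_set) ((hbd v).smul_of_nonneg hy)]
      refine csSup_le (((hne u hu).smul_set).add ((hne v hv).smul_set)) ?_
      rintro _ ⟨_, ⟨_, ⟨s, hs, p, p', h1, h2, rfl⟩, rfl⟩, _, ⟨_, ⟨t, ht, q, q', h3, h4, rfl⟩, rfl⟩,
        rfl⟩
      refine le_chordSup hK ⟨x * s + y * t, ?_, x * p + y * q, x * p' + y * q', ?_, ?_, ?_⟩
      · have hs : a - u ≤ s := hs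
        have ht : a - v ≤ t := ht
        show a - (x * u + y * v) ≤ x * s + y * t
        have e : a = x * a + y * a := by rw [← add_mul, hxy, one_mul]
        nlinarith [mul_le_mul_of_nonneg_left hs hx, mul_le_mul_of_nonneg_left ht hy]
      · simpa using hW h1 h3 hx hy hxy
      · simpa using hW h2 h4 hx hy hxy
      · simp; ring
    simp only [deficit, smul_eq_mul]
    have : chordSup W univ = x * chordSup W univ + y * chordSup W univ := by
      rw [← add_mul, hxy, one_mul]
    linarith
  anti := by
    intro u _ v _ huv
    exact sub_le_sub_left (chordSup_mono hK (Ici_subset_Ici.2 (by linarith))) _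
  nonneg u _ := sub_nonneg.2 (chordSup_mono hK (subset_univ _))
  le u _ := by have := chordSup_nonneg (S := Ici (a - u)) hK; rw [deficit]; linarith
  zero u hu := by
    have : chords W univ ⊆ chords W (Ici (a - u)) := by
      rintro L ⟨s, -, y, y', h1, h2, rfl⟩
      refine ⟨s, ?_, y, y', h1, h2, rfl⟩
      have := hb _ h1
      simp only [mem_Ici] at *
      linarith
    rw [deficit, sub_eq_zero]
    rw [chordSup, chordSup, subset_antisymm this (chords_mono (subset_univ _))]
  wpos := hab

/-- Reflection of a planar set in the vertical axis. -/
def reflect (W : Set (ℝ × ℝ)) : Set (ℝ × ℝ) := {p | (-p.1, p.2) ∈ W}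

lemma chords_reflect (S : Set ℝ) : chords (reflect W) S = chords W (-S) := by
  ext L
  constructor
  · rintro ⟨s, hs, y, y', h1, h2, rfl⟩
    exact ⟨-s, by simpa using hs, y, y', h1, h2, rfl⟩
  · rintro ⟨s, hs, y, y', h1, h2, rfl⟩
    exact ⟨-s, hs, y, y', by simpa [reflect] using h1, by simpa [reflect] using h2, rfl⟩

lemma chordSup_reflect (S : Set ℝ) : chordSup (reflect W) S = chordSup W (-S) := by
  rw [chordSup, chords_reflect, chordSup]

lemma convex_reflect (hW : Convex ℝ W) : Convex ℝ (reflect W) := by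
  intro p hp q hq x y hx hy hxy
  have := hW hp hq hx hy hxy
  simp only [reflect, mem_ofPred_eq] at *
  convert this using 1
  ext <;> simp; ring

/-- Chord lengths are quasiconcave in the abscissa: the chord at `s` equals the smaller one of the
suprema to the right and to the left of `s`, and the larger one is the global supremum. -/
lemma chordSup_singleton (hW : Convex ℝ W) (hK : ∀ L ∈ chords W univ, L ≤ K) (s : ℝ) :
    chordSup W (Ici s) + chordSup W (Iic s) = chordSup W univ + chordSup W {s} := by
  have hmax : chordSup W univ = max (chordSup W (Ici s)) (chordSup W (Iic s)) := by
    apply le_antisymm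
    · refine chordSup_le (le_max_of_le_left (chordSup_nonneg hK)) ?_
      rintro L ⟨s', -, h⟩
      rcases le_total s s' with h' | h'
      · exact le_max_of_le_left (le_chordSup hK ⟨s', h', h⟩)
      · exact le_max_of_le_right (le_chordSup hK ⟨s', h', h⟩)
    · exact max_le (chordSup_mono hK (subset_univ _)) (chordSup_mono hK (subset_univ _))
  have hmin : chordSup W {s} = min (chordSup W (Ici s)) (chordSup W (Iic s)) := by
    apply le_antisymm
    · exact le_min (chordSup_mono hK (by simp)) (chordSup_mono hK (by simp))
    by_contra! hlt
    rw [lt_min_iff] at hlt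
    have h0 := chordSup_nonneg (S := {s}) hK
    have hne : ∀ S, chordSup W {s} < chordSup W S → ∃ L ∈ chords W S, chordSup W {s} < L := by
      intro S hS
      by_contra! hcon
      exact absurd (chordSup_le h0 hcon) (not_le.2 hS)
    obtain ⟨L1, ⟨s1, hs1, p, p', a1, a2, rfl⟩, hL1⟩ := hne _ hlt.1
    obtain ⟨L2, ⟨s2, hs2, q, q', b1, b2, rfl⟩, hL2⟩ := hne _ hlt.2
    have hs1 : s ≤ s1 := hs1
    have hs2 : s2 ≤ s := hs2
    have hseg : s ∈ segment ℝ s2 s1 := by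
      rw [segment_eq_Icc (hs2.trans hs1)]; exact ⟨hs2, hs1⟩
    obtain ⟨x, y, hx, hy, hxy, hsum⟩ := hseg
    simp only [smul_eq_mul] at hsum
    have hmem : (x * (q' - q) + y * (p' - p)) ∈ chords W {s} := by
      refine ⟨s, rfl, x * q + y * p, x * q' + y * p', ?_, ?_, by ring⟩
      · rw [← hsum]; simpa using hW b1 a1 hx hy hxy
      · rw [← hsum]; simpa using hW b2 a2 hx hy hxy
    have := le_chordSup hK hmem
    nlinarith [mul_le_mul_of_nonneg_left hL1.le hy, mul_le_mul_of_nonneg_left hL2.le hx,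
      mul_lt_mul_of_pos_left hL1 (lt_of_le_of_ne hy (fun h => by
        have hx1 : x = 1 := by linarith
        subst hx1; subst h; linarith))]
  rw [hmax, hmin, max_add_min]

/-- The section over `s` is an interval, so its measure is the supremum of its chord lengths. -/
lemma volume_section (hW : Convex ℝ W) (hK : ∀ L ∈ chords W univ, L ≤ K) (s : ℝ) :
    (volume (Prod.mk s ⁻¹' W)).toReal = chordSup W {s} := by
  have h0 := chordSup_nonneg (S := {s}) hK
  have hd : ∀ y ∈ Prod.mk s ⁻¹' W, ∀ y' ∈ Prod.mk s ⁻¹' W, dist y y' ≤ chordSup W {s} := by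
    intro y hy y' hy'
    rw [Real.dist_eq, abs_le']
    exact ⟨le_chordSup hK ⟨s, rfl, y', y, hy', hy, rfl⟩, by
      rw [neg_sub]; exact le_chordSup hK ⟨s, rfl, y, y', hy, hy', rfl⟩⟩
  have hle : volume (Prod.mk s ⁻¹' W) ≤ ENNReal.ofReal (chordSup W {s}) := by
    refine (Real.volume_le_diam _).trans ?_
    refine Metric.ediam_le fun y hy y' hy' => ?_
    rw [edist_dist]
    exact ENNReal.ofReal_le_ofReal (hd y hy y' hy')
  apply le_antisymm
  · exact ENNReal.toReal_le_of_le_ofReal h0 hle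
  · refine chordSup_le ENNReal.toReal_nonneg ?_
    rintro L ⟨s', hs', y, y', h1, h2, rfl⟩
    obtain rfl : s' = s := hs'
    rcases le_total y' y with h | h
    · exact (sub_nonpos.2 h).trans ENNReal.toReal_nonneg
    have hsub : Icc y y' ⊆ Prod.mk s' ⁻¹' W := by
      have hc : Convex ℝ (Prod.mk s' ⁻¹' W) := by
        intro p hp q hq x z hx hz hxz
        have := hW hp hq hx hz hxz
        simp only [mem_preimage] at *
        convert this using 1
        ext <;> simp
        rw [← add_mul, hxz, one_mul]
      exact hc.ordConnected.out h1 h2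
    have := measure_mono (μ := volume) hsub
    rw [Real.volume_Icc] at this
    rw [← ENNReal.toReal_ofReal (sub_nonneg.2 h)]
    exact ENNReal.toReal_mono (hle.trans_lt ENNReal.ofReal_lt_top).ne this

lemma osc_add (l u v : ℝ) : osc l (u + v) = osc l u * osc l v := by
  simp only [osc, ← Complex.exp_add]; congr 1; push_cast; ring

lemma osc_neg (l u : ℝ) : osc l (-u) = starRingEnd ℂ (osc l u) := by
  rw [osc, osc, ← Complex.exp_conj]; simp

lemma osc_neg_left (l u : ℝ) : osc (-l) u = starRingEnd ℂ (osc l u) := by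
  rw [← osc_neg]; simp [osc]

/-- The Fourier transform of the indicator of a planar convex set, in the first coordinate
direction, splits into two pieces, oscillating with the frequencies of the two supporting lines. -/
lemma fourier_decomp (hW : Convex ℝ W) (hWm : MeasurableSet W) (hfin : volume W ≠ ∞)
    (hK : ∀ L ∈ chords W univ, L ≤ K) {a b : ℝ}
    (ha : IsLUB (Prod.fst '' W) a) (ha' : ∀ p ∈ W, p.1 < a)
    (hb : IsLUB (Prod.fst '' reflect W) b) (hb' : ∀ p ∈ W, -b < p.1) (hab : 0 < a + b)
    {l : ℝ} (hl : 0 < l) :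
    ∫ p in W, osc (-l) p.1 =
      osc (-l) a * Profile.amp (deficit W a) (chordSup W univ) l +
      starRingEnd ℂ (osc (-l) b *
        Profile.amp (deficit (reflect W) b) (chordSup (reflect W) univ) l) := by
  set M := chordSup W univ with hM
  have hMr : chordSup (reflect W) univ = M := by rw [chordSup_reflect]; simp [hM]
  have hKr : ∀ L ∈ chords (reflect W) univ, L ≤ K := by rw [chords_reflect]; simpa using hK
  have p1 := profile_deficit hW hK ha hb' hab
  have p2 := profile_deficit (convex_reflect hW) hKr hb (b := a)
    (fun p hp => by have := ha' _ hp; simp at this; linarith) (by linarith)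
  rw [hMr] at p2 ⊢
  rw [← hM] at p1
  set C1 := deficit W a with hC1
  set C2 := deficit (reflect W) b with hC2
  -- Fubini
  have hF : ∫ p in W, osc (-l) p.1 = ∫ s, (chordSup W {s} : ℂ) * osc (-l) s := by
    have hi : Integrable (W.indicator fun p : ℝ × ℝ => osc (-l) p.1) (volume.prod volume) := by
      rw [← Measure.volume_eq_prod, integrable_indicator_iff hWm]
      refine ⟨((continuous_osc _).comp continuous_fst).aestronglyMeasurable, ?_⟩
      refine HasFiniteIntegral.restrict_of_bounded (C := 1) hfin.lt_top ?_
      exact Filter.Eventually.of_forall fun p => (norm_osc _ _).le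
    rw [← integral_indicator hWm, Measure.volume_eq_prod, integral_prod _ hi]
    congr 1
    ext s
    have : (fun y => W.indicator (fun p : ℝ × ℝ => osc (-l) p.1) (s, y)) =
        (Prod.mk s ⁻¹' W).indicator fun _ => osc (-l) s := by
      ext y; simp only [indicator]; rfl
    rw [this, integral_indicator (measurable_prodMk_left hWm), setIntegral_const,
      Measure.real, volume_section hW hK]
    simp
  have hA : ∀ s, (chordSup W {s} : ℂ) * osc (-l) s =
      (Ioo (-b) a).indicator (fun s => (M : ℂ) * osc (-l) s) s -
      (Iio a).indicator (fun s => (C1 (a - s) : ℂ) * osc (-l) s) s -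
      (Ioi (-b)).indicator (fun s => (C2 (s + b) : ℂ) * osc (-l) s) s := by
    intro s
    have hq := chordSup_singleton hW hK s
    have e1 : C1 (a - s) = M - chordSup W (Ici s) := by simp [hC1, deficit, hM]
    have e2 : C2 (s + b) = M - chordSup W (Iic s) := by
      simp only [hC2, deficit, hMr]
      rw [chordSup_reflect]; simp
    have z1 : a ≤ s → chordSup W {s} = 0 ∧ C2 (s + b) = 0 := by
      intro h
      refine ⟨?_, p2.zero _ (by linarith)⟩
      rw [chordSup, (?_ : chords W {s} = ∅), Real.sSup_empty]
      rw [eq_empty_iff_forall_notMem]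
      rintro L ⟨s', hs', y, y', h1, -⟩
      have := ha' _ h1
      simp at this hs'
      linarith
    have z2 : s ≤ -b → chordSup W {s} = 0 ∧ C1 (a - s) = 0 := by
      intro h
      refine ⟨?_, p1.zero _ (by linarith)⟩
      rw [chordSup, (?_ : chords W {s} = ∅), Real.sSup_empty]
      rw [eq_empty_iff_forall_notMem]
      rintro L ⟨s', hs', y, y', h1, -⟩
      have := hb' _ h1
      simp at this hs'
      linarith
    by_cases h1 : s < a
    · by_cases h2 : -b < s
      · rw [indicator_of_mem (show s ∈ Ioo (-b) a from ⟨h2, h1⟩),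
          indicator_of_mem (show s ∈ Iio a from h1), indicator_of_mem (show s ∈ Ioi (-b) from h2),
          e1, e2, ← sub_mul, ← sub_mul]
        congr 1
        have : chordSup W {s} = M - (M - chordSup W (Ici s)) - (M - chordSup W (Iic s)) := by
          linarith
        exact_mod_cast this
      · have := z2 (not_lt.1 h2)
        simp [indicator, h1, h2, this]
    · have := z1 (not_lt.1 h1)
      simp [indicator, h1, this]
  have hConst : ∫ s in Ioo (-b) a, (M : ℂ) * osc (-l) s =
      osc (-l) a * (Complex.I * M / l) + starRingEnd ℂ (osc (-l) b * (Complex.I * M / l)) := by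
    rw [← integral_Ioc_eq_integral_Ioo, ← intervalIntegral.integral_of_le (by linarith),
      intervalIntegral.integral_const_mul]
    have : ∀ u : ℝ, osc (-l) u = Complex.exp ((-Complex.I * l) * u) := by
      intro u; rw [osc]; push_cast; ring_nf
    have hl' : (l : ℂ) ≠ 0 := by exact_mod_cast hl.ne'
    have e : starRingEnd ℂ (osc (-l) b) = osc (-l) (-b) := (osc_neg _ _).symm
    rw [map_mul, e]
    simp_rw [this]
    rw [integral_exp_mul_complex (by simp [hl.ne'])]
    simp only [map_div₀, map_mul, Complex.conj_I, Complex.conj_ofReal]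
    field_simp
    simp
    exact Or.inl (by ring)
  have i1 : IntegrableOn (fun s => (C1 (a - s) : ℂ) * osc (-l) s) (Iio a) ∧
      ∫ s in Iio a, (C1 (a - s) : ℂ) * osc (-l) s =
        osc (-l) a * ∫ u in Ioi 0, (C1 u : ℂ) * osc l u := by
    have hmp : MeasurePreserving (fun s : ℝ => a - s) volume volume :=
      Measure.measurePreserving_sub_left volume a
    have hme : MeasurableEmbedding (fun s : ℝ => a - s) :=
      (Homeomorph.subLeft a).measurableEmbedding
    have hpre : (fun s : ℝ => a - s) ⁻¹' Ioi 0 = Iio a := by ext; simp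
    have heq : (fun s => (C1 (a - s) : ℂ) * osc (-l) s) =
        (fun u => osc (-l) a * ((C1 u : ℂ) * osc l u)) ∘ fun s => a - s := by
      ext s
      have : osc (-l) s = osc (-l) a * osc l (a - s) := by
        rw [show osc l (a - s) = osc (-l) (s - a) by simp [osc]; ring_nf, ← osc_add]
        congr 1; ring
      rw [this, Function.comp]; ring
    constructor
    · rw [← hpre, heq, hmp.integrableOn_comp_preimage hme]
      exact (integrable_mul_osc l p1.integrable).const_mul _
    · have := hmp.setIntegral_preimage_emb hme
        (fun u => osc (-l) a * ((C1 u : ℂ) * osc l u)) (Ioi 0)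
      rw [hpre] at this
      rw [heq, ← integral_const_mul]
      exact this
  have i2 : IntegrableOn (fun s => (C2 (s + b) : ℂ) * osc (-l) s) (Ioi (-b)) ∧
      ∫ s in Ioi (-b), (C2 (s + b) : ℂ) * osc (-l) s =
        starRingEnd ℂ (osc (-l) b * ∫ u in Ioi 0, (C2 u : ℂ) * osc l u) := by
    have hmp : MeasurePreserving (fun s : ℝ => s + b) volume volume :=
      measurePreserving_add_right volume b
    have hme : MeasurableEmbedding (fun s : ℝ => s + b) := measurableEmbedding_addRight b
    have hpre : (fun s : ℝ => s + b) ⁻¹' Ioi 0 = Ioi (-b) := by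
      ext; simp
    have heq : (fun s => (C2 (s + b) : ℂ) * osc (-l) s) =
        (fun u => starRingEnd ℂ (osc (-l) b * ((C2 u : ℂ) * osc l u))) ∘ fun s => s + b := by
      ext s
      have : osc (-l) s = osc (-l) (s + b) * starRingEnd ℂ (osc (-l) b) := by
        rw [← osc_neg, ← osc_add]; congr 1; ring
      rw [this, Function.comp, map_mul, map_mul, Complex.conj_ofReal, osc_neg_left l (s + b)]; ring
    constructor
    · rw [← hpre, heq, hmp.integrableOn_comp_preimage hme]
      have := ((integrable_mul_osc l p2.integrable).const_mul (osc (-l) b))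
      exact (Complex.conjCLE.toContinuousLinearMap.integrable_comp this)
    · have := hmp.setIntegral_preimage_emb hme
        (fun u => starRingEnd ℂ (osc (-l) b * ((C2 u : ℂ) * osc l u))) (Ioi 0)
      rw [hpre] at this
      rw [heq, ← integral_const_mul, ← integral_conj]
      exact this
  have i0 : IntegrableOn (fun s => (M : ℂ) * osc (-l) s) (Ioo (-b) a) :=
    integrable_mul_osc (f := fun _ => M) (-l) (by simp)
  rw [hF]
  simp_rw [hA]
  rw [integral_sub ?_ ?_, integral_sub ?_ ?_, integral_indicator measurableSet_Ioo,
    integral_indicator measurableSet_Iio, integral_indicator measurableSet_Ioi, hConst, i1.2, i2.2,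
    Profile.amp, Profile.amp]
  · simp only [mul_sub, map_sub]; ring
  · exact (integrable_indicator_iff measurableSet_Ioo).2 i0
  · exact (integrable_indicator_iff measurableSet_Iio).2 i1.1
  · exact ((integrable_indicator_iff measurableSet_Ioo).2 i0).sub
      ((integrable_indicator_iff measurableSet_Iio).2 i1.1)
  · exact (integrable_indicator_iff measurableSet_Ioi).2 i2.1

end

/-! ### Support functions and rotated copies of a planar domain -/

/-- An open convex planar domain squeezed between the discs of radii `r₀` and `R₀` about `0`. -/
structure IsDom (D : Set E2) (r₀ R₀ : ℝ) : Prop where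
  conv : Convex ℝ D
  opn : IsOpen D
  r_pos : 0 < r₀
  ball_sub : Metric.ball 0 r₀ ⊆ D
  norm_le : ∀ x ∈ D, ‖x‖ ≤ R₀

/-- The point with coordinates `p` in the orthonormal frame rotated by the angle `φ`. -/
def frame (φ : ℝ) (p : ℝ × ℝ) : E2 :=
  !₂[Real.cos φ * p.1 - Real.sin φ * p.2, Real.sin φ * p.1 + Real.cos φ * p.2]

/-- The domain `D` in the coordinates of the frame rotated by `φ`. -/
def turned (D : Set E2) (φ : ℝ) : Set (ℝ × ℝ) := frame φ ⁻¹' D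

/-- The support function of `D` in the direction `(cos φ, sin φ)`. -/
def hgt (D : Set E2) (φ : ℝ) : ℝ := sSup (Prod.fst '' turned D φ)

lemma frame_zero (φ : ℝ) (p : ℝ × ℝ) : frame φ p 0 = Real.cos φ * p.1 - Real.sin φ * p.2 := rfl
lemma frame_one (φ : ℝ) (p : ℝ × ℝ) : frame φ p 1 = Real.sin φ * p.1 + Real.cos φ * p.2 := rfl

lemma norm_frame_sq (φ : ℝ) (p : ℝ × ℝ) : ‖frame φ p‖ ^ 2 = p.1 ^ 2 + p.2 ^ 2 := by
  rw [EuclideanSpace.norm_sq_eq, Fin.sum_univ_two, frame_zero, frame_one, Real.norm_eq_abs,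
    Real.norm_eq_abs, sq_abs, sq_abs]
  linear_combination (p.1 ^ 2 + p.2 ^ 2) * Real.sin_sq_add_cos_sq φ

lemma frame_add (φ α : ℝ) (p : ℝ × ℝ) :
    frame φ p = frame (φ + α) (Real.cos α * p.1 + Real.sin α * p.2,
      Real.cos α * p.2 - Real.sin α * p.1) := by
  have h := Real.sin_sq_add_cos_sq α
  ext i
  fin_cases i
  · simp only [Fin.zero_eta, frame_zero, Real.cos_add, Real.sin_add]
    linear_combination -(Real.cos φ * p.1 - Real.sin φ * p.2) * h
  · simp only [Fin.mk_one, frame_one, Real.cos_add, Real.sin_add]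
    linear_combination -(Real.sin φ * p.1 + Real.cos φ * p.2) * h

lemma continuous_frame (φ : ℝ) : Continuous (frame φ) := by
  unfold frame
  fun_prop

lemma frame_comb (φ x y : ℝ) (p q : ℝ × ℝ) :
    frame φ (x • p + y • q) = x • frame φ p + y • frame φ q := by
  ext i
  fin_cases i <;> simp [frame] <;> ring

lemma frame_pi (φ : ℝ) (p : ℝ × ℝ) : frame (φ + Real.pi) p = frame φ (-p) := by
  ext i
  fin_cases i <;> simp [frame, sub_eq_add_neg]

namespace IsDom
variable {D : Set E2} {r₀ R₀ : ℝ} (hD : IsDom D r₀ R₀)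
include hD

lemma convex_turned (φ : ℝ) : Convex ℝ (turned D φ) := by
  intro p hp q hq x y hx hy hxy
  show frame φ _ ∈ D
  rw [frame_comb]
  exact hD.conv hp hq hx hy hxy

lemma isOpen_turned (φ : ℝ) : IsOpen (turned D φ) := hD.opn.preimage (continuous_frame φ)

lemma sq_le {φ : ℝ} {p : ℝ × ℝ} (hp : p ∈ turned D φ) : p.1 ^ 2 + p.2 ^ 2 ≤ R₀ ^ 2 := by
  rw [← norm_frame_sq φ]
  have := hD.norm_le _ hp
  gcongr

lemma R_pos : 0 < R₀ := by
  have h1 := hD.r_pos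
  have hx : frame 0 (r₀ / 2, 0) ∈ D := by
    apply hD.ball_sub
    rw [mem_ball_zero_iff, ← abs_norm, ← abs_of_pos h1, ← sq_lt_sq, norm_frame_sq, abs_of_pos h1]
    norm_num; nlinarith
  have := hD.sq_le (φ := 0) (p := (r₀ / 2, 0)) hx
  have h2 := hD.norm_le _ hx
  have h3 := norm_nonneg (frame 0 (r₀ / 2, 0))
  simp at this
  rcases eq_or_lt_of_le (h3.trans h2) with h | h
  · rw [← h] at this; nlinarith
  · exact h

lemma abs_fst_le {φ : ℝ} {p : ℝ × ℝ} (hp : p ∈ turned D φ) : |p.1| ≤ R₀ := by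
  have := hD.sq_le hp
  exact abs_le_of_sq_le_sq (by nlinarith) hD.R_pos.le

lemma abs_snd_le {φ : ℝ} {p : ℝ × ℝ} (hp : p ∈ turned D φ) : |p.2| ≤ R₀ := by
  have := hD.sq_le hp
  exact abs_le_of_sq_le_sq (by nlinarith) hD.R_pos.le

lemma mem_turned_of_sq_lt {φ : ℝ} {p : ℝ × ℝ} (hp : p.1 ^ 2 + p.2 ^ 2 < r₀ ^ 2) :
    p ∈ turned D φ := by
  apply hD.ball_sub
  rw [mem_ball_zero_iff, ← abs_norm, ← abs_of_pos hD.r_pos, ← sq_lt_sq, norm_frame_sq]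
  exact hp

lemma zero_mem (φ : ℝ) : (0 : ℝ × ℝ) ∈ turned D φ :=
  hD.mem_turned_of_sq_lt (by simpa using pow_pos hD.r_pos 2)

lemma isLUB (φ : ℝ) : IsLUB (Prod.fst '' turned D φ) (hgt D φ) :=
  isLUB_csSup ⟨_, _, hD.zero_mem φ, rfl⟩
    ⟨R₀, by rintro _ ⟨p, hp, rfl⟩; exact (abs_le.1 (hD.abs_fst_le hp)).2⟩

lemma le_hgt {φ : ℝ} {p : ℝ × ℝ} (hp : p ∈ turned D φ) : p.1 ≤ hgt D φ :=
  (hD.isLUB φ).1 ⟨p, hp, rfl⟩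

lemma lt_hgt {φ : ℝ} {p : ℝ × ℝ} (hp : p ∈ turned D φ) : p.1 < hgt D φ := by
  have hc : Continuous fun u : ℝ => ((p.1 + u, p.2) : ℝ × ℝ) := by fun_prop
  have h1 := (hD.isOpen_turned φ).preimage hc
  have h0 : (0 : ℝ) ∈ (fun u : ℝ => ((p.1 + u, p.2) : ℝ × ℝ)) ⁻¹' turned D φ := by simpa using hp
  obtain ⟨e, he, hsub⟩ := Metric.isOpen_iff.1 h1 0 h0
  have : e / 2 ∈ Metric.ball (0 : ℝ) e := by
    rw [mem_ball_zero_iff, Real.norm_eq_abs, abs_of_pos (by linarith)]; linarith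
  have := hD.le_hgt (hsub this)
  simp at this
  linarith

lemma hgt_le (φ : ℝ) : hgt D φ ≤ R₀ :=
  (hD.isLUB φ).2 (by rintro _ ⟨p, hp, rfl⟩; exact (abs_le.1 (hD.abs_fst_le hp)).2)

lemma le_hgt_r (φ : ℝ) : r₀ ≤ hgt D φ := by
  refine le_of_forall_lt fun c hc => ?_
  rcases lt_or_ge c 0 with h | h
  · exact h.trans (hD.lt_hgt (hD.zero_mem φ))
  · exact hD.lt_hgt (p := (c, 0)) (hD.mem_turned_of_sq_lt (by simp; nlinarith))

lemma hgt_pos (φ : ℝ) : 0 < hgt D φ := hD.r_pos.trans_le (hD.le_hgt_r φ)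

lemma le_hgt_add {φ : ℝ} {p : ℝ × ℝ} (hp : p ∈ turned D φ) (α : ℝ) :
    Real.cos α * p.1 + Real.sin α * p.2 ≤ hgt D (φ + α) := by
  refine hD.le_hgt (φ := φ + α) (p := (_, Real.cos α * p.2 - Real.sin α * p.1)) ?_
  show frame _ _ ∈ D
  rw [← frame_add]
  exact hp

omit hD in
lemma mem_turned_pi {φ : ℝ} {p : ℝ × ℝ} : p ∈ turned D (φ + Real.pi) ↔ -p ∈ turned D φ := by
  rw [turned, turned, mem_preimage, mem_preimage, frame_pi]

omit hD in
lemma fst_reflect (φ : ℝ) :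
    Prod.fst '' reflect (turned D φ) = Prod.fst '' turned D (φ + Real.pi) := by
  ext s
  constructor
  · rintro ⟨p, hp, rfl⟩
    refine ⟨(p.1, -p.2), ?_, rfl⟩
    rw [mem_turned_pi]; simpa [reflect] using hp
  · rintro ⟨p, hp, rfl⟩
    refine ⟨(p.1, -p.2), ?_, rfl⟩
    rw [mem_turned_pi] at hp; exact hp

omit hD in
lemma chords_reflect_turned (φ : ℝ) (S : Set ℝ) :
    chords (reflect (turned D φ)) S = chords (turned D (φ + Real.pi)) S := by
  ext L
  constructor
  · rintro ⟨s, hs, y, y', h1, h2, rfl⟩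
    refine ⟨s, hs, -y', -y, ?_, ?_, by ring⟩
    · rw [mem_turned_pi]; simpa [reflect] using h2
    · rw [mem_turned_pi]; simpa [reflect] using h1
  · rintro ⟨s, hs, y, y', h1, h2, rfl⟩
    rw [mem_turned_pi] at h1 h2
    exact ⟨s, hs, -y', -y, h2, h1, by ring⟩

lemma chord_le (φ : ℝ) : ∀ L ∈ chords (turned D φ) univ, L ≤ 2 * R₀ := by
  rintro L ⟨s, -, y, y', h1, h2, rfl⟩
  have a1 := abs_le.1 (hD.abs_snd_le h1)
  have a2 := abs_le.1 (hD.abs_snd_le h2)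
  simp only at a1 a2
  linarith [a1.1, a2.2]

/-- Chords near the supporting line are short when the second differences of the support
function are small: a chord of length `L` at depth at most `u` forces
`L sin α ≤ h(φ+α) + h(φ-α) - 2h(φ) + R₀α² + 2u`, and `α = √(u/N)` balances the terms. -/
lemma chordSup_cap_le {φ N : ℝ} (hN : 1 ≤ N)
    (hNα : ∀ α ∈ Ioc (0 : ℝ) 1,
      hgt D (φ + α) + hgt D (φ - α) - 2 * hgt D φ + R₀ * α ^ 2 ≤ N * α ^ 2)
    {u : ℝ} (hu : 0 < u) (hu1 : u ≤ 1) :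
    chordSup (turned D φ) (Ici (hgt D φ - u)) ≤ 5 * Real.sqrt (u * N) := by
  refine chordSup_le (by positivity) ?_
  rintro L ⟨s, hs, y, y', h1, h2, rfl⟩
  have hs : hgt D φ - u ≤ s := hs
  set α := Real.sqrt (u / N) with hα
  have hN0 : 0 < N := by linarith
  have hα0 : 0 < α := Real.sqrt_pos.2 (by positivity)
  have hα1 : α ≤ 1 := by
    rw [hα, Real.sqrt_le_one]
    rw [div_le_one hN0]; linarith
  have e2 : α ^ 2 = u / N := Real.sq_sqrt (by positivity)
  have b1 := hD.le_hgt_add h2 α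
  have b2 := hD.le_hgt_add h1 (-α)
  rw [Real.cos_neg, Real.sin_neg, ← sub_eq_add_neg φ α] at b2
  have b3 := hNα α ⟨hα0, hα1⟩
  simp only at b1 b2
  have c1 : 1 - α ^ 2 / 2 ≤ Real.cos α := Real.one_sub_sq_div_two_le_cos
  have c2 : Real.cos α ≤ 1 := Real.cos_le_one _
  have c0 : 0 ≤ Real.cos α := by nlinarith
  have c3 : 2 / Real.pi * α ≤ Real.sin α :=
    Real.mul_le_sin hα0.le (by linarith [Real.pi_gt_three])
  have hpos := hD.hgt_pos φ
  have hR := hD.hgt_le φ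
  rcases le_or_gt y' y with hy | hy
  · exact (sub_nonpos.2 hy).trans (by positivity)
  have hL : 0 < y' - y := by linarith
  have key : (y' - y) * Real.sin α ≤ N * α ^ 2 + 2 * u := by
    have : hgt D φ * (1 - Real.cos α) ≤ R₀ * (α ^ 2 / 2) := by
      apply mul_le_mul hR (by linarith) (by linarith) hD.R_pos.le
    nlinarith [mul_le_mul_of_nonneg_right hs c0, mul_le_mul_of_nonneg_left c2 hu.le]
  have key2 : (y' - y) * (2 / Real.pi * α) ≤ 3 * u := by
    calc _ ≤ (y' - y) * Real.sin α := by gcongr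
      _ ≤ _ := key
      _ = 3 * u := by rw [e2]; field_simp; ring
  have e3 : α * Real.sqrt (u * N) = u := by
    rw [hα, ← Real.sqrt_mul (by positivity)]
    rw [show u / N * (u * N) = u ^ 2 by field_simp, Real.sqrt_sq hu.le]
  have hpi : 2 / Real.pi ≥ 3 / 5 := by
    rw [ge_iff_le, div_le_div_iff₀ (by norm_num) Real.pi_pos]
    linarith [Real.pi_lt_d2]
  have key3 : (y' - y) * α * (3 / 5) ≤ 3 * (α * Real.sqrt (u * N)) := by
    rw [e3]
    calc _ ≤ (y' - y) * α * (2 / Real.pi) := by gcongr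
      _ = (y' - y) * (2 / Real.pi * α) := by ring
      _ ≤ _ := key2
  have : (y' - y) * α ≤ (5 * Real.sqrt (u * N)) * α := by linarith
  exact le_of_mul_le_mul_right this hα0

/-- The support function is a supremum of trigonometric polynomials with second derivative at least
`-R₀`, so it becomes convex after adding `R₀ φ² / 2`. -/
lemma convexOn_hgt : ConvexOn ℝ univ fun φ => hgt D φ + R₀ * φ ^ 2 / 2 := by
  refine ⟨convex_univ, ?_⟩
  intro φ₁ _ φ₂ _ a b ha hb hab
  set φ := a • φ₁ + b • φ₂ with hφ
  simp only
  have key : ∀ p ∈ turned D φ, p.1 + R₀ * φ ^ 2 / 2 ≤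
      a * (hgt D φ₁ + R₀ * φ₁ ^ 2 / 2) + b * (hgt D φ₂ + R₀ * φ₂ ^ 2 / 2) := by
    intro p hp
    -- the trigonometric polynomial of a single point is convex after adding `R₀ φ² / 2`
    have hcv : ConvexOn ℝ univ fun ψ : ℝ =>
        Real.cos (ψ - φ) * p.1 + Real.sin (ψ - φ) * p.2 + R₀ * ψ ^ 2 / 2 := by
      have d1 : ∀ ψ : ℝ, HasDerivAt (fun ψ : ℝ =>
          Real.cos (ψ - φ) * p.1 + Real.sin (ψ - φ) * p.2 + R₀ * ψ ^ 2 / 2)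
          (-Real.sin (ψ - φ) * p.1 + Real.cos (ψ - φ) * p.2 + R₀ * ψ) ψ := by
        intro ψ
        have h1 : HasDerivAt (fun ψ : ℝ => ψ - φ) 1 ψ := (hasDerivAt_id ψ).sub_const φ
        refine (((h1.cos.mul_const p.1).add (h1.sin.mul_const p.2)).add
          (((hasDerivAt_pow 2 ψ).const_mul R₀).div_const 2)).congr_deriv ?_
        push_cast; ring
      have d2 : ∀ ψ : ℝ, HasDerivAt (fun ψ : ℝ =>
          -Real.sin (ψ - φ) * p.1 + Real.cos (ψ - φ) * p.2 + R₀ * ψ)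
          (-(Real.cos (ψ - φ) * p.1 + Real.sin (ψ - φ) * p.2) + R₀) ψ := by
        intro ψ
        have h1 : HasDerivAt (fun ψ : ℝ => ψ - φ) 1 ψ := (hasDerivAt_id ψ).sub_const φ
        refine (((h1.sin.neg.mul_const p.1).add (h1.cos.mul_const p.2)).add
          ((hasDerivAt_id ψ).const_mul R₀)).congr_deriv ?_
        ring
      refine MonotoneOn.convexOn_of_deriv convex_univ
        (fun ψ _ => (d1 ψ).continuousAt.continuousWithinAt)
        (fun ψ _ => (d1 ψ).differentiableAt.differentiableWithinAt) ?_
      rw [show deriv _ = _ from funext fun ψ => (d1 ψ).deriv]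
      refine (monotone_of_deriv_nonneg (fun ψ => (d2 ψ).differentiableAt) fun ψ => ?_).monotoneOn _
      rw [(d2 ψ).deriv]
      have := hD.le_hgt_add hp (ψ - φ)
      linarith [hD.hgt_le (φ + (ψ - φ))]
    have := hcv.2 (mem_univ φ₁) (mem_univ φ₂) ha hb hab
    rw [← hφ] at this
    simp only [sub_self, Real.cos_zero, Real.sin_zero, smul_eq_mul] at this
    have h1 := hD.le_hgt_add hp (φ₁ - φ)
    have h2 := hD.le_hgt_add hp (φ₂ - φ)
    rw [add_sub_cancel] at h1 h2
    nlinarith [mul_le_mul_of_nonneg_left h1 ha, mul_le_mul_of_nonneg_left h2 hb]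
  have : hgt D φ ≤ a * (hgt D φ₁ + R₀ * φ₁ ^ 2 / 2) + b * (hgt D φ₂ + R₀ * φ₂ ^ 2 / 2) -
      R₀ * φ ^ 2 / 2 :=
    (hD.isLUB φ).2 (by rintro _ ⟨p, hp, rfl⟩; linarith [key p hp])
  simp only [smul_eq_mul]
  linarith

lemma continuous_hgt : Continuous (hgt D) := by
  have h1 : ContinuousOn (fun φ => hgt D φ + R₀ * φ ^ 2 / 2) univ :=
    hD.convexOn_hgt.continuousOn isOpen_univ
  rw [continuousOn_univ] at h1
  have : hgt D = fun φ => (hgt D φ + R₀ * φ ^ 2 / 2) - R₀ * φ ^ 2 / 2 := by ext; ring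
  rw [this]
  fun_prop

omit hD in
lemma hgt_periodic : Function.Periodic (hgt D) (2 * Real.pi) := by
  intro φ
  have : turned D (φ + 2 * Real.pi) = turned D φ := by
    ext p; simp [turned, frame]
  rw [hgt, this, hgt]

end IsDom

/-- The amplitude of the contribution of the supporting line with normal direction `φ` to the
Fourier transform of the indicator of `D`. -/
def capAmp (D : Set E2) (φ l : ℝ) : ℂ :=
  Profile.amp (deficit (turned D φ) (hgt D φ)) (chordSup (turned D φ) univ) l

namespace IsDom
variable {D : Set E2} {r₀ R₀ : ℝ} (hD : IsDom D r₀ R₀)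
include hD

lemma neg_hgt_lt {φ : ℝ} {p : ℝ × ℝ} (hp : p ∈ turned D φ) : -hgt D (φ + Real.pi) < p.1 := by
  have : -p ∈ turned D (φ + Real.pi) := by rw [mem_turned_pi]; simpa using hp
  have := hD.lt_hgt this
  simp at this
  linarith

lemma volume_turned_lt (φ : ℝ) : volume (turned D φ) ≠ ∞ := by
  have hsub : turned D φ ⊆ Icc (-R₀) R₀ ×ˢ Icc (-R₀) R₀ := fun p hp =>
    ⟨abs_le.1 (hD.abs_fst_le hp), abs_le.1 (hD.abs_snd_le hp)⟩
  exact ((isCompact_Icc.prod isCompact_Icc).measure_lt_top.trans_le' (measure_mono hsub)).ne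

lemma profile (φ : ℝ) : Profile (deficit (turned D φ) (hgt D φ)) (chordSup (turned D φ) univ)
    (hgt D φ + hgt D (φ + Real.pi)) :=
  profile_deficit (hD.convex_turned φ) (hD.chord_le φ) (hD.isLUB φ) (fun _ hp => hD.neg_hgt_lt hp)
    (add_pos (hD.hgt_pos _) (hD.hgt_pos _))

/-- The Fourier transform of the domain at the frequency `λ (cos φ, sin φ)` is the sum of the
contributions of the two supporting lines with normals `±(cos φ, sin φ)`. -/
lemma fourier_turned (φ : ℝ) {l : ℝ} (hl : 0 < l) :
    ∫ p in turned D φ, osc (-l) p.1 = osc (-l) (hgt D φ) * capAmp D φ l +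
      starRingEnd ℂ (osc (-l) (hgt D (φ + Real.pi)) * capAmp D (φ + Real.pi) l) := by
  have hb : IsLUB (Prod.fst '' reflect (turned D φ)) (hgt D (φ + Real.pi)) := by
    rw [fst_reflect]; exact hD.isLUB _
  rw [fourier_decomp (hD.convex_turned φ) (hD.isOpen_turned φ).measurableSet
    (hD.volume_turned_lt φ) (hD.chord_le φ) (hD.isLUB φ) (fun _ hp => hD.lt_hgt hp) hb
    (fun _ hp => hD.neg_hgt_lt hp) (add_pos (hD.hgt_pos _) (hD.hgt_pos _)) hl]
  have e : ∀ S, chordSup (reflect (turned D φ)) S = chordSup (turned D (φ + Real.pi)) S := by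
    intro S; rw [chordSup, chords_reflect_turned, chordSup]
  have e2 : deficit (reflect (turned D φ)) (hgt D (φ + Real.pi)) =
      deficit (turned D (φ + Real.pi)) (hgt D (φ + Real.pi)) := by
    ext u; rw [deficit, deficit, e, e]
  rw [e, e2]
  rfl

/-- Decay `N λ^{-3}` of the squared amplitude, from the chord bound at depth `2π/λ`. -/
lemma norm_capAmp_sq_le {φ N : ℝ} (hN : 1 ≤ N)
    (hNα : ∀ α ∈ Ioc (0 : ℝ) 1,
      hgt D (φ + α) + hgt D (φ - α) - 2 * hgt D φ + R₀ * α ^ 2 ≤ N * α ^ 2)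
    {l : ℝ} (hl : 2 * Real.pi ≤ l) : ‖capAmp D φ l‖ ^ 2 ≤ 1600 * N / l ^ 3 := by
  have hpi := Real.pi_pos
  have hl0 : 0 < l := by linarith
  set h := Real.pi / l with hh
  have hh0 : 0 < h := by positivity
  have h1 := (hD.profile φ).norm_amp_le hh0 (l := l) (by rw [hh]; field_simp)
  have h2 : chordSup (turned D φ) univ - deficit (turned D φ) (hgt D φ) (2 * h) =
      chordSup (turned D φ) (Ici (hgt D φ - 2 * h)) := by rw [deficit]; ring
  rw [h2] at h1
  have hle : 2 * h ≤ 1 := by rw [hh, ← mul_div_assoc, div_le_one hl0]; exact hl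
  have h3 := hD.chordSup_cap_le hN hNα (u := 2 * h) (by positivity) hle
  have h4 : ‖capAmp D φ l‖ ≤ h * (5 * Real.sqrt (2 * h * N)) :=
    h1.trans (mul_le_mul_of_nonneg_left h3 hh0.le)
  calc ‖capAmp D φ l‖ ^ 2 ≤ (h * (5 * Real.sqrt (2 * h * N))) ^ 2 := by gcongr
    _ = 50 * Real.pi ^ 3 * N / l ^ 3 := by
      rw [mul_pow, mul_pow, Real.sq_sqrt (by positivity), hh]; field_simp; ring
    _ ≤ 1600 * N / l ^ 3 := by
      gcongr
      have : Real.pi ^ 3 ≤ 3.15 ^ 3 := by gcongr; exact Real.pi_lt_d2.le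
      linarith

/-- The derivative of the amplitude, with its size. -/
lemma hasDerivAt_capAmp (φ : ℝ) {l : ℝ} (hl : 0 < l) :
    ∃ d : ℂ, HasDerivAt (capAmp D φ) d l ∧ ‖d‖ ≤ 48 * R₀ / l ^ 2 := by
  refine ⟨_, (hD.profile φ).hasDerivAt_amp hl, ((hD.profile φ).norm_deriv_amp_le hl).trans ?_⟩
  have : chordSup (turned D φ) univ ≤ 2 * R₀ :=
    chordSup_le (by linarith [hD.R_pos]) (hD.chord_le φ)
  have h0 := (hD.profile φ).M_nonneg
  rw [show (48 : ℝ) * R₀ = 24 * (2 * R₀) by ring]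
  gcongr

end IsDom

/-! ### The maximal function of second differences -/

/-- The maximal second difference quotient of `H` at `φ`, over steps in `(0,1]`. -/
def curvMax (H : ℝ → ℝ) (φ : ℝ) : ℝ≥0∞ :=
  ⨆ α ∈ Ioc (0 : ℝ) 1, ENNReal.ofReal ((H (φ + α) + H (φ - α) - 2 * H φ) / α ^ 2)

lemma measurable_curvMax {H : ℝ → ℝ} (hH : Continuous H) : Measurable (curvMax H) := by
  refine LowerSemicontinuous.measurable ?_
  refine lowerSemicontinuous_biSup fun α _ => Continuous.lowerSemicontinuous ?_
  exact ENNReal.continuous_ofReal.comp (by fun_prop)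

/-- Second differences of a convex function are controlled by the Stieltjes measure of its
derivative. -/
lemma second_diff_le {f : ℝ → ℝ} (hf : ConvexOn ℝ univ f) :
    ∃ μ : Measure ℝ, IsFiniteMeasureOnCompacts μ ∧ ∀ φ α : ℝ, 0 < α →
      ENNReal.ofReal ((f (φ + α) + f (φ - α) - 2 * f φ) / α) ≤
        μ (Metric.closedBall φ α) := by
  set g : ℝ → ℝ := fun x => derivWithin f (Ioi x) x with hg
  have hmono : Monotone g := by
    have := hf.monotoneOn_rightDeriv
    rwa [interior_univ, monotoneOn_univ] at this
  have hlow : ∀ x y, x < y → g x ≤ slope f x y := fun x y h =>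
    hf.rightDeriv_le_slope_of_mem_interior (by simp) (mem_univ _) h
  have hup : ∀ x y, x < y → slope f x y ≤ g y := by
    intro x y h
    rw [hg]
    simp only
    rw [hf.rightDeriv_eq_sInf_slope_of_mem_interior (by simp : y ∈ interior univ)]
    refine le_csInf ⟨_, y + 1, ⟨mem_univ _, by simp⟩, rfl⟩ ?_
    rintro _ ⟨z, ⟨-, hz⟩, rfl⟩
    have := hf.slope_mono_adjacent (mem_univ x) (mem_univ z) h hz
    rwa [slope_def_field, slope_def_field]
  refine ⟨hmono.stieltjesFunction.measure, inferInstance, fun φ α hα => ?_⟩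
  rw [Real.closedBall_eq_Icc, StieltjesFunction.measure_Icc]
  refine ENNReal.ofReal_le_ofReal ?_
  have h1 : slope f φ (φ + α) ≤ hmono.stieltjesFunction (φ + α) := by
    refine (hup _ _ (by linarith)).trans ?_
    rw [hmono.stieltjesFunction_eq]
    exact hmono.le_rightLim le_rfl
  have h2 : Function.leftLim hmono.stieltjesFunction (φ - α) ≤ slope f (φ - α) φ := by
    refine le_trans ?_ (hlow _ _ (by linarith))
    refine le_of_tendsto (hmono.stieltjesFunction.mono.tendsto_leftLim _) ?_
    filter_upwards [self_mem_nhdsWithin] with y hy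
    rw [hmono.stieltjesFunction_eq]
    exact hmono.rightLim_le hy
  rw [slope_def_field, add_sub_cancel_left] at h1
  rw [slope_def_field, sub_sub_cancel] at h2
  refine le_trans (le_of_eq ?_) (sub_le_sub h1 h2)
  field_simp
  ring

/-- The maximal second difference quotient of a convex function is of weak type `(1,1)`; this is
the Vitali covering argument. -/
lemma weak_curvMax {f : ℝ → ℝ} (hf : ConvexOn ℝ univ f) :
    ∃ V : ℝ, 0 ≤ V ∧ ∀ s : ℝ, 0 < s →
      volume {φ ∈ Icc (-10 : ℝ) 10 | ENNReal.ofReal s < curvMax f φ} ≤ ENNReal.ofReal (V / s) := by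
  obtain ⟨μ, hμ, hμf⟩ := second_diff_le hf
  set m := (μ (Icc (-11 : ℝ) 11)).toReal with hm
  have hmfin : μ (Icc (-11 : ℝ) 11) ≠ ∞ := isCompact_Icc.measure_lt_top.ne
  refine ⟨10 * m, by positivity, fun s hs => ?_⟩
  set t : Set (ℝ × ℝ) := {p | p.1 ∈ Icc (-10 : ℝ) 10 ∧ p.2 ∈ Ioc (0 : ℝ) 1 ∧
    ENNReal.ofReal (s * p.2) ≤ μ (Metric.closedBall p.1 p.2)} with ht
  obtain ⟨u, hut, hdisj, hcov⟩ := Vitali.exists_disjoint_subfamily_covering_enlargement_closedBall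
    t (fun p => p.1) (fun p => p.2) 1 (fun p hp => hp.2.1.2) 5 (by norm_num)
  have hcount : u.Countable := by
    refine hdisj.countable_of_nonempty_interior fun p hp => ?_
    refine ⟨p.1, ?_⟩
    exact Metric.ball_subset_interior_closedBall (Metric.mem_ball_self (hut hp).2.1.1)
  have hsub : {φ ∈ Icc (-10 : ℝ) 10 | ENNReal.ofReal s < curvMax f φ} ⊆
      ⋃ p ∈ u, Metric.closedBall p.1 (5 * p.2) := by
    rintro φ ⟨hφ, hlt⟩
    rw [curvMax, lt_iSup_iff] at hlt
    obtain ⟨α, hα⟩ := hlt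
    rw [lt_iSup_iff] at hα
    obtain ⟨hα1, hα2⟩ := hα
    have hα0 := hα1.1
    have hmem : (φ, α) ∈ t := by
      refine ⟨hφ, hα1, le_trans (ENNReal.ofReal_le_ofReal ?_) (hμf φ α hα0)⟩
      rw [ENNReal.ofReal_lt_ofReal_iff_of_nonneg hs.le, lt_div_iff₀ (by positivity)] at hα2
      simp only
      rw [le_div_iff₀ hα0]
      nlinarith
    obtain ⟨p, hp, hpsub⟩ := hcov _ hmem
    simp only [mem_iUnion]
    exact ⟨p, hp, hpsub (Metric.mem_closedBall_self hα0.le)⟩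
  have := hcount.to_subtype
  calc volume {φ ∈ Icc (-10 : ℝ) 10 | ENNReal.ofReal s < curvMax f φ}
      ≤ volume (⋃ p ∈ u, Metric.closedBall p.1 (5 * p.2)) := measure_mono hsub
    _ ≤ ∑' p : u, volume (Metric.closedBall p.1.1 (5 * p.1.2)) := measure_biUnion_le _ hcount _
    _ ≤ ∑' p : u, ENNReal.ofReal (10 / s) * μ (Metric.closedBall p.1.1 p.1.2) := by
      refine ENNReal.tsum_le_tsum fun p => ?_
      have h := (hut p.2).2.2
      have h0 := (hut p.2).2.1.1
      rw [Real.volume_closedBall]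
      calc ENNReal.ofReal (2 * (5 * p.1.2)) = ENNReal.ofReal (10 / s) * ENNReal.ofReal (s * p.1.2) := by
            rw [← ENNReal.ofReal_mul (by positivity)]; congr 1; field_simp; ring
        _ ≤ _ := by gcongr
    _ = ENNReal.ofReal (10 / s) * μ (⋃ p ∈ u, Metric.closedBall p.1 p.2) := by
      rw [ENNReal.tsum_mul_left, measure_biUnion hcount hdisj
        (fun _ _ => measurableSet_closedBall)]
    _ ≤ ENNReal.ofReal (10 / s) * μ (Icc (-11) 11) := by
      gcongr
      refine iUnion₂_subset fun p hp => ?_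
      have h1 := (hut hp).1
      have h2 := (hut hp).2.1.2
      rw [Real.closedBall_eq_Icc]
      exact Icc_subset_Icc (by linarith [h1.1]) (by linarith [h1.2])
    _ = ENNReal.ofReal (10 * m / s) := by
      rw [← ENNReal.ofReal_toReal hmfin, ← ENNReal.ofReal_mul (by positivity)]
      congr 1; rw [hm]; ring

/-- The curvature majorant of a domain: the maximal second difference quotient of its support
function, made bounded below by `1 + R₀`. -/
def curvN (D : Set E2) (R₀ φ : ℝ) : ℝ≥0∞ := curvMax (hgt D) φ + ENNReal.ofReal (1 + R₀)

namespace IsDom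
variable {D : Set E2} {r₀ R₀ : ℝ} (hD : IsDom D r₀ R₀)
include hD

lemma measurable_curvN : Measurable (curvN D R₀) :=
  (measurable_curvMax hD.continuous_hgt).add_const _

/-- The curvature majorant is of weak type `L¹` in the angle. The interval `[-10, 10]` contains all
the arguments that occur once `[-π, π]` is shifted by at most `2π`. -/
lemma weak_curvN : ∃ V : ℝ, 0 ≤ V ∧ ∀ s : ℝ, 0 < s →
    volume {φ ∈ Icc (-10 : ℝ) 10 | ENNReal.ofReal s < curvN D R₀ φ} ≤ ENNReal.ofReal (V / s) := by
  obtain ⟨V, hV, h⟩ := weak_curvMax hD.convexOn_hgt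
  have hR := hD.R_pos
  refine ⟨2 * V + 40 * (1 + R₀), by positivity, fun s hs => ?_⟩
  have hle : ∀ φ, curvMax (hgt D) φ ≤ curvMax (fun φ => hgt D φ + R₀ * φ ^ 2 / 2) φ := by
    intro φ
    refine iSup₂_mono fun α hα => ENNReal.ofReal_le_ofReal ?_
    refine div_le_div_of_nonneg_right ?_ (sq_nonneg α)
    simp only
    nlinarith [mul_nonneg hR.le (sq_nonneg α)]
  rcases le_or_gt s (2 * (1 + R₀)) with hs2 | hs2
  · calc _ ≤ volume (Icc (-10 : ℝ) 10) := measure_mono fun φ h => h.1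
      _ = ENNReal.ofReal 20 := by rw [Real.volume_Icc]; norm_num
      _ ≤ _ := by
        apply ENNReal.ofReal_le_ofReal
        rw [le_div_iff₀ hs]
        nlinarith
  · calc _ ≤ volume {φ ∈ Icc (-10 : ℝ) 10 | ENNReal.ofReal (s / 2) <
          curvMax (fun φ => hgt D φ + R₀ * φ ^ 2 / 2) φ} := by
          refine measure_mono fun φ h => ⟨h.1, ?_⟩
          refine lt_of_lt_of_le ?_ (hle φ)
          by_contra! hcon
          have h2 := h.2
          rw [curvN] at h2
          refine absurd (h2.trans_le (add_le_add_left hcon _)) (not_lt.2 ?_)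
          rw [← ENNReal.ofReal_add (by positivity) (by positivity)]
          exact ENNReal.ofReal_le_ofReal (by linarith)
      _ ≤ ENNReal.ofReal (V / (s / 2)) := h _ (by positivity)
      _ ≤ _ := by
        apply ENNReal.ofReal_le_ofReal
        rw [show V / (s / 2) = 2 * V / s by field_simp]
        gcongr
        linarith

lemma curvN_spec {φ : ℝ} (hfin : curvN D R₀ φ ≠ ∞) :
    1 ≤ (curvN D R₀ φ).toReal ∧ ∀ α ∈ Ioc (0 : ℝ) 1,
      hgt D (φ + α) + hgt D (φ - α) - 2 * hgt D φ + R₀ * α ^ 2 ≤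
        (curvN D R₀ φ).toReal * α ^ 2 := by
  have hR := hD.R_pos
  have hc : curvMax (hgt D) φ ≠ ∞ := fun h => hfin (by rw [curvN, h]; simp)
  have e : (curvN D R₀ φ).toReal = (curvMax (hgt D) φ).toReal + (1 + R₀) := by
    rw [curvN, ENNReal.toReal_add hc ENNReal.ofReal_ne_top, ENNReal.toReal_ofReal (by positivity)]
  have h0 : 0 ≤ (curvMax (hgt D) φ).toReal := ENNReal.toReal_nonneg
  refine ⟨by rw [e]; linarith, fun α hα => ?_⟩
  have h1 : ENNReal.ofReal ((hgt D (φ + α) + hgt D (φ - α) - 2 * hgt D φ) / α ^ 2) ≤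
      curvMax (hgt D) φ := le_iSup₂ (f := fun α (_ : α ∈ Ioc (0 : ℝ) 1) =>
        ENNReal.ofReal ((hgt D (φ + α) + hgt D (φ - α) - 2 * hgt D φ) / α ^ 2)) α hα
  have h2 := (ENNReal.ofReal_le_iff_le_toReal hc).1 h1
  have hα2 : 0 < α ^ 2 := by have := hα.1; positivity
  rw [div_le_iff₀ hα2] at h2
  rw [e]
  nlinarith

end IsDom

/-! ### Almost orthogonality on unit intervals -/

lemma osc_add_left (l m u : ℝ) : osc (l + m) u = osc l u * osc m u := by
  simp only [osc, ← Complex.exp_add]; congr 1; push_cast; ring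

lemma integral_osc_int (m : ℤ) (T : ℝ) :
    ∫ t in T..(T + 1), osc (2 * Real.pi * m) t = if m = 0 then 1 else 0 := by
  split_ifs with hm
  · simp [hm, osc]
  · have e : ∀ t : ℝ, osc (2 * Real.pi * m) t =
        Complex.exp ((2 * Real.pi * m * Complex.I) * t) := by
      intro t; rw [osc]; push_cast; ring_nf
    simp_rw [e]
    have hne : (2 * Real.pi * m * Complex.I : ℂ) ≠ 0 := by
      have : (m : ℂ) ≠ 0 := by exact_mod_cast hm
      simp [this, Real.pi_ne_zero]
    rw [integral_exp_mul_complex hne]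
    have : Complex.exp (2 * Real.pi * m * Complex.I * ((T + 1 : ℝ) : ℂ)) =
        Complex.exp (2 * Real.pi * m * Complex.I * (T : ℂ)) := by
      rw [Complex.exp_eq_exp_iff_exists_int]
      exact ⟨m, by push_cast; ring⟩
    rw [this]; simp

variable {ι : Type*}

/-- Multiplicity of the integer frequency of `k` within the family `S`. -/
def mult [DecidableEq ι] (S : Finset ι) (n : ι → ℤ) (k : ι) : ℕ := (S.filter fun l => n l = n k).card

variable [DecidableEq ι]

/-- Exact orthogonality for integer frequencies, with Schur's test for the coincidences. -/
lemma orth_le (S : Finset ι) (n : ι → ℤ) (β : ι → ℂ) (T : ℝ) :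
    ∫ t in T..(T + 1), ‖∑ k ∈ S, osc (-(2 * Real.pi * n k)) t * β k‖ ^ 2 ≤
      ∑ k ∈ S, mult S n k * ‖β k‖ ^ 2 := by
  have hexp : ∀ t : ℝ, ((‖∑ k ∈ S, osc (-(2 * Real.pi * n k)) t * β k‖ ^ 2 : ℝ) : ℂ) =
      ∑ k ∈ S, ∑ l ∈ S, (β k * starRingEnd ℂ (β l)) * osc (2 * Real.pi * (n l - n k : ℤ)) t := by
    intro t
    push_cast
    rw [← Complex.mul_conj', map_sum, Finset.sum_mul_sum]
    refine Finset.sum_congr rfl fun k _ => Finset.sum_congr rfl fun l _ => ?_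
    rw [map_mul, ← osc_neg_left, neg_neg,
      show (2 * Real.pi * ((n l : ℝ) - n k)) = -(2 * Real.pi * n k) + 2 * Real.pi * n l by ring,
      osc_add_left]
    ring
  have hintg : ((∫ t in T..(T + 1), ‖∑ k ∈ S, osc (-(2 * Real.pi * n k)) t * β k‖ ^ 2 : ℝ) : ℂ) =
      ∑ k ∈ S, ∑ l ∈ S, (β k * starRingEnd ℂ (β l)) * if n l = n k then 1 else 0 := by
    rw [← intervalIntegral.integral_ofReal]
    simp_rw [hexp]
    rw [intervalIntegral.integral_finsetSum]
    · refine Finset.sum_congr rfl fun k _ => ?_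
      rw [intervalIntegral.integral_finsetSum]
      · refine Finset.sum_congr rfl fun l _ => ?_
        rw [intervalIntegral.integral_const_mul, integral_osc_int]
        simp [sub_eq_zero]
      · intro l _
        exact ((continuous_osc _).const_mul _).intervalIntegrable _ _
    · intro k _
      exact (continuous_finsetSum _ fun l _ => (continuous_osc _).const_mul _).intervalIntegrable _ _
  have h0 : 0 ≤ ∫ t in T..(T + 1), ‖∑ k ∈ S, osc (-(2 * Real.pi * n k)) t * β k‖ ^ 2 :=
    intervalIntegral.integral_nonneg (by linarith) fun t _ => by positivity
  have hnorm := congrArg norm hintg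
  rw [Complex.norm_real, Real.norm_of_nonneg h0] at hnorm
  rw [hnorm]
  calc ‖∑ k ∈ S, ∑ l ∈ S, (β k * starRingEnd ℂ (β l)) * (if n l = n k then 1 else 0 : ℂ)‖
      ≤ ∑ k ∈ S, ∑ l ∈ S, ‖(β k * starRingEnd ℂ (β l)) * (if n l = n k then 1 else 0 : ℂ)‖ :=
        (norm_sum_le _ _).trans (Finset.sum_le_sum fun k _ => norm_sum_le _ _)
    _ ≤ ∑ k ∈ S, ∑ l ∈ S, (if n l = n k then (‖β k‖ ^ 2 / 2 + ‖β l‖ ^ 2 / 2) else 0) := by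
        refine Finset.sum_le_sum fun k _ => Finset.sum_le_sum fun l _ => ?_
        split_ifs
        · rw [mul_one, norm_mul, RCLike.norm_conj]
          nlinarith [sq_nonneg (‖β k‖ - ‖β l‖)]
        · simp
    _ = ∑ k ∈ S, ∑ l ∈ S, (if n l = n k then ‖β k‖ ^ 2 / 2 else 0) +
        ∑ k ∈ S, ∑ l ∈ S, (if n l = n k then ‖β l‖ ^ 2 / 2 else 0) := by
        simp_rw [← Finset.sum_add_distrib]
        refine Finset.sum_congr rfl fun k _ => Finset.sum_congr rfl fun l _ => ?_
        split_ifs <;> simp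
    _ = ∑ k ∈ S, mult S n k * ‖β k‖ ^ 2 := by
        rw [Finset.sum_comm (f := fun k l => if n l = n k then ‖β l‖ ^ 2 / 2 else 0)]
        have e : ∀ k, ∑ l ∈ S, (if n k = n l then ‖β k‖ ^ 2 / 2 else 0) =
            ∑ l ∈ S, (if n l = n k then ‖β k‖ ^ 2 / 2 else 0) := fun k =>
          Finset.sum_congr rfl fun l _ => by simp [eq_comm]
        simp_rw [e]
        rw [← Finset.sum_add_distrib]
        refine Finset.sum_congr rfl fun k _ => ?_
        rw [← Finset.sum_filter, Finset.sum_const, nsmul_eq_mul, mult]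
        ring

lemma lintegral_orth_le (S : Finset ι) (n : ι → ℤ) (β : ι → ℂ) (T : ℝ) :
    ∫⁻ t in Ioc T (T + 1), ENNReal.ofReal (‖∑ k ∈ S, osc (-(2 * Real.pi * n k)) t * β k‖ ^ 2) ≤
      ENNReal.ofReal (∑ k ∈ S, mult S n k * ‖β k‖ ^ 2) := by
  have hc : Continuous fun t : ℝ => ‖∑ k ∈ S, osc (-(2 * Real.pi * n k)) t * β k‖ ^ 2 :=
    ((continuous_finsetSum _ fun k _ => (continuous_osc _).mul_const _).norm).pow 2
  rw [← ofReal_integral_eq_lintegral_ofReal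
    (hc.integrableOn_Icc.mono_set Ioc_subset_Icc_self) (ae_of_all _ fun t => by positivity),
    ← intervalIntegral.integral_of_le (by linarith)]
  exact ENNReal.ofReal_le_ofReal (orth_le S n β T)

/-- A trigonometric sum with slowly varying amplitudes satisfies a mean square bound in which only
frequencies with the same integer part interact. The amplitude is written as its value at the left
end plus the integral of its derivative, and exact orthogonality is used for each fixed value of the
amplitude parameter. -/
lemma almost_orth (S : Finset ι) (ρ : ι → ℝ) (a a' : ι → ℝ → ℂ) (A : ι → ℝ) (T : ℝ)
    (hder : ∀ k ∈ S, ∀ t ∈ Icc T (T + 1), HasDerivAt (a k) (a' k t) t)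
    (ha : ∀ k ∈ S, ∀ t ∈ Icc T (T + 1), ‖a k t‖ ≤ A k)
    (ha' : ∀ k ∈ S, ∀ t ∈ Icc T (T + 1), ‖a' k t‖ ≤ A k) :
    ∫⁻ t in Ioc T (T + 1), ENNReal.ofReal (‖∑ k ∈ S, osc (-(2 * Real.pi * ρ k)) t * a k t‖ ^ 2) ≤
      ENNReal.ofReal (150 * ∑ k ∈ S, mult S (fun k => ⌊ρ k⌋) k * A k ^ 2) := by
  set n : ι → ℤ := fun k => ⌊ρ k⌋ with hn
  set μ := (volume : Measure ℝ).restrict (Ioc T (T + 1)) with hμ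
  have hμ1 : IsProbabilityMeasure μ := ⟨by simp [hμ]⟩
  set b : ι → ℝ → ℂ := fun k τ => osc (-(2 * Real.pi * (ρ k - n k))) τ * a k τ with hb
  have hbder : ∀ k ∈ S, ∀ t ∈ Icc T (T + 1), HasDerivAt (b k) (deriv (b k) t) t ∧
      ‖deriv (b k) t‖ ≤ 8 * A k := by
    intro k hk t ht
    have hA : 0 ≤ A k := (norm_nonneg _).trans (ha k hk t ht)
    have h1 : HasDerivAt (fun τ => osc (-(2 * Real.pi * (ρ k - n k))) τ)
        (osc (-(2 * Real.pi * (ρ k - n k))) t *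
          (Complex.I * (-(2 * Real.pi * (ρ k - n k)) : ℝ))) t := by
      have h2 : HasDerivAt (fun τ : ℝ => Complex.I * ((-(2 * Real.pi * (ρ k - n k)) * τ : ℝ) : ℂ))
          (Complex.I * (-(2 * Real.pi * (ρ k - n k)) : ℝ)) t := by
        have h3 : HasDerivAt (fun τ : ℝ => -(2 * Real.pi * (ρ k - n k)) * τ)
            (-(2 * Real.pi * (ρ k - n k))) t := by
          simpa using (hasDerivAt_id t).const_mul (-(2 * Real.pi * (ρ k - n k)))
        exact h3.ofReal_comp.const_mul Complex.I
      exact h2.cexp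
    have h3 := h1.mul (hder k hk t ht)
    have h4 : HasDerivAt (b k) _ t := h3
    refine ⟨h4.differentiableAt.hasDerivAt, ?_⟩
    rw [h4.deriv]
    have hfr : |ρ k - n k| ≤ 1 := by
      have e : ρ k - n k = Int.fract (ρ k) := rfl
      rw [e, abs_of_nonneg (Int.fract_nonneg (ρ k))]; exact (Int.fract_lt_one _).le
    calc _ ≤ ‖osc (-(2 * Real.pi * (ρ k - n k))) t *
          (Complex.I * (-(2 * Real.pi * (ρ k - n k)) : ℝ)) * a k t‖ +
          ‖osc (-(2 * Real.pi * (ρ k - n k))) t * a' k t‖ := norm_add_le _ _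
      _ ≤ (2 * Real.pi) * A k + A k := by
        rw [norm_mul, norm_mul, norm_mul, norm_mul, norm_osc, Complex.norm_I, Complex.norm_real,
          Real.norm_eq_abs, abs_neg, abs_mul, abs_of_pos Real.two_pi_pos, one_mul, one_mul, one_mul]
        have := ha k hk t ht
        have := ha' k hk t ht
        have := Real.pi_pos
        have h9 : 2 * Real.pi * |ρ k - n k| ≤ 2 * Real.pi := by nlinarith
        gcongr
      _ ≤ 8 * A k := by nlinarith [Real.pi_lt_d2]
  have hgt' : ∀ t, ∑ k ∈ S, osc (-(2 * Real.pi * ρ k)) t * a k t =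
      ∑ k ∈ S, osc (-(2 * Real.pi * n k)) t * b k t := by
    intro t
    refine Finset.sum_congr rfl fun k _ => ?_
    rw [hb]
    simp only
    rw [← mul_assoc, ← osc_add_left]
    congr 2; ring
  have hmeas : ∀ k, Measurable (deriv (b k)) := fun k => measurable_deriv _
  set F : ℝ → ℝ → ℂ := fun t τ => ∑ k ∈ S, osc (-(2 * Real.pi * n k)) t * deriv (b k) τ with hF
  have hFm : Measurable (Function.uncurry F) := by
    refine Finset.measurable_sum _ fun k _ => ?_
    exact ((continuous_osc _).measurable.comp measurable_fst).mul ((hmeas k).comp measurable_snd)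
  have hFb : ∀ t, ∀ τ ∈ Icc T (T + 1), ‖F t τ‖ ≤ ∑ k ∈ S, 8 * A k := by
    intro t τ hτ
    refine (norm_sum_le _ _).trans (Finset.sum_le_sum fun k hk => ?_)
    rw [norm_mul, norm_osc, one_mul]
    exact (hbder k hk τ hτ).2
  have hFi : ∀ t, Integrable (F t) μ := by
    intro t
    refine Integrable.of_bound (C := ∑ k ∈ S, 8 * A k)
      (hFm.comp measurable_prodMk_left).aestronglyMeasurable ?_
    rw [hμ]
    filter_upwards [ae_restrict_mem measurableSet_Ioc] with τ hτ
    exact hFb t τ (Ioc_subset_Icc_self hτ)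
  have hFi2 : ∀ t, Integrable (fun τ => ‖F t τ‖ ^ 2) μ := by
    intro t
    refine Integrable.of_bound (C := (∑ k ∈ S, 8 * A k) ^ 2)
      ((hFm.comp measurable_prodMk_left).norm.pow_const 2).aestronglyMeasurable ?_
    rw [hμ]
    filter_upwards [ae_restrict_mem measurableSet_Ioc] with τ hτ
    rw [norm_pow, norm_norm]
    have := hFb t τ (Ioc_subset_Icc_self hτ)
    gcongr
  -- pointwise bound by freezing the amplitudes
  have hpt : ∀ t ∈ Ioc T (T + 1),
      ‖∑ k ∈ S, osc (-(2 * Real.pi * ρ k)) t * a k t‖ ^ 2 ≤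
        2 * ‖∑ k ∈ S, osc (-(2 * Real.pi * n k)) t * b k T‖ ^ 2 + 2 * ∫ τ, ‖F t τ‖ ^ 2 ∂μ := by
    intro t ht
    have hsplit : ∑ k ∈ S, osc (-(2 * Real.pi * ρ k)) t * a k t =
        ∑ k ∈ S, osc (-(2 * Real.pi * n k)) t * b k T + ∫ τ in T..t, F t τ := by
      rw [hgt', hF]
      simp only
      have hii : ∀ k ∈ S, IntervalIntegrable (deriv (b k)) volume T t := by
        intro k hk
        rw [intervalIntegrable_iff_integrableOn_Ioc_of_le ht.1.le]
        refine Measure.integrableOn_of_bounded (M := 8 * A k) (by simp)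
          (hmeas k).aestronglyMeasurable ?_
        filter_upwards [ae_restrict_mem measurableSet_Ioc] with τ hτ
        exact (hbder k hk τ ⟨hτ.1.le, hτ.2.trans ht.2⟩).2
      rw [intervalIntegral.integral_finsetSum, ← Finset.sum_add_distrib]
      · refine Finset.sum_congr rfl fun k hk => ?_
        rw [intervalIntegral.integral_const_mul, intervalIntegral.integral_eq_sub_of_hasDerivAt
          (f := b k) _ (hii k hk)]
        · ring
        · intro τ hτ
          rw [uIcc_of_le ht.1.le] at hτ
          exact (hbder k hk τ ⟨hτ.1, hτ.2.trans ht.2⟩).1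
      · intro k hk
        exact (hii k hk).const_mul _
    have h1 : ‖∫ τ in T..t, F t τ‖ ≤ ∫ τ, ‖F t τ‖ ∂μ := by
      refine (intervalIntegral.norm_integral_le_integral_norm ht.1.le).trans ?_
      rw [intervalIntegral.integral_of_le ht.1.le]
      exact setIntegral_mono_set (hFi t).norm (ae_of_all _ fun _ => norm_nonneg _)
        (LE.le.eventuallyLE (Ioc_subset_Ioc_right ht.2))
    set I := ∫ τ, ‖F t τ‖ ∂μ with hI
    have h2 : I ^ 2 ≤ ∫ τ, ‖F t τ‖ ^ 2 ∂μ := by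
      have h3 : 0 ≤ ∫ τ, (‖F t τ‖ - I) ^ 2 ∂μ := integral_nonneg fun _ => sq_nonneg _
      have h4 : ∫ τ, (‖F t τ‖ - I) ^ 2 ∂μ = ∫ τ, ‖F t τ‖ ^ 2 ∂μ - 2 * I * I + I ^ 2 := by
        have e : ∀ τ, (‖F t τ‖ - I) ^ 2 = ‖F t τ‖ ^ 2 - 2 * I * ‖F t τ‖ + I ^ 2 := by
          intro τ; ring
        simp_rw [e]
        have h6 : Integrable (fun τ => ‖F t τ‖ ^ 2 - 2 * I * ‖F t τ‖) μ :=
          (hFi2 t).sub ((hFi t).norm.const_mul _)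
        rw [integral_add h6 (integrable_const _), integral_sub (hFi2 t) ((hFi t).norm.const_mul _), integral_const_mul, ← hI]
        simp
      rw [h4] at h3
      nlinarith
    rw [hsplit]
    have h5 := norm_add_le (∑ k ∈ S, osc (-(2 * Real.pi * n k)) t * b k T) (∫ τ in T..t, F t τ)
    set x := ‖∑ k ∈ S, osc (-(2 * Real.pi * n k)) t * b k T‖
    set y := ‖∫ τ in T..t, F t τ‖
    have hy : 0 ≤ y := norm_nonneg _
    calc _ ≤ (x + y) ^ 2 := by gcongr
      _ ≤ 2 * x ^ 2 + 2 * y ^ 2 := by nlinarith [sq_nonneg (x - y)]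
      _ ≤ 2 * x ^ 2 + 2 * I ^ 2 := by gcongr
      _ ≤ _ := by gcongr
  have hT : T ∈ Icc T (T + 1) := ⟨le_rfl, by linarith⟩
  set Q := ∑ k ∈ S, mult S n k * A k ^ 2 with hQ
  have hQ0 : 0 ≤ Q := Finset.sum_nonneg fun k _ => by positivity
  have hfirst : ∫⁻ t, ENNReal.ofReal (‖∑ k ∈ S, osc (-(2 * Real.pi * n k)) t * b k T‖ ^ 2) ∂μ ≤
      ENNReal.ofReal Q := by
    refine (lintegral_orth_le S n (fun k => b k T) T).trans (ENNReal.ofReal_le_ofReal ?_)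
    refine Finset.sum_le_sum fun k hk => ?_
    have : ‖b k T‖ ≤ A k := by
      rw [hb]; simp only; rw [norm_mul, norm_osc, one_mul]; exact ha k hk T hT
    gcongr
  have hsecond : ∀ τ ∈ Ioc T (T + 1), ∫⁻ t, ENNReal.ofReal (‖F t τ‖ ^ 2) ∂μ ≤
      ENNReal.ofReal (64 * Q) := by
    intro τ hτ
    refine (lintegral_orth_le S n (fun k => deriv (b k) τ) T).trans (ENNReal.ofReal_le_ofReal ?_)
    rw [hQ, Finset.mul_sum]
    refine Finset.sum_le_sum fun k hk => ?_
    have := (hbder k hk τ (Ioc_subset_Icc_self hτ)).2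
    calc (mult S n k : ℝ) * ‖deriv (b k) τ‖ ^ 2 ≤ mult S n k * (8 * A k) ^ 2 := by gcongr
      _ = _ := by ring
  have hm1 : Measurable fun t => ENNReal.ofReal
      (‖∑ k ∈ S, osc (-(2 * Real.pi * n k)) t * b k T‖ ^ 2) := by
    refine ENNReal.measurable_ofReal.comp ?_
    exact (((continuous_finsetSum _ fun k _ => (continuous_osc _).mul_const _).norm).pow 2).measurable
  calc _ ≤ ∫⁻ t, (2 * ENNReal.ofReal (‖∑ k ∈ S, osc (-(2 * Real.pi * n k)) t * b k T‖ ^ 2) +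
        2 * ∫⁻ τ, ENNReal.ofReal (‖F t τ‖ ^ 2) ∂μ) ∂μ := by
        rw [hμ]
        refine setLIntegral_mono_ae' measurableSet_Ioc (ae_of_all _ fun t ht => ?_)
        refine (ENNReal.ofReal_le_ofReal (hpt t ht)).trans ?_
        rw [ENNReal.ofReal_add (by positivity)
          (mul_nonneg zero_le_two (integral_nonneg fun _ => by positivity)),
          ENNReal.ofReal_mul zero_le_two, ENNReal.ofReal_mul zero_le_two,
          ofReal_integral_eq_lintegral_ofReal (hFi2 t) (ae_of_all _ fun _ => by positivity)]
        simp
        rfl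
    _ = 2 * ∫⁻ t, ENNReal.ofReal (‖∑ k ∈ S, osc (-(2 * Real.pi * n k)) t * b k T‖ ^ 2) ∂μ +
        2 * ∫⁻ τ, ∫⁻ t, ENNReal.ofReal (‖F t τ‖ ^ 2) ∂μ ∂μ := by
        rw [lintegral_add_left (hm1.const_mul 2), lintegral_const_mul _ hm1,
          lintegral_const_mul' _ _ (by simp), lintegral_lintegral_swap]
        exact (ENNReal.measurable_ofReal.comp (hFm.norm.pow_const 2)).aemeasurable
    _ ≤ 2 * ENNReal.ofReal Q + 2 * ∫⁻ _, ENNReal.ofReal (64 * Q) ∂μ := by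
        gcongr 2 * ?_ + 2 * ?_
        rw [hμ]
        exact setLIntegral_mono_ae' measurableSet_Ioc (ae_of_all _ hsecond)
    _ = ENNReal.ofReal (2 * Q + 2 * (64 * Q)) := by
        rw [lintegral_const, measure_univ, mul_one, ENNReal.ofReal_add (by positivity)
          (by positivity), ENNReal.ofReal_mul zero_le_two,
          ENNReal.ofReal_mul (p := 2) (q := 64 * Q) zero_le_two]
        simp
    _ ≤ _ := ENNReal.ofReal_le_ofReal (by linarith)

/-! ### Lattice points in shells of the support function -/

/-- The support function of `D`, rotated by `σ`, as a positively homogeneous function on `ℂ`. -/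
def gauge' (D : Set E2) (σ : ℝ) (z : ℂ) : ℝ := ‖z‖ * hgt D (σ + z.arg)

/-- An integer vector as a complex number. -/
def kc (k : Fin 2 → ℤ) : ℂ := ⟨k 0, k 1⟩

/-- The frequency attached to the lattice vector `k`: the support function at `k` rotated by `σ`. -/
def freq (D : Set E2) (σ : ℝ) (k : Fin 2 → ℤ) : ℝ := gauge' D σ (kc k)

lemma one_le_norm_kc {k : Fin 2 → ℤ} (hk : k ≠ 0) : 1 ≤ ‖kc k‖ := by
  have : k 0 ≠ 0 ∨ k 1 ≠ 0 := by
    by_contra! h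
    apply hk
    ext i; fin_cases i
    · exact h.1
    · exact h.2
  rcases this with h | h
  · refine le_trans ?_ (Complex.abs_re_le_norm _)
    simp only [kc]
    exact_mod_cast Int.one_le_abs h
  · refine le_trans ?_ (Complex.abs_im_le_norm _)
    simp only [kc]
    exact_mod_cast Int.one_le_abs h

/-- The half-open unit square with lower left corner `k`. -/
def unitSq (k : Fin 2 → ℤ) : Set ℂ :=
  Ico (k 0 : ℝ) (k 0 + 1) ×ℂ Ico (k 1 : ℝ) (k 1 + 1)

lemma volume_unitSq (k : Fin 2 → ℤ) : volume (unitSq k) = 1 := by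
  have h := Complex.volume_preserving_equiv_real_prod.measure_preimage
      (measurableSet_Ico (a := (k 0 : ℝ)) (b := k 0 + 1) |>.prod
        (measurableSet_Ico (a := (k 1 : ℝ)) (b := k 1 + 1))).nullMeasurableSet
  rw [Measure.volume_eq_prod, Measure.prod_prod] at h
  refine Eq.trans ?_ (h.trans (by simp))
  rfl

lemma measurableSet_unitSq (k : Fin 2 → ℤ) : MeasurableSet (unitSq k) :=
  (Complex.measurable_re measurableSet_Ico).inter (Complex.measurable_im measurableSet_Ico)

lemma disjoint_unitSq {k l : Fin 2 → ℤ} (h : k ≠ l) : Disjoint (unitSq k) (unitSq l) := by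
  rw [Set.disjoint_left]
  rintro z ⟨h1, h2⟩ ⟨h3, h4⟩
  apply h
  have e0 := (Int.floor_eq_iff.2 h1).symm.trans (Int.floor_eq_iff.2 h3)
  have e1 := (Int.floor_eq_iff.2 h2).symm.trans (Int.floor_eq_iff.2 h4)
  ext i; fin_cases i
  · exact e0
  · exact e1

namespace IsDom
variable {D : Set E2} {r₀ R₀ : ℝ} (hD : IsDom D r₀ R₀)
include hD

lemma le_gauge {σ : ℝ} {p : ℝ × ℝ} (hp : p ∈ turned D σ) (z : ℂ) :
    z.re * p.1 + z.im * p.2 ≤ gauge' D σ z := by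
  have h := mul_le_mul_of_nonneg_left (hD.le_hgt_add hp z.arg) (norm_nonneg z)
  rw [gauge', ← Complex.norm_mul_cos_arg z, ← Complex.norm_mul_sin_arg z]
  rw [Complex.norm_mul_cos_arg z, Complex.norm_mul_sin_arg z]
  have e1 := Complex.norm_mul_cos_arg z
  have e2 := Complex.norm_mul_sin_arg z
  rw [mul_add, ← mul_assoc, ← mul_assoc, e1, e2] at h
  exact h

lemma gauge_le {σ c : ℝ} {z : ℂ} (h : ∀ p ∈ turned D σ, z.re * p.1 + z.im * p.2 ≤ c) :
    gauge' D σ z ≤ c := by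
  have h0 : 0 ≤ c := by simpa using h 0 (hD.zero_mem σ)
  rcases eq_or_ne z 0 with rfl | hz
  · simpa [gauge'] using h0
  have hz' : 0 < ‖z‖ := norm_pos_iff.2 hz
  rw [gauge', ← le_div_iff₀' hz']
  refine (hD.isLUB _).2 ?_
  rintro _ ⟨q, hq, rfl⟩
  rw [le_div_iff₀' hz']
  have hp : (Real.cos (-z.arg) * q.1 + Real.sin (-z.arg) * q.2,
      Real.cos (-z.arg) * q.2 - Real.sin (-z.arg) * q.1) ∈ turned D σ := by
    have := frame_add (σ + z.arg) (-z.arg) q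
    rw [add_neg_cancel_right] at this
    show frame σ _ ∈ D
    rw [← this]; exact hq
  have := h _ hp
  rw [← Complex.norm_mul_cos_arg z, ← Complex.norm_mul_sin_arg z, Real.cos_neg, Real.sin_neg] at this
  refine le_trans (le_of_eq ?_) this
  linear_combination (-‖z‖ * q.1) * Real.sin_sq_add_cos_sq z.arg

lemma gauge_add_le (σ : ℝ) (z w : ℂ) : gauge' D σ (z + w) ≤ gauge' D σ z + R₀ * ‖w‖ := by
  refine hD.gauge_le fun p hp => ?_
  have h1 := hD.le_gauge hp z
  have h2 := (hD.le_gauge hp w).trans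
    (mul_le_mul_of_nonneg_left (hD.hgt_le (σ + w.arg)) (norm_nonneg w))
  simp only [Complex.add_re, Complex.add_im]
  linarith

lemma gauge_lower (σ : ℝ) (z : ℂ) : r₀ * ‖z‖ ≤ gauge' D σ z := by
  rw [mul_comm]; exact mul_le_mul_of_nonneg_left (hD.le_hgt_r _) (norm_nonneg z)

lemma gauge_upper (σ : ℝ) (z : ℂ) : gauge' D σ z ≤ R₀ * ‖z‖ := by
  rw [mul_comm R₀]; exact mul_le_mul_of_nonneg_left (hD.hgt_le _) (norm_nonneg z)

omit hD in
lemma gauge_smul (σ : ℝ) {s : ℝ} (hs : 0 < s) (z : ℂ) : gauge' D σ (s • z) = s * gauge' D σ z := by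
  rw [gauge', gauge', norm_smul, Real.norm_of_nonneg hs.le, Complex.real_smul,
    Complex.arg_real_mul _ hs]
  ring

lemma continuous_gauge (σ : ℝ) : Continuous (gauge' D σ) := by
  have hR := hD.R_pos
  refine LipschitzWith.continuous (K := ⟨R₀, hR.le⟩) (LipschitzWith.of_le_add_mul _ fun z w => ?_)
  have := hD.gauge_add_le σ w (z - w)
  rw [add_sub_cancel] at this
  rw [dist_eq_norm]
  exact this

/-- By homogeneity the area of a sublevel set of the support function is quadratic in the level. -/
lemma volume_gauge_lt (σ : ℝ) : ∃ V : ℝ, 0 ≤ V ∧ V ≤ 4 / r₀ ^ 2 ∧ ∀ s : ℝ, 0 < s →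
    volume {z : ℂ | gauge' D σ z < s} = ENNReal.ofReal (s ^ 2 * V) := by
  have hr := hD.r_pos
  have hsub : {z : ℂ | gauge' D σ z < 1} ⊆ Metric.ball 0 (1 / r₀) := by
    intro z hz
    rw [mem_ball_zero_iff, lt_div_iff₀' hr]
    exact (hD.gauge_lower σ z).trans_lt hz
  have hV := measure_mono (μ := volume) hsub
  rw [Complex.volume_ball] at hV
  have hfin : volume {z : ℂ | gauge' D σ z < 1} ≠ ∞ :=
    (hV.trans_lt (by finiteness)).ne
  refine ⟨(volume {z : ℂ | gauge' D σ z < 1}).toReal, ENNReal.toReal_nonneg, ?_, ?_⟩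
  · refine ENNReal.toReal_le_of_le_ofReal (by positivity) (hV.trans ?_)
    rw [← ENNReal.ofReal_pow (by positivity), show (NNReal.pi : ℝ≥0∞) = ENNReal.ofReal Real.pi by
      rw [← NNReal.coe_real_pi, ENNReal.ofReal_coe_nnreal],
      ← ENNReal.ofReal_mul (by positivity)]
    refine ENNReal.ofReal_le_ofReal ?_
    rw [div_pow, one_pow, one_div, inv_mul_eq_div]
    gcongr
    exact Real.pi_le_four
  · intro s hs
    have : {z : ℂ | gauge' D σ z < s} = s • {z : ℂ | gauge' D σ z < 1} := by
      ext z
      rw [mem_smul_set_iff_inv_smul_mem₀ hs.ne']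
      show gauge' D σ z < s ↔ gauge' D σ (s⁻¹ • z) < 1
      rw [gauge_smul σ (inv_pos.2 hs), inv_mul_lt_iff₀ hs, mul_one]
    rw [this, Measure.addHaar_smul, Complex.finrank_real_complex, abs_of_pos (by positivity),
      ENNReal.ofReal_mul (by positivity), ENNReal.ofReal_toReal hfin]

/-- Shells of unit thickness of the support function contain `O(|k|)` lattice points, by comparing
areas. -/
lemma mult_le (σ : ℝ) (S : Finset (Fin 2 → ℤ)) {k : Fin 2 → ℤ} (hk : k ≠ 0) :
    (mult S (fun l => ⌊freq D σ l⌋) k : ℝ) ≤ 4 / r₀ ^ 2 * (1 + 4 * R₀) ^ 2 * ‖kc k‖ := by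
  have hr := hD.r_pos
  have hR := hD.R_pos
  have hk1 := one_le_norm_kc hk
  obtain ⟨V, hV0, hV, hvol⟩ := hD.volume_gauge_lt σ
  set F := S.filter fun l => ⌊freq D σ l⌋ = ⌊freq D σ k⌋ with hF
  set m := ⌊freq D σ k⌋ with hm
  have hm0 : (0 : ℝ) ≤ m := by
    have : 0 ≤ freq D σ k := le_trans (by positivity) (hD.gauge_lower σ (kc k))
    exact_mod_cast Int.floor_nonneg.2 this
  have hmk : (m : ℝ) ≤ R₀ * ‖kc k‖ := (Int.floor_le _).trans (hD.gauge_upper σ (kc k))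
  have hdist : ∀ l, ∀ z ∈ unitSq l, ‖z - kc l‖ ≤ 2 := by
    rintro l z ⟨h1, h2⟩
    refine (Complex.norm_le_abs_re_add_abs_im _).trans ?_
    simp only [Complex.sub_re, Complex.sub_im, kc]
    have a1 : |z.re - l 0| ≤ 1 := by rw [abs_le]; constructor <;> linarith [h1.1, h1.2]
    have a2 : |z.im - l 1| ≤ 1 := by rw [abs_le]; constructor <;> linarith [h2.1, h2.2]
    linarith
  have hUvol : volume (⋃ l ∈ F, unitSq l) = (F.card : ℝ≥0∞) := by
    rw [measure_biUnion_finset (fun a _ b _ hab => disjoint_unitSq hab)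
      (fun l _ => measurableSet_unitSq l)]
    simp [volume_unitSq]
  have hup : ⋃ l ∈ F, unitSq l ⊆ {z | gauge' D σ z < m + 1 + 2 * R₀} := by
    refine iUnion₂_subset fun l hl z hz => ?_
    have h1 := hD.gauge_add_le σ (kc l) (z - kc l)
    rw [add_sub_cancel] at h1
    have h2 : freq D σ l < m + 1 := by
      rw [hm, ← (Finset.mem_filter.1 hl).2]; exact Int.lt_floor_add_one _
    have h3 := hdist l z hz
    show gauge' D σ z < m + 1 + 2 * R₀
    have : R₀ * ‖z - kc l‖ ≤ R₀ * 2 := by gcongr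
    rw [freq] at h2
    linarith
  have hlow : Disjoint (⋃ l ∈ F, unitSq l) {z | gauge' D σ z < m - 2 * R₀} := by
    rw [Set.disjoint_left]
    intro z hz hz2
    simp only [mem_iUnion] at hz
    obtain ⟨l, hl, hz⟩ := hz
    have h1 := hD.gauge_add_le σ z (kc l - z)
    rw [add_sub_cancel, norm_sub_rev] at h1
    have h2 : (m : ℝ) ≤ freq D σ l := by
      rw [hm, ← (Finset.mem_filter.1 hl).2]; exact Int.floor_le _
    have h3 := hdist l z hz
    have hz2 : gauge' D σ z < m - 2 * R₀ := hz2
    have : R₀ * ‖z - kc l‖ ≤ R₀ * 2 := by gcongr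
    rw [freq] at h2
    linarith
  have hcard : (mult S (fun l => ⌊freq D σ l⌋) k : ℝ) = F.card := rfl
  rw [hcard]
  have main : (F.card : ℝ) ≤ V * ((1 + 4 * R₀) ^ 2 * ‖kc k‖) := by
    rcases le_or_gt (m : ℝ) (2 * R₀) with hc | hc
    · have h1 := measure_mono (μ := volume) hup
      rw [hUvol, hvol _ (by positivity), ← ENNReal.ofReal_natCast,
        ENNReal.ofReal_le_ofReal_iff (by positivity)] at h1
      refine h1.trans ?_
      rw [mul_comm]
      refine mul_le_mul_of_nonneg_left ?_ hV0
      calc (m + 1 + 2 * R₀ : ℝ) ^ 2 ≤ (1 + 4 * R₀) ^ 2 := by exact pow_le_pow_left₀ (by positivity) (by linarith) 2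
        _ ≤ _ := le_mul_of_one_le_right (by positivity) hk1
    · have hmeas : MeasurableSet {z | gauge' D σ z < m - 2 * R₀} :=
        (isOpen_lt (hD.continuous_gauge σ) continuous_const).measurableSet
      have h1 := measure_mono (μ := volume) (union_subset hup
        (show {z | gauge' D σ z < m - 2 * R₀} ⊆ {z | gauge' D σ z < m + 1 + 2 * R₀} from
          fun z hz => lt_trans (show gauge' D σ z < _ from hz) (by linarith)))
      rw [measure_union hlow hmeas, hUvol, hvol _ (by linarith), hvol _ (by positivity),
        ← ENNReal.ofReal_natCast, ← ENNReal.ofReal_add (by positivity) (by positivity),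
        ENNReal.ofReal_le_ofReal_iff (by positivity)] at h1
      have h2 : (F.card : ℝ) ≤ V * ((1 + 4 * R₀) * (2 * m + 1)) := by linarith
      refine h2.trans (mul_le_mul_of_nonneg_left ?_ hV0)
      rw [pow_two, mul_assoc]
      refine mul_le_mul_of_nonneg_left ?_ (by positivity)
      nlinarith
  refine main.trans ?_
  rw [mul_assoc]
  gcongr

end IsDom

/-! ### Fourier coefficients of dilated domains -/

/-- The character `x ↦ e^{-2πi k·x}` of the plane. -/
def chr (k : Fin 2 → ℤ) (x : Fin 2 → ℝ) : ℂ := osc (-(2 * Real.pi)) (k 0 * x 0 + k 1 * x 1)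

lemma norm_chr (k : Fin 2 → ℤ) (x : Fin 2 → ℝ) : ‖chr k x‖ = 1 := norm_osc _ _

lemma continuous_chr (k : Fin 2 → ℤ) : Continuous (chr k) :=
  (continuous_osc _).comp (by fun_prop)

lemma chr_add (k : Fin 2 → ℤ) (x y : Fin 2 → ℝ) : chr k (x + y) = chr k x * chr k y := by
  rw [chr, chr, chr, ← osc_add]
  congr 1
  simp only [Pi.add_apply]; ring

lemma chr_int (k n : Fin 2 → ℤ) : chr k (fun i => (n i : ℝ)) = 1 := by
  rw [chr, osc, Complex.exp_eq_one_iff]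
  refine ⟨-(k 0 * n 0 + k 1 * n 1), ?_⟩
  push_cast; ring

lemma measurePreserving_frame (φ : ℝ) : MeasurePreserving (frame φ) volume volume := by
  set M : Matrix (Fin 2) (Fin 2) ℝ := !![Real.cos φ, -Real.sin φ; Real.sin φ, Real.cos φ] with hM
  have hdet : M.det = 1 := by
    rw [hM, Matrix.det_fin_two_of]; nlinarith [Real.sin_sq_add_cos_sq φ]
  have h1 : MeasurePreserving (Matrix.toLin' M) volume volume := by
    refine ⟨(LinearMap.continuous_of_finiteDimensional _).measurable, ?_⟩
    rw [Real.map_matrix_volume_pi_eq_smul_volume_pi (by rw [hdet]; exact one_ne_zero), hdet]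
    simp
  have h2 := ((PiLp.volume_preserving_toLp (Fin 2)).comp h1).comp
    (volume_preserving_finTwoArrow ℝ).symm
  convert! h2 using 1
  ext p i
  fin_cases i <;> simp [frame, hM, MeasurableEquiv.finTwoArrow, Matrix.toLin'_apply,
    sub_eq_add_neg] <;> ring

lemma frame_injective (φ : ℝ) : Function.Injective (frame φ) := by
  intro p q h
  have h0 := congrArg (fun x : E2 => x 0) h
  have h1 := congrArg (fun x : E2 => x 1) h
  simp only [frame_zero, frame_one] at h0 h1
  have hs := Real.sin_sq_add_cos_sq φ
  ext
  · linear_combination (q.1 - p.1) * hs + Real.cos φ * h0 + Real.sin φ * h1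
  · linear_combination (q.2 - p.2) * hs - Real.sin φ * h0 + Real.cos φ * h1

lemma measurableEmbedding_frame (φ : ℝ) : MeasurableEmbedding (frame φ) :=
  (continuous_frame φ).measurableEmbedding (frame_injective φ)

/-- A set of the Euclidean plane as a set of coordinate vectors. -/
def flat (B : Set E2) : Set (Fin 2 → ℝ) := WithLp.toLp 2 ⁻¹' B

lemma integral_flat (B : Set E2) (f : (Fin 2 → ℝ) → ℂ) :
    ∫ y in flat B, f y = ∫ x in B, f (WithLp.ofLp x) := by
  rw [← (PiLp.volume_preserving_toLp (Fin 2)).setIntegral_preimage_emb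
    (MeasurableEquiv.toLp 2 (Fin 2 → ℝ)).measurableEmbedding]
  rfl

/-- The Fourier coefficient of `tD` at `k`, computed in the frame of `k`. -/
lemma integral_chr_smul (D : Set E2) (k : Fin 2 → ℤ) {t : ℝ} (ht : 0 < t) :
    ∫ y in flat (t • D), chr k y =
      t ^ 2 * ∫ p in turned D (kc k).arg, osc (-(2 * Real.pi * t * ‖kc k‖)) p.1 := by
  rw [integral_flat]
  have h := Measure.setIntegral_comp_smul_of_pos (volume : Measure E2)
    (fun x => chr k (WithLp.ofLp x)) D ht
  have hf : Module.finrank ℝ E2 = 2 := by simp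
  rw [hf, eq_inv_smul_iff₀ (by positivity)] at h
  rw [← h, ← (measurePreserving_frame (kc k).arg).setIntegral_preimage_emb
    (measurableEmbedding_frame _), Complex.real_smul]
  push_cast
  congr 1
  refine integral_congr_ae (.of_forall fun p => ?_)
  show osc _ _ = osc _ _
  have hs := Real.sin_sq_add_cos_sq (kc k).arg
  have e0 : (k 0 : ℝ) = ‖kc k‖ * Real.cos (kc k).arg := (Complex.norm_mul_cos_arg (kc k)).symm
  have e1 : (k 1 : ℝ) = ‖kc k‖ * Real.sin (kc k).arg := (Complex.norm_mul_sin_arg (kc k)).symm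
  rw [osc, osc]
  congr 3
  simp only [PiLp.smul_apply, smul_eq_mul, frame_zero, frame_one]
  rw [e0, e1]
  linear_combination (-2 * Real.pi * t * ‖kc k‖ * p.1) * hs

/-! ### Parseval's identity on the unit square -/

/-- The half-open unit square at the origin. -/
def cube : Set (Fin 2 → ℝ) := {x | ∀ i, x i ∈ Ioc (0 : ℝ) 1}

lemma measurableSet_cube : MeasurableSet cube :=
  MeasurableSet.univ_pi' (fun _ => measurableSet_Ioc)

section Torus

local instance : MeasureSpace UnitAddCircle := ⟨AddCircle.haarAddCircle⟩
local instance : IsProbabilityMeasure (volume : Measure UnitAddCircle) :=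
  inferInstanceAs (IsProbabilityMeasure AddCircle.haarAddCircle)

/-- The periodization of the restriction of `g` to the unit square. -/
def perLift (g : (Fin 2 → ℝ) → ℂ) (x : UnitAddTorus (Fin 2)) : ℂ :=
  g (UnitAddTorus.measurableEquivPiIoc (0 : Fin 2 → ℝ) x).1

lemma perLift_coe (g : (Fin 2 → ℝ) → ℂ) {x : Fin 2 → ℝ} (hx : x ∈ cube) :
    perLift g (fun i => (x i : UnitAddCircle)) = g x := by
  have hx' : ∀ i, x i ∈ Ioc ((0 : Fin 2 → ℝ) i) ((0 : Fin 2 → ℝ) i + 1) := by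
    intro i; simpa using hx i
  have := (UnitAddTorus.measurableEquivPiIoc (0 : Fin 2 → ℝ)).apply_symm_apply ⟨x, hx'⟩
  rw [UnitAddTorus.coe_symm_measurableEquivPiIoc_apply] at this
  rw [perLift, this]

lemma integral_torus (f : UnitAddTorus (Fin 2) → ℂ) :
    ∫ x, f x = ∫ x in cube, f (fun i => (x i : UnitAddCircle)) := by
  rw [UnitAddTorus.integral_preimage f 0]
  simp only [Pi.zero_apply, zero_add]
  rfl

lemma mFourier_coe (k : Fin 2 → ℤ) (x : Fin 2 → ℝ) :
    UnitAddTorus.mFourier (-k) (fun i => (x i : UnitAddCircle)) = chr k x := by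
  simp only [UnitAddTorus.mFourier, ContinuousMap.coe_mk, Fin.prod_univ_two, Pi.neg_apply,
    fourier_coe_apply]
  rw [← Complex.exp_add, chr, osc]
  congr 1
  push_cast; ring

lemma measurable_perLift {g : (Fin 2 → ℝ) → ℂ} (hg : Measurable g) : Measurable (perLift g) :=
  hg.comp (measurable_subtype_coe.comp (MeasurableEquiv.measurable _))

lemma mFourierCoeff_perLift (g : (Fin 2 → ℝ) → ℂ) (k : Fin 2 → ℤ) :
    UnitAddTorus.mFourierCoeff (perLift g) k = ∫ x in cube, chr k x * g x := by
  rw [UnitAddTorus.mFourierCoeff]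
  refine (integral_torus _).trans ?_
  refine setIntegral_congr_fun measurableSet_cube fun x hx => ?_
  show _ • _ = _
  rw [mFourier_coe, perLift_coe g hx, smul_eq_mul]

lemma memLp_perLift {g : (Fin 2 → ℝ) → ℂ} (hg : Measurable g) {C : ℝ} (hC : ∀ x, ‖g x‖ ≤ C) :
    MemLp (perLift g) 2 volume :=
  MemLp.of_bound (measurable_perLift hg).aestronglyMeasurable C (.of_forall fun _ => hC _)

lemma parseval {g₁ g₂ : (Fin 2 → ℝ) → ℂ} (h₁ : Measurable g₁) (h₂ : Measurable g₂) {C₁ C₂ : ℝ}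
    (hC₁ : ∀ x, ‖g₁ x‖ ≤ C₁) (hC₂ : ∀ x, ‖g₂ x‖ ≤ C₂) :
    HasSum (fun k => (starRingEnd ℂ) (∫ x in cube, chr k x * g₁ x) * ∫ x in cube, chr k x * g₂ x)
      (∫ x in cube, (starRingEnd ℂ) (g₁ x) * g₂ x) := by
  have m₁ := memLp_perLift h₁ hC₁
  have m₂ := memLp_perLift h₂ hC₂
  have H := UnitAddTorus.hasSum_prod_mFourierCoeff m₁.toLp m₂.toLp
  have e : ∀ (g : (Fin 2 → ℝ) → ℂ) (m : MemLp (perLift g) 2 volume) k,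
      UnitAddTorus.mFourierCoeff m.toLp k = ∫ x in cube, chr k x * g x := by
    intro g m k
    rw [← mFourierCoeff_perLift]
    refine integral_congr_ae ?_
    filter_upwards [m.coeFn_toLp] with x hx
    rw [hx]
  simp only [e] at H
  convert! H using 1
  refine Eq.trans ?_ (integral_congr_ae (f := fun x => (starRingEnd ℂ) (perLift g₁ x) * perLift g₂ x) ?_)
  · rw [integral_torus]
    refine setIntegral_congr_fun measurableSet_cube fun x hx => ?_
    show _ = (starRingEnd ℂ) (perLift g₁ _) * perLift g₂ _
    rw [perLift_coe g₁ hx, perLift_coe g₂ hx]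
  · filter_upwards [m₁.coeFn_toLp, m₂.coeFn_toLp] with x hx hy
    rw [hx, hy]

end Torus

/-! ### Smoothed lattice point counts -/

/-- The integer vectors with coordinates in `[-M, M]`. -/
def box (M : ℕ) : Finset (Fin 2 → ℤ) := Fintype.piFinset fun _ => Finset.Icc (-(M : ℤ)) M

lemma mem_box {M : ℕ} {n : Fin 2 → ℤ} : n ∈ box M ↔ ∀ i, |n i| ≤ M := by
  simp [box, Fintype.mem_piFinset, abs_le]

/-- An integer vector as a real vector. -/
def rv (n : Fin 2 → ℤ) : Fin 2 → ℝ := fun i => (n i : ℝ)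

/-- The number of lattice translates of `x` by vectors of `box M` lying in `B`. -/
def hits (M : ℕ) (B : Set (Fin 2 → ℝ)) (x : Fin 2 → ℝ) : ℝ :=
  ∑ n ∈ box M, B.indicator 1 (x + rv n)

lemma measurable_hits (M : ℕ) {B : Set (Fin 2 → ℝ)} (hB : MeasurableSet B) :
    Measurable (hits M B) := by
  unfold hits
  refine Finset.measurable_sum _ fun n _ => ?_
  exact (measurable_one.indicator hB).comp (measurable_id.add_const _)

lemma hits_nonneg (M : ℕ) (B : Set (Fin 2 → ℝ)) (x : Fin 2 → ℝ) : 0 ≤ hits M B x :=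
  Finset.sum_nonneg fun _ _ => indicator_nonneg (fun _ _ => zero_le_one) _

lemma hits_le (M : ℕ) (B : Set (Fin 2 → ℝ)) (x : Fin 2 → ℝ) : hits M B x ≤ (box M).card := by
  unfold hits
  refine (Finset.sum_le_card_nsmul _ _ 1 fun n _ => ?_).trans (by simp)
  exact indicator_le_self' (fun _ _ => zero_le_one) _

/-- The half-open unit square with lower left corner `n`. -/
def cubeAt (n : Fin 2 → ℤ) : Set (Fin 2 → ℝ) := {x | ∀ i, x i ∈ Ioc (n i : ℝ) (n i + 1)}

lemma measurableSet_cubeAt (n : Fin 2 → ℤ) : MeasurableSet (cubeAt n) :=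
  MeasurableSet.univ_pi' (fun _ => measurableSet_Ioc)

lemma cubeAt_preimage (n : Fin 2 → ℤ) : (fun x => x + rv n) ⁻¹' cubeAt n = cube := by
  ext x
  refine forall_congr' fun i => ?_
  simp only [Pi.add_apply, rv, mem_Ioc]
  constructor <;> rintro ⟨a, b⟩ <;> constructor <;> linarith

lemma mem_cubeAt_iff {n : Fin 2 → ℤ} {x : Fin 2 → ℝ} :
    x ∈ cubeAt n ↔ ∀ i, n i = ⌈x i⌉ - 1 := by
  refine forall_congr' fun i => ?_
  rw [eq_sub_iff_add_eq, eq_comm, Int.ceil_eq_iff, mem_Ioc]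
  push_cast
  rw [add_sub_cancel_right]

lemma disjoint_cubeAt {n m : Fin 2 → ℤ} (h : n ≠ m) : Disjoint (cubeAt n) (cubeAt m) := by
  rw [Set.disjoint_left]
  intro x h1 h2
  rw [mem_cubeAt_iff] at h1 h2
  exact h (funext fun i => (h1 i).trans (h2 i).symm)

/-- The Fourier coefficients of the periodization of `B` are those of `B`. -/
lemma integral_chr_hits {M : ℕ} {B : Set (Fin 2 → ℝ)} (hB : MeasurableSet B)
    (hBM : ∀ x ∈ B, ∀ i, |x i| + 1 ≤ M) (k : Fin 2 → ℤ) :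
    ∫ x in cube, chr k x * (hits M B x : ℂ) = ∫ y in B, chr k y := by
  have hbd : Bornology.IsBounded B := by
    refine (Metric.isBounded_closedBall (x := (0 : Fin 2 → ℝ)) (r := M)).subset fun x hx => ?_
    rw [mem_closedBall_zero_iff, pi_norm_le_iff_of_nonneg (by positivity)]
    intro i; rw [Real.norm_eq_abs]; linarith [hBM x hx i]
  have hintg : IntegrableOn (chr k) B :=
    (continuous_chr k).continuousOn.integrableOn_of_subset_isCompact
      hbd.isCompact_closure hB subset_closure hbd.measure_lt_top.ne
  have hintg' : Integrable (B.indicator (chr k)) := (integrable_indicator_iff hB).2 hintg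
  have h1 : ∀ x, chr k x * (hits M B x : ℂ) = ∑ n ∈ box M, B.indicator (chr k) (x + rv n) := by
    intro x
    rw [hits]; push_cast
    rw [Finset.mul_sum]
    refine Finset.sum_congr rfl fun n _ => ?_
    by_cases h : x + rv n ∈ B
    · rw [indicator_of_mem h, indicator_of_mem h, chr_add,
        show chr k (rv n) = 1 from chr_int k n]; simp
    · rw [indicator_of_notMem h, indicator_of_notMem h]; simp
  simp_rw [h1]
  rw [integral_finsetSum]
  · have h2 : ∀ n ∈ box M, ∫ x in cube, B.indicator (chr k) (x + rv n) =
        ∫ y in cubeAt n, B.indicator (chr k) y := by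
      intro n _
      rw [← cubeAt_preimage n]
      exact (measurePreserving_add_right volume (rv n)).setIntegral_preimage_emb
        (measurableEmbedding_addRight _) _ _
    rw [Finset.sum_congr rfl h2, ← integral_biUnion_finset _ (fun n _ => measurableSet_cubeAt n)
      (fun a _ b _ hab => disjoint_cubeAt hab) (fun n _ => hintg'.integrableOn),
      setIntegral_indicator hB]
    congr 2
    refine inter_eq_right.2 fun x hx => ?_
    rw [mem_iUnion₂]
    refine ⟨fun i => ⌈x i⌉ - 1, ?_, mem_cubeAt_iff.2 fun i => rfl⟩
    rw [mem_box]
    intro i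
    have hb := hBM x hx i
    have h3 := abs_le.1 (show |x i| ≤ M - 1 by linarith)
    have h4 := Int.le_ceil (x i)
    have h5 := Int.ceil_lt_add_one (x i)
    have : |((⌈x i⌉ - 1 : ℤ) : ℝ)| ≤ M := by
      push_cast
      rw [abs_le]; constructor <;> linarith
    exact_mod_cast this
  · intro n _
    exact (hintg'.comp_add_right (rv n)).integrableOn

/-- The square `(0, δ]²`. -/
def small (δ : ℝ) : Set (Fin 2 → ℝ) := {x | ∀ i, x i ∈ Ioc (0 : ℝ) δ}

lemma measurableSet_small (δ : ℝ) : MeasurableSet (small δ) :=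
  MeasurableSet.univ_pi' (fun _ => measurableSet_Ioc)

lemma volume_small {δ : ℝ} (hδ : 0 < δ) : volume (small δ) = ENNReal.ofReal (δ ^ 2) := by
  have : small δ = Set.pi univ fun _ => Ioc 0 δ := by ext x; simp [small]
  rw [this, volume_pi_pi]
  simp [pow_two, ENNReal.ofReal_mul hδ.le]

/-- The Fourier coefficients of the normalized indicator function of `(0, δ]²`. -/
def kap (δ : ℝ) (k : Fin 2 → ℤ) : ℂ := (δ ^ 2)⁻¹ * ∫ x in small δ, chr k x

lemma kap_zero {δ : ℝ} (hδ : 0 < δ) : kap δ 0 = 1 := by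
  have : chr 0 = fun _ => 1 := by ext x; simp [chr, osc]
  rw [kap, this, setIntegral_const, Measure.real, volume_small hδ,
    ENNReal.toReal_ofReal (by positivity), Complex.real_smul]
  push_cast
  have : (δ : ℂ) ≠ 0 := by exact_mod_cast hδ.ne'
  field_simp

lemma integral_small (δ : ℝ) (k : Fin 2 → ℤ) :
    ∫ x in small δ, chr k x = ∏ i, ∫ u in Ioc 0 δ, osc (-(2 * Real.pi * k i)) u := by
  have h := integral_fintype_prod_volume_eq_prod (𝕜 := ℂ)
    (fun (i : Fin 2) => (Ioc (0 : ℝ) δ).indicator (osc (-(2 * Real.pi * k i))))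
  simp_rw [integral_indicator measurableSet_Ioc] at h
  rw [← h, ← integral_indicator (measurableSet_small δ)]
  refine integral_congr_ae (.of_forall fun x => ?_)
  show (small δ).indicator (chr k) x = ∏ i, (Ioc (0 : ℝ) δ).indicator (osc (-(2 * Real.pi * k i))) (x i)
  by_cases hx : x ∈ small δ
  · rw [indicator_of_mem hx, Fin.prod_univ_two, indicator_of_mem (hx 0), indicator_of_mem (hx 1),
      chr, osc, osc, osc, ← Complex.exp_add]
    congr 1; push_cast; ring
  · rw [indicator_of_notMem hx]
    have : ∃ i, x i ∉ Ioc (0 : ℝ) δ := by by_contra! h; exact hx h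
    obtain ⟨i, hi⟩ := this
    exact (Finset.prod_eq_zero (Finset.mem_univ i) (indicator_of_notMem hi _)).symm

lemma norm_integral_osc_le {δ : ℝ} (hδ : 0 < δ) (l : ℝ) : ‖∫ u in Ioc 0 δ, osc l u‖ ≤ δ := by
  refine (norm_setIntegral_le_of_norm_le_const (C := 1) (by simp) fun u _ => (norm_osc l u).le).trans ?_
  simp [hδ.le]

lemma norm_integral_osc_le' {δ : ℝ} (hδ : 0 < δ) {l : ℝ} (hl : l ≠ 0) :
    ‖∫ u in Ioc 0 δ, osc l u‖ ≤ 2 / |l| := by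
  have hc : (Complex.I * l : ℂ) ≠ 0 := mul_ne_zero Complex.I_ne_zero (by exact_mod_cast hl)
  have : ∫ u in Ioc 0 δ, osc l u = (osc l δ - osc l 0) / (Complex.I * l) := by
    rw [← intervalIntegral.integral_of_le hδ.le]
    have := integral_exp_mul_complex (a := 0) (b := δ) hc
    simp only [osc]
    push_cast
    simp only [← mul_assoc]
    exact this
  rw [this, norm_div, norm_mul, Complex.norm_I, one_mul, Complex.norm_real, Real.norm_eq_abs]
  gcongr
  refine (norm_sub_le _ _).trans ?_
  rw [norm_osc, norm_osc]; norm_num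

lemma norm_kap_le {δ : ℝ} (hδ : 0 < δ) (k : Fin 2 → ℤ) : ‖kap δ k‖ ≤ 1 := by
  rw [kap, integral_small, Fin.prod_univ_two, norm_mul, norm_mul, 
    Complex.norm_real, Real.norm_of_nonneg (by positivity), inv_mul_le_iff₀ (by positivity), mul_one, pow_two]
  exact mul_le_mul (norm_integral_osc_le hδ _) (norm_integral_osc_le hδ _) (norm_nonneg _) hδ.le

lemma norm_kap_mul_le {δ : ℝ} (hδ : 0 < δ) (k : Fin 2 → ℤ) (i : Fin 2) :
    ‖kap δ k‖ * (δ * |(k i : ℝ)|) ≤ 1 := by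
  rcases eq_or_ne (k i) 0 with h | h
  · simp [h]
  have hk : (0 : ℝ) < |(k i : ℝ)| := by simpa using h
  have h1 : ‖∫ u in Ioc 0 δ, osc (-(2 * Real.pi * k i)) u‖ ≤ 1 / |(k i : ℝ)| := by
    refine (norm_integral_osc_le' hδ (by simp [h, Real.pi_ne_zero])).trans ?_
    rw [abs_neg, abs_mul, abs_of_pos Real.two_pi_pos, div_le_div_iff₀ (by positivity) hk]
    nlinarith [Real.pi_gt_three]
  have key : ‖∫ x in small δ, chr k x‖ ≤ δ * (1 / |(k i : ℝ)|) := by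
    rw [integral_small, Fin.prod_univ_two, norm_mul]
    fin_cases i
    · rw [mul_comm δ]
      exact mul_le_mul h1 (norm_integral_osc_le hδ _) (norm_nonneg _) (by positivity)
    · exact mul_le_mul (norm_integral_osc_le hδ _) h1 (norm_nonneg _) hδ.le
  rw [kap, norm_mul, Complex.norm_real, Real.norm_of_nonneg (by positivity)]
  calc (δ ^ 2)⁻¹ * ‖∫ x in small δ, chr k x‖ * (δ * |(k i : ℝ)|)
      ≤ (δ ^ 2)⁻¹ * (δ * (1 / |(k i : ℝ)|)) * (δ * |(k i : ℝ)|) := by gcongr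
    _ = 1 := by field_simp

/-- The average over `x ∈ (0, δ]²` of the number of points of `x + ℤ²` in `B`. -/
def avg (δ : ℝ) (M : ℕ) (B : Set (Fin 2 → ℝ)) : ℝ := (δ ^ 2)⁻¹ * ∫ x in small δ, hits M B x

lemma integrableOn_hits (δ : ℝ) (M : ℕ) {B : Set (Fin 2 → ℝ)} (hB : MeasurableSet B) (hδ : 0 < δ) :
    IntegrableOn (hits M B) (small δ) := by
  refine Measure.integrableOn_of_bounded (M := (box M).card) ?_ 
    (measurable_hits M hB).aestronglyMeasurable (.of_forall fun x => ?_)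
  · rw [volume_small hδ]; finiteness
  · rw [Real.norm_of_nonneg (hits_nonneg _ _ _)]; exact hits_le M B x

lemma avg_le {δ : ℝ} (hδ : 0 < δ) {M : ℕ} {B : Set (Fin 2 → ℝ)} (hB : MeasurableSet B) {c : ℝ}
    (h : ∀ x ∈ small δ, hits M B x ≤ c) : avg δ M B ≤ c := by
  rw [avg, inv_mul_le_iff₀ (by positivity)]
  refine (setIntegral_mono_on (integrableOn_hits δ M hB hδ) (integrableOn_const (by
    rw [volume_small hδ]; finiteness)) (measurableSet_small δ) h).trans ?_
  rw [setIntegral_const, Measure.real, volume_small hδ, ENNReal.toReal_ofReal (by positivity),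
    smul_eq_mul]

lemma le_avg {δ : ℝ} (hδ : 0 < δ) {M : ℕ} {B : Set (Fin 2 → ℝ)} (hB : MeasurableSet B) {c : ℝ}
    (h : ∀ x ∈ small δ, c ≤ hits M B x) : c ≤ avg δ M B := by
  rw [avg, le_inv_mul_iff₀ (by positivity)]
  refine le_trans ?_ (setIntegral_mono_on (integrableOn_const (by
    rw [volume_small hδ]; finiteness)) (integrableOn_hits δ M hB hδ) (measurableSet_small δ) h)
  rw [setIntegral_const, Measure.real, volume_small hδ, ENNReal.toReal_ofReal (by positivity),
    smul_eq_mul]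

/-- Poisson summation for the smoothed count. -/
lemma hasSum_avg {δ : ℝ} (hδ1 : δ ≤ 1) {M : ℕ} {B : Set (Fin 2 → ℝ)}
    (hB : MeasurableSet B) (hBM : ∀ x ∈ B, ∀ i, |x i| + 1 ≤ M) :
    HasSum (fun k => (starRingEnd ℂ) (kap δ k) * ∫ y in B, chr k y) (avg δ M B : ℂ) := by
  have hsub : small δ ⊆ cube := fun x hx i => ⟨(hx i).1, (hx i).2.trans hδ1⟩
  have H := parseval (g₁ := (small δ).indicator fun _ => ((δ ^ 2)⁻¹ : ℂ))
    (g₂ := fun x => (hits M B x : ℂ))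
    (measurable_const.indicator (measurableSet_small δ))
    (Complex.measurable_ofReal.comp (measurable_hits M hB)) (C₁ := ‖((δ ^ 2)⁻¹ : ℂ)‖)
    (C₂ := (box M).card) (fun x => norm_indicator_le_norm_self _ _) (fun x => by
      rw [Complex.norm_real, Real.norm_of_nonneg (hits_nonneg _ _ _)]; exact hits_le M B x)
  have e1 : ∀ k, ∫ x in cube, chr k x * (small δ).indicator (fun _ => ((δ ^ 2)⁻¹ : ℂ)) x =
      kap δ k := by
    intro k
    have : (fun x => chr k x * (small δ).indicator (fun _ => ((δ ^ 2)⁻¹ : ℂ)) x) =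
        (small δ).indicator fun x => ((δ ^ 2)⁻¹ : ℂ) * chr k x := by
      ext x
      by_cases hx : x ∈ small δ
      · simp [hx, mul_comm]
      · simp [hx]
    rw [this, setIntegral_indicator (measurableSet_small δ), inter_eq_right.2 hsub,
      integral_const_mul, kap]
    push_cast; rfl
  simp_rw [e1, integral_chr_hits hB hBM] at H
  convert! H using 1
  have : (fun x => (starRingEnd ℂ) ((small δ).indicator (fun _ => ((δ ^ 2)⁻¹ : ℂ)) x) * (hits M B x : ℂ)) =
      (small δ).indicator fun x => (((δ ^ 2)⁻¹ * hits M B x : ℝ) : ℂ) := by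
    ext x
    by_cases hx : x ∈ small δ
    · simp [hx]
    · simp [hx]
  rw [this, setIntegral_indicator (measurableSet_small δ), inter_eq_right.2 hsub,
    integral_complex_ofReal, integral_const_mul, avg]

/-- Partial sums of the Fourier series of the smoothed lattice rest. -/
def psum (D : Set E2) (δ : ℝ) (j : ℕ) (t : ℝ) : ℂ :=
  ∑ k ∈ (box j).erase 0, (starRingEnd ℂ) (kap δ k) * ∫ y in flat (t • D), chr k y

lemma tendsto_box : Filter.Tendsto box Filter.atTop Filter.atTop := by
  refine Filter.tendsto_atTop_finset_of_monotone (fun a b hab n hn => ?_) fun n => ?_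
  · rw [mem_box] at hn ⊢
    exact fun i => (hn i).trans (by exact_mod_cast hab)
  · refine ⟨(|n 0| + |n 1|).toNat, mem_box.2 fun i => ?_⟩
    have h0 := abs_nonneg (n 0)
    have h1 := abs_nonneg (n 1)
    rw [Int.toNat_of_nonneg (by positivity)]
    fin_cases i <;> simp

lemma latticeCount_eq {S : Set E2} {M : ℕ} (hM : ∀ x ∈ S, ∀ i, |x i| ≤ M) :
    (latticeCount S : ℝ) = hits M (flat S) 0 := by
  classical
  have : {k : Fin 2 → ℤ | ek k ∈ S} = ↑((box M).filter fun k => ek k ∈ S) := by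
    ext k
    simp only [mem_ofPred_eq, Finset.coe_filter, iff_and_self]
    intro h
    rw [mem_box]
    intro i
    have := hM _ h i
    have h2 : |(k i : ℝ)| ≤ M := this
    exact_mod_cast h2
  rw [latticeCount, this, Nat.card_coe_set_eq, Set.ncard_coe_finset, Finset.card_filter, hits]
  push_cast
  refine Finset.sum_congr rfl fun k _ => ?_
  rw [indicator_apply, zero_add]
  rfl

lemma hits_mono {M : ℕ} {B B' : Set (Fin 2 → ℝ)} {x y : Fin 2 → ℝ}
    (h : ∀ n, x + rv n ∈ B → y + rv n ∈ B') : hits M B x ≤ hits M B' y := by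
  refine Finset.sum_le_sum fun n _ => ?_
  by_cases hx : x + rv n ∈ B
  · rw [indicator_of_mem hx, indicator_of_mem (h n hx)]
    exact le_refl (1 : ℝ)
  · rw [indicator_of_notMem hx]
    exact indicator_nonneg (fun _ _ => zero_le_one) _

namespace IsDom
variable {D : Set E2} {r₀ R₀ : ℝ} (hD : IsDom D r₀ R₀)
include hD

lemma measurableSet_flat {t : ℝ} (ht : 0 < t) : MeasurableSet (flat (t • D)) :=
  (hD.opn.smul₀ ht.ne').measurableSet.preimage (MeasurableEquiv.toLp 2 (Fin 2 → ℝ)).measurable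

lemma abs_coord_le {t : ℝ} (ht : 0 < t) {x : E2} (hx : x ∈ t • D) (i : Fin 2) :
    |x i| ≤ t * R₀ := by
  obtain ⟨y, hy, rfl⟩ := hx
  rw [← Real.norm_eq_abs]
  refine (PiLp.norm_apply_le _ i).trans ?_
  show ‖t • y‖ ≤ _
  rw [norm_smul, Real.norm_of_nonneg ht.le]
  exact mul_le_mul_of_nonneg_left (hD.norm_le y hy) ht.le

lemma volume_le : (volume D).toReal ≤ 4 * R₀ ^ 2 := by
  have hR := hD.R_pos
  have h1 : D ⊆ Metric.closedBall 0 R₀ := fun x hx => mem_closedBall_zero_iff.2 (hD.norm_le x hx)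
  have h2 := measure_mono (μ := volume) h1
  rw [EuclideanSpace.volume_closedBall_fin_two _ _] at h2
  refine ENNReal.toReal_le_of_le_ofReal (by positivity) (h2.trans ?_)
  rw [← ENNReal.ofReal_pow hR.le, ← ENNReal.ofReal_mul (by positivity)]
  refine ENNReal.ofReal_le_ofReal ?_
  nlinarith [Real.pi_le_four, sq_nonneg R₀]

/-- The Fourier series of the smoothed lattice rest converges to it, at every dilation `t`. -/
lemma tendsto_psum {δ : ℝ} (hδ : 0 < δ) (hδ1 : δ ≤ 1) {t : ℝ} (ht : 0 < t) {M : ℕ}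
    (hM : t * R₀ + 1 ≤ M) :
    Filter.Tendsto (fun j => psum D δ j t) Filter.atTop
      (nhds ((avg δ M (flat (t • D)) - t ^ 2 * (volume D).toReal : ℝ) : ℂ)) := by
  have H := hasSum_avg hδ1 (hD.measurableSet_flat ht) (M := M) (fun x hx i =>
    (add_le_add_left (hD.abs_coord_le ht hx i) 1).trans hM)
  have h0 : (starRingEnd ℂ) (kap δ 0) * ∫ y in flat (t • D), chr 0 y =
      ((t ^ 2 * (volume D).toReal : ℝ) : ℂ) := by
    have h1 : chr 0 = fun _ => 1 := by ext x; simp [chr, osc]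
    rw [kap_zero hδ, h1, integral_flat, setIntegral_const, Measure.real, Measure.addHaar_smul,
      ENNReal.toReal_mul, ENNReal.toReal_ofReal (by positivity)]
    simp
  have H2 := (Filter.Tendsto.comp H tendsto_box).sub_const
    ((t ^ 2 * (volume D).toReal : ℝ) : ℂ)
  rw [Complex.ofReal_sub]
  refine H2.congr fun j => ?_
  have hmem : (0 : Fin 2 → ℤ) ∈ box j := mem_box.2 (by simp)
  rw [psum, Function.comp_apply, ← Finset.add_sum_erase _ _ hmem, h0, add_sub_cancel_left]

lemma add_mem {s η : ℝ} (hs : 0 < s) (hη : 0 < η) {x y : E2} (hx : x ∈ s • D)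
    (hy : ‖y‖ < η * r₀) : x + y ∈ (s + η) • D := by
  obtain ⟨z, hz, rfl⟩ := hx
  have hw : η⁻¹ • y ∈ D := by
    apply hD.ball_sub
    rw [mem_ball_zero_iff, norm_smul, norm_inv, Real.norm_of_nonneg hη.le, inv_mul_lt_iff₀ hη]
    exact hy
  rw [hD.conv.add_smul hs.le hη.le]
  refine Set.add_mem_add ⟨z, hz, rfl⟩ ⟨_, hw, ?_⟩
  show η • η⁻¹ • y = y
  rw [smul_inv_smul₀ hη.ne']

/-- Averaging over a small square changes the count by at most a dilation by `t ± η`. -/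
lemma sandwich {δ η t : ℝ} (hδ : 0 < δ) (hδ1 : δ ≤ 1) (hη : 0 < η) (hδη : 2 * δ ≤ η * r₀)
    (hηt : η < t) : ∃ p₁ p₂ : ℂ,
      Filter.Tendsto (fun j => psum D δ j (t + η)) Filter.atTop (nhds p₁) ∧
      Filter.Tendsto (fun j => psum D δ j (t - η)) Filter.atTop (nhds p₂) ∧
      latticeRest D t ^ 2 ≤
        3 * (‖p₁‖ ^ 2 + ‖p₂‖ ^ 2 + ((2 * t * η + η ^ 2) * (4 * R₀ ^ 2)) ^ 2) := by
  have hR := hD.R_pos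
  obtain ⟨M, hM⟩ := exists_nat_ge ((t + η) * R₀ + 1)
  have hM1 : t * R₀ + 1 ≤ M := le_trans (by nlinarith) hM
  have hM2 : (t - η) * R₀ + 1 ≤ M := le_trans (by nlinarith) hM
  have ht : 0 < t := by linarith
  refine ⟨_, _, hD.tendsto_psum hδ hδ1 (by linarith) hM,
    hD.tendsto_psum hδ hδ1 (by linarith) hM2, ?_⟩
  have hcount := latticeCount_eq (S := t • D) (M := M)
    (fun x hx i => (hD.abs_coord_le ht hx i).trans (by linarith))
  have hsmall : ∀ x ∈ small δ, ‖WithLp.toLp 2 x‖ < η * r₀ := by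
    intro x hx
    refine lt_of_lt_of_le ?_ hδη
    rw [EuclideanSpace.norm_eq, Real.sqrt_lt' (by positivity), Fin.sum_univ_two]
    simp only [Real.norm_eq_abs, sq_abs]
    have a := hx 0
    have b := hx 1
    nlinarith [a.1, a.2, b.1, b.2]
  have hle : (latticeCount (t • D) : ℝ) ≤ avg δ M (flat ((t + η) • D)) := by
    refine le_avg hδ (hD.measurableSet_flat (by linarith)) fun x hx => ?_
    rw [hcount]
    refine hits_mono fun n hn => ?_
    rw [zero_add] at hn
    have := hD.add_mem ht hη (x := WithLp.toLp 2 (rv n)) hn (hsmall x hx)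
    rw [← WithLp.toLp_add, add_comm (rv n)] at this
    exact this
  have hge : avg δ M (flat ((t - η) • D)) ≤ latticeCount (t • D) := by
    refine avg_le hδ (hD.measurableSet_flat (by linarith)) fun x hx => ?_
    rw [hcount]
    refine hits_mono fun n hn => ?_
    rw [zero_add]
    have := hD.add_mem (s := t - η) (by linarith) hη (x := WithLp.toLp 2 (x + rv n)) hn
      (y := WithLp.toLp 2 (-x)) (by rw [WithLp.toLp_neg, norm_neg]; exact hsmall x hx)
    rw [← WithLp.toLp_add, sub_add_cancel, add_neg_cancel_comm] at this
    exact this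
  have hv0 : 0 ≤ (volume D).toReal := ENNReal.toReal_nonneg
  have hv := hD.volume_le
  set v := (volume D).toReal
  set a₁ := avg δ M (flat ((t + η) • D)) - (t + η) ^ 2 * v with ha₁
  set a₂ := avg δ M (flat ((t - η) • D)) - (t - η) ^ 2 * v with ha₂
  set c := (2 * t * η + η ^ 2) * (4 * R₀ ^ 2) with hc
  have hc1 : (2 * t * η + η ^ 2) * v ≤ c := by rw [hc]; gcongr
  have hc0 : 0 ≤ c := by positivity
  rw [Complex.norm_real, Complex.norm_real, Real.norm_eq_abs, Real.norm_eq_abs]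
  have hE1 : latticeRest D t ≤ |a₁| + c := by
    have := le_abs_self a₁
    rw [latticeRest]
    nlinarith
  have hE2 : -(|a₂| + c) ≤ latticeRest D t := by
    have := neg_abs_le a₂
    rw [latticeRest]
    nlinarith [mul_nonneg (sq_nonneg η) hv0]
  have hE : |latticeRest D t| ≤ |a₁| + |a₂| + c := by
    rw [abs_le]
    constructor <;> linarith [abs_nonneg a₁, abs_nonneg a₂]
  rw [← sq_abs (latticeRest D t)]
  nlinarith [abs_nonneg (latticeRest D t), sq_nonneg (|a₁| - |a₂|), sq_nonneg (|a₁| - c),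
    sq_nonneg (|a₂| - c), mul_self_le_mul_self (abs_nonneg _) hE]

end IsDom

/-! ### Mean squares of the partial sums over unit windows -/

/-- The amplitude of the frequency `freq D σ k` in the Fourier series. -/
def wave (D : Set E2) (σ : ℝ) (c : (Fin 2 → ℤ) → ℂ) (k : Fin 2 → ℤ) (t : ℝ) : ℂ :=
  c k * ((t : ℂ) ^ 2 * capAmp D (σ + (kc k).arg) (2 * Real.pi * t * ‖kc k‖))

/-- Half of the Fourier series: the contribution of the boundary points with outer normal `k`
rotated by `σ`. -/
def halfSum (D : Set E2) (σ : ℝ) (c : (Fin 2 → ℤ) → ℂ) (S : Finset (Fin 2 → ℤ)) (t : ℝ) : ℂ :=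
  ∑ k ∈ S, osc (-(2 * Real.pi * freq D σ k)) t * wave D σ c k t

namespace IsDom
variable {D : Set E2} {r₀ R₀ : ℝ} (hD : IsDom D r₀ R₀)
include hD

/-- The Fourier series splits according to the two supporting lines orthogonal to each `k`. -/
lemma psum_eq (δ : ℝ) (j : ℕ) {t : ℝ} (ht : 0 < t) :
    psum D δ j t = halfSum D 0 (fun k => (starRingEnd ℂ) (kap δ k)) ((box j).erase 0) t +
      (starRingEnd ℂ) (halfSum D Real.pi (kap δ) ((box j).erase 0) t) := by
  rw [psum, halfSum, halfSum, map_sum, ← Finset.sum_add_distrib]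
  refine Finset.sum_congr rfl fun k hk => ?_
  have hk1 := one_le_norm_kc (Finset.ne_of_mem_erase hk)
  have hl : 0 < 2 * Real.pi * t * ‖kc k‖ := by have := Real.pi_pos; positivity
  rw [integral_chr_smul D k ht, hD.fourier_turned _ hl, wave, wave, freq, freq, gauge', gauge',
    zero_add, add_comm Real.pi]
  have e : ∀ H : ℝ, osc (-(2 * Real.pi * t * ‖kc k‖)) H = osc (-(2 * Real.pi * (‖kc k‖ * H))) t := by
    intro H; rw [osc, osc]; congr 3; ring
  rw [e, e]
  simp only [map_mul, map_pow, Complex.conj_ofReal]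
  ring

lemma hasDerivAt_wave (σ : ℝ) (c : (Fin 2 → ℤ) → ℂ) {k : Fin 2 → ℤ} (hk : k ≠ 0) {t : ℝ}
    (ht : 0 < t) : ∃ d : ℂ, HasDerivAt (wave D σ c k)
      (c k * (2 * t * capAmp D (σ + (kc k).arg) (2 * Real.pi * t * ‖kc k‖) + d)) t ∧
      ‖d‖ ≤ 8 * R₀ / ‖kc k‖ := by
  have hk1 := one_le_norm_kc hk
  have hpi := Real.pi_gt_three
  have hR := hD.R_pos
  have hl : 0 < 2 * Real.pi * t * ‖kc k‖ := by positivity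
  obtain ⟨d, hd, hdb⟩ := hD.hasDerivAt_capAmp (σ + (kc k).arg) hl
  have h1 : HasDerivAt (fun t : ℝ => 2 * Real.pi * t * ‖kc k‖) (2 * Real.pi * ‖kc k‖) t := by
    have := ((hasDerivAt_id t).const_mul (2 * Real.pi)).mul_const ‖kc k‖
    simpa using this
  have h2 := hd.scomp t h1
  have h3 : HasDerivAt (fun t : ℝ => (t : ℂ) ^ 2) (2 * t) t := by
    have := (hasDerivAt_id t).ofReal_comp.pow 2
    refine this.congr_deriv ?_
    simp
  have h4 := (h3.mul h2).const_mul (c k)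
  refine ⟨(t : ℂ) ^ 2 * ((2 * Real.pi * ‖kc k‖ : ℝ) • d), h4, ?_⟩
  rw [norm_mul, norm_smul, norm_pow, Complex.norm_real, Real.norm_of_nonneg ht.le,
    Real.norm_of_nonneg (by positivity)]
  calc t ^ 2 * (2 * Real.pi * ‖kc k‖ * ‖d‖)
      ≤ t ^ 2 * (2 * Real.pi * ‖kc k‖ * (48 * R₀ / (2 * Real.pi * t * ‖kc k‖) ^ 2)) := by gcongr
    _ = 24 / Real.pi * R₀ / ‖kc k‖ := by field_simp; ring
    _ ≤ 8 * R₀ / ‖kc k‖ := by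
      gcongr
      rw [div_le_iff₀ (by positivity)]; linarith

lemma continuousOn_psum (δ : ℝ) (j : ℕ) : ContinuousOn (psum D δ j) (Ioi 0) := by
  have h : ∀ σ c, ContinuousOn (halfSum D σ c ((box j).erase 0)) (Ioi 0) := by
    intro σ c
    refine continuousOn_finsetSum _ fun k hk t ht => ?_
    obtain ⟨d, hd, -⟩ := hD.hasDerivAt_wave σ c (Finset.ne_of_mem_erase hk) ht
    exact ((continuous_osc _).continuousAt.mul hd.continuousAt).continuousWithinAt
  exact ((h _ _).add (Complex.continuous_conj.comp_continuousOn (h _ _))).congr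
    fun t ht => hD.psum_eq δ j ht

/-- Mean square over a unit window: the squared amplitudes `T N / |k|³` are multiplied by the
number `O(|k|)` of lattice vectors sharing the frequency of `k`. -/
lemma lintegral_halfSum_le (σ : ℝ) (c : (Fin 2 → ℤ) → ℂ) (S : Finset (Fin 2 → ℤ))
    (hS : ∀ k ∈ S, k ≠ 0) {T : ℝ} (hT : 1 ≤ T)
    (hfin : ∀ k ∈ S, curvN D R₀ (σ + (kc k).arg) ≠ ∞) :
    ∫⁻ t in Ioc T (T + 1), ENNReal.ofReal (‖halfSum D σ c S t‖ ^ 2) ≤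
      ENNReal.ofReal (150 * (4 / r₀ ^ 2 * (1 + 4 * R₀) ^ 2) * 128 * (1 + R₀ ^ 2) * ∑ k ∈ S,
        ‖c k‖ ^ 2 * ((curvN D R₀ (σ + (kc k).arg)).toReal * T / ‖kc k‖ ^ 2 + 1 / ‖kc k‖)) := by
  have hR := hD.R_pos
  have hr := hD.r_pos
  have hpi := Real.pi_gt_three
  set N : (Fin 2 → ℤ) → ℝ := fun k => (curvN D R₀ (σ + (kc k).arg)).toReal with hN
  set A2 : (Fin 2 → ℤ) → ℝ := fun k =>
    ‖c k‖ ^ 2 * 128 * (T * N k / ‖kc k‖ ^ 3 + R₀ ^ 2 / ‖kc k‖ ^ 2) with hA2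
  have hN1 : ∀ k ∈ S, 1 ≤ N k := fun k hk => (hD.curvN_spec (hfin k hk)).1
  have hA0 : ∀ k ∈ S, 0 ≤ A2 k := by
    intro k hk; have := hN1 k hk; positivity
  -- the main term of the amplitude
  have hcap : ∀ k ∈ S, ∀ t ∈ Icc T (T + 1),
      (t ^ 2 * ‖capAmp D (σ + (kc k).arg) (2 * Real.pi * t * ‖kc k‖)‖) ^ 2 ≤
        15 * (T * N k / ‖kc k‖ ^ 3) := by
    intro k hk t ht
    have hk1 := one_le_norm_kc (hS k hk)
    have ht1 : 1 ≤ t := hT.trans ht.1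
    have ht2 : t ≤ 2 * T := by linarith [ht.2]
    have hN1' := hN1 k hk
    have h1 := hD.norm_capAmp_sq_le hN1' (hD.curvN_spec (hfin k hk)).2
      (l := 2 * Real.pi * t * ‖kc k‖) (by
        have : 1 ≤ t * ‖kc k‖ := one_le_mul_of_one_le_of_one_le ht1 hk1
        nlinarith)
    rw [mul_pow]
    calc (t ^ 2) ^ 2 * ‖capAmp D (σ + (kc k).arg) (2 * Real.pi * t * ‖kc k‖)‖ ^ 2
        ≤ (t ^ 2) ^ 2 * (1600 * N k / (2 * Real.pi * t * ‖kc k‖) ^ 3) := by gcongr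
      _ = (200 / Real.pi ^ 3) * (t * N k / ‖kc k‖ ^ 3) := by field_simp; ring
      _ ≤ (15 / 2) * (2 * T * N k / ‖kc k‖ ^ 3) := by
        have h3 : (27 : ℝ) ≤ Real.pi ^ 3 := by
          calc (27 : ℝ) = 3 ^ 3 := by norm_num
            _ ≤ _ := by gcongr
        have h4 : 200 / Real.pi ^ 3 ≤ 15 / 2 := by
          rw [div_le_iff₀ (by positivity)]; linarith
        gcongr
      _ = _ := by ring
  have hH := almost_orth S (freq D σ) (wave D σ c) (fun k t => deriv (wave D σ c k) t)
    (fun k => Real.sqrt (A2 k)) T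
    (fun k hk t ht => by
      obtain ⟨d, hd, -⟩ := hD.hasDerivAt_wave σ c (hS k hk) (t := t) (by linarith [ht.1])
      exact hd.differentiableAt.hasDerivAt)
    (fun k hk t ht => by
      have hk1 := one_le_norm_kc (hS k hk)
      have hN1' := hN1 k hk
      refine Real.le_sqrt_of_sq_le ?_
      have h1 := hcap k hk t ht
      rw [wave, norm_mul, norm_mul, norm_pow, Complex.norm_real, Real.norm_eq_abs, sq_abs, mul_pow]
      show _ ≤ ‖c k‖ ^ 2 * 128 * (T * N k / ‖kc k‖ ^ 3 + R₀ ^ 2 / ‖kc k‖ ^ 2)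
      rw [mul_assoc (‖c k‖ ^ 2)]
      refine mul_le_mul_of_nonneg_left (h1.trans ?_) (sq_nonneg _)
      have h2 : 0 ≤ T * N k / ‖kc k‖ ^ 3 := by positivity
      have h3 : 0 ≤ R₀ ^ 2 / ‖kc k‖ ^ 2 := by positivity
      linarith)
    (fun k hk t ht => by
      have hk1 := one_le_norm_kc (hS k hk)
      have hN1' := hN1 k hk
      have ht1 : 1 ≤ t := hT.trans ht.1
      refine Real.le_sqrt_of_sq_le ?_
      have h1 := hcap k hk t ht
      obtain ⟨d, hd, hdb⟩ := hD.hasDerivAt_wave σ c (hS k hk) (t := t) (by linarith)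
      rw [hd.deriv, norm_mul, mul_pow]
      show _ ≤ ‖c k‖ ^ 2 * 128 * (T * N k / ‖kc k‖ ^ 3 + R₀ ^ 2 / ‖kc k‖ ^ 2)
      rw [mul_assoc (‖c k‖ ^ 2)]
      refine mul_le_mul_of_nonneg_left ?_ (sq_nonneg _)
      set q := ‖capAmp D (σ + (kc k).arg) (2 * Real.pi * t * ‖kc k‖)‖ with hq
      have h4 : ‖2 * (t : ℂ) * capAmp D (σ + (kc k).arg) (2 * Real.pi * t * ‖kc k‖) + d‖ ≤
          2 * (t ^ 2 * q) + 8 * R₀ / ‖kc k‖ := by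
        refine (norm_add_le _ _).trans (add_le_add ?_ hdb)
        rw [norm_mul, norm_mul, Complex.norm_real, Real.norm_of_nonneg (by linarith), ← hq,
          Complex.norm_two]
        have : t * q ≤ t ^ 2 * q := by
          apply mul_le_mul_of_nonneg_right _ (norm_nonneg _); nlinarith
        linarith
      have h5 : (8 * R₀ / ‖kc k‖) ^ 2 = 64 * (R₀ ^ 2 / ‖kc k‖ ^ 2) := by
        rw [div_pow]; ring
      have h6 := pow_le_pow_left₀ (norm_nonneg _) h4 2
      have h2 : 0 ≤ T * N k / ‖kc k‖ ^ 3 := by positivity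
      nlinarith [sq_nonneg (2 * (t ^ 2 * q) - 8 * R₀ / ‖kc k‖)])
  refine hH.trans (ENNReal.ofReal_le_ofReal ?_)
  rw [mul_assoc 150, mul_assoc 150, mul_assoc 150]
  refine mul_le_mul_of_nonneg_left ?_ (by norm_num)
  rw [Finset.mul_sum]
  refine Finset.sum_le_sum fun k hk => ?_
  have hk1 := one_le_norm_kc (hS k hk)
  have hN1' := hN1 k hk
  rw [Real.sq_sqrt (hA0 k hk)]
  refine (mul_le_mul_of_nonneg_right (hD.mult_le σ S (hS k hk)) (hA0 k hk)).trans ?_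
  have hC : 0 ≤ 4 / r₀ ^ 2 * (1 + 4 * R₀) ^ 2 := by positivity
  rw [mul_assoc (4 / r₀ ^ 2 * (1 + 4 * R₀) ^ 2) ‖kc k‖,
    mul_assoc (4 / r₀ ^ 2 * (1 + 4 * R₀) ^ 2) 128,
    mul_assoc (4 / r₀ ^ 2 * (1 + 4 * R₀) ^ 2) (128 * _)]
  refine mul_le_mul_of_nonneg_left ?_ hC
  have e : ‖kc k‖ * A2 k = 128 * (‖c k‖ ^ 2 * (N k * T / ‖kc k‖ ^ 2 + R₀ ^ 2 * (1 / ‖kc k‖))) := by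
    rw [hA2]; field_simp
  rw [e, mul_assoc]
  refine mul_le_mul_of_nonneg_left ?_ (by norm_num)
  have h2 : 0 ≤ N k * T / ‖kc k‖ ^ 2 := by positivity
  have h3 : 0 ≤ 1 / ‖kc k‖ := by positivity
  calc ‖c k‖ ^ 2 * (N k * T / ‖kc k‖ ^ 2 + R₀ ^ 2 * (1 / ‖kc k‖))
      ≤ ‖c k‖ ^ 2 * ((1 + R₀ ^ 2) * (N k * T / ‖kc k‖ ^ 2 + 1 / ‖kc k‖)) := by
        refine mul_le_mul_of_nonneg_left ?_ (by positivity)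
        nlinarith [mul_nonneg (sq_nonneg R₀) h2]
    _ = _ := by ring

end IsDom

/-! ### Dyadic weights -/

/-- The maximum norm of an integer vector. -/
def supn (k : Fin 2 → ℤ) : ℕ := max (k 0).natAbs (k 1).natAbs

/-- The dyadic level of an integer vector. -/
def lev (k : Fin 2 → ℤ) : ℕ := Nat.log 2 (supn k)

/-- The weight `4^{-m} (m+1)^{-p}` of the vectors of dyadic level `m`. -/
def wt (p : ℝ) (k : Fin 2 → ℤ) : ℝ := ((4 : ℝ) ^ lev k * ((lev k : ℝ) + 1) ^ p)⁻¹

lemma wt_pos (p : ℝ) (k : Fin 2 → ℤ) : 0 < wt p k := by unfold wt; positivity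

lemma supn_le_norm (k : Fin 2 → ℤ) : (supn k : ℝ) ≤ ‖kc k‖ := by
  rw [supn, Nat.cast_max]
  refine max_le ?_ ?_
  · rw [Nat.cast_natAbs]; push_cast; exact Complex.abs_re_le_norm (kc k)
  · rw [Nat.cast_natAbs]; push_cast; exact Complex.abs_im_le_norm (kc k)

lemma supn_pos {k : Fin 2 → ℤ} (hk : k ≠ 0) : 1 ≤ supn k := by
  by_contra! h
  have h0 : supn k = 0 := by omega
  rw [supn] at h0
  apply hk
  ext i
  fin_cases i
  · show k 0 = 0; omega
  · show k 1 = 0; omega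

lemma exists_supn (k : Fin 2 → ℤ) : ∃ i, (supn k : ℝ) = |(k i : ℝ)| := by
  rcases max_choice (k 0).natAbs (k 1).natAbs with h | h
  · exact ⟨0, by rw [supn, h, Nat.cast_natAbs]; push_cast; rfl⟩
  · exact ⟨1, by rw [supn, h, Nat.cast_natAbs]; push_cast; rfl⟩

lemma exists_rpow_le (p : ℝ) : ∃ C : ℝ, 0 ≤ C ∧ ∀ m : ℕ, ((m : ℝ) + 1) ^ p ≤ C * 2 ^ m := by
  obtain ⟨q, hq⟩ := exists_nat_ge p
  have h := (tendsto_pow_const_div_const_pow_of_one_lt q (one_lt_two (α := ℝ)))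
  obtain ⟨B, hB⟩ := h.bddAbove_range
  refine ⟨max (2 * B) 0, le_max_right _ _, fun m => ?_⟩
  have h1 : ((m : ℝ) + 1) ^ p ≤ ((m : ℝ) + 1) ^ q := by
    rw [← Real.rpow_natCast]
    exact Real.rpow_le_rpow_of_exponent_le (by linarith [Nat.cast_nonneg (α := ℝ) m]) hq
  have h2 : ((m + 1 : ℕ) : ℝ) ^ q / 2 ^ (m + 1) ≤ B := hB ⟨m + 1, rfl⟩
  rw [div_le_iff₀ (by positivity)] at h2
  push_cast at h2
  refine h1.trans (h2.trans ?_)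
  rw [pow_succ]
  nlinarith [mul_le_mul_of_nonneg_right (le_max_left (2 * B) 0) (pow_nonneg zero_le_two (M₀ := ℝ) m)]

/-- Bound for a single coefficient, with `x` in the role of the modulus of a Fourier coefficient of
the smoothing kernel. When `|k| ≤ R` the bound `x ≤ 1` suffices, as the logarithm of `|k|` is then
at most that of `R`; when `|k| > R` the decay of `x` is used. -/
lemma coeff_le {p : ℝ} (hp : 0 < p) {r₀ : ℝ} (hr : 0 < r₀) : ∃ C : ℝ, 0 ≤ C ∧
    ∀ (R T N x : ℝ) (k : Fin 2 → ℤ), 2 ≤ R → 0 ≤ T → T ≤ 4 * R → 1 ≤ N → 0 ≤ x → x ≤ 1 → k ≠ 0 →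
      (∀ i, x * (r₀ / (2 * Real.sqrt R) * |(k i : ℝ)|) ≤ 1) →
      x ^ 2 * (N * T / ‖kc k‖ ^ 2 + 1 / ‖kc k‖) ≤ C * (R * Real.log R ^ p) * (wt p k * N) := by
  obtain ⟨B, hB0, hB⟩ := exists_rpow_le p
  refine ⟨5 * 3 ^ p + 20 * B * 2 ^ p / r₀ ^ 2, by positivity, ?_⟩
  intro R T N x k hR hT hTR hN hx hx1 hk hxk
  have hn1 : (1 : ℝ) ≤ supn k := by exact_mod_cast supn_pos hk
  have hnk := supn_le_norm k
  have hmn : (2 : ℝ) ^ lev k ≤ supn k := by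
    exact_mod_cast Nat.pow_log_le_self 2 (show supn k ≠ 0 by have := supn_pos hk; omega)
  obtain ⟨i, hi⟩ := exists_supn k
  have hxi := hxk i
  rw [← hi] at hxi
  generalize (supn k : ℝ) = n at *
  set m := lev k with hm
  set q : ℝ := ((m : ℝ) + 1) ^ p with hq
  have hq0 : 0 < q := by positivity
  have hlog2 : (0.6931471803 : ℝ) < Real.log 2 := Real.log_two_gt_d9
  have hlogR : Real.log 2 ≤ Real.log R := Real.log_le_log (by norm_num) hR
  have hL0 : 0 < Real.log R := by linarith
  set L := Real.log R ^ p with hL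
  have hLpos : 0 < L := by positivity
  have h4 : (4 : ℝ) ^ m = 2 ^ m * 2 ^ m := by rw [← mul_pow]; norm_num
  have hnn : (4 : ℝ) ^ m ≤ n ^ 2 := by rw [h4, pow_two]; gcongr
  have hwt : wt p k = (4 ^ m * q)⁻¹ := rfl
  have step : x ^ 2 * (N * T / ‖kc k‖ ^ 2 + 1 / ‖kc k‖) ≤ x ^ 2 * (N * (4 * R / n ^ 2 + 1 / n)) := by
    refine mul_le_mul_of_nonneg_left ?_ (sq_nonneg _)
    have a : N * T / ‖kc k‖ ^ 2 ≤ N * (4 * R / n ^ 2) := by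
      rw [mul_div_assoc]; gcongr
    have b : 1 / ‖kc k‖ ≤ 1 / n := by gcongr
    have c : 1 / n ≤ N * (1 / n) := le_mul_of_one_le_left (by positivity) hN
    linarith
  refine step.trans ?_
  rw [hwt]
  rcases le_or_gt n R with hc | hc
  · have hqL : q ≤ 3 ^ p * L := by
      rw [hq, hL, ← Real.mul_rpow (by norm_num) hL0.le]
      refine Real.rpow_le_rpow (by positivity) ?_ hp.le
      have h1 : (m : ℝ) * Real.log 2 ≤ Real.log R := by
        rw [← Real.log_pow]
        exact Real.log_le_log (by positivity) (hmn.trans hc)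
      nlinarith
    have hx2 : x ^ 2 ≤ 1 := pow_le_one₀ hx hx1
    have h1 : 1 / n ≤ R / n ^ 2 := by
      rw [div_le_div_iff₀ (by positivity) (by positivity)]; nlinarith
    calc x ^ 2 * (N * (4 * R / n ^ 2 + 1 / n)) ≤ 1 * (N * (4 * R / n ^ 2 + R / n ^ 2)) := by gcongr
      _ = 5 * R * N / n ^ 2 := by ring
      _ ≤ 5 * R * N / 4 ^ m := by gcongr
      _ = 5 * (R * q) * ((4 ^ m * q)⁻¹ * N) := by field_simp
      _ ≤ 5 * (R * (3 ^ p * L)) * ((4 ^ m * q)⁻¹ * N) := by gcongr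
      _ = 5 * 3 ^ p * (R * L) * ((4 ^ m * q)⁻¹ * N) := by ring
      _ ≤ _ := by
        gcongr
        have : 0 ≤ 20 * B * 2 ^ p / r₀ ^ 2 := by positivity
        linarith
  · have hs : Real.sqrt R ^ 2 = R := Real.sq_sqrt (by linarith)
    have hs0 : 0 < Real.sqrt R := Real.sqrt_pos.2 (by linarith)
    have hx2 : x ^ 2 ≤ 4 * R / (r₀ ^ 2 * n ^ 2) := by
      have h1 : x ≤ 2 * Real.sqrt R / (r₀ * n) := by
        rw [le_div_iff₀ (by positivity)]
        have : x * (r₀ / (2 * Real.sqrt R) * n) = x * (r₀ * n) / (2 * Real.sqrt R) := by ring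
        rw [this, div_le_one (by positivity)] at hxi
        exact hxi
      have h2 := pow_le_pow_left₀ hx h1 2
      rw [div_pow, mul_pow, mul_pow, hs] at h2
      norm_num at h2
      exact h2
    have h1 : 4 * R / n ^ 2 ≤ 4 / n := by
      rw [div_le_div_iff₀ (by positivity) (by positivity)]; nlinarith
    have hL2 : 1 ≤ 2 ^ p * L := by
      rw [hL, ← Real.mul_rpow (by norm_num) hL0.le]
      exact Real.one_le_rpow (by linarith) hp.le
    have hn3 : (4 : ℝ) ^ m * 2 ^ m ≤ n ^ 3 := by
      rw [show n ^ 3 = n ^ 2 * n by ring]; gcongr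
    calc x ^ 2 * (N * (4 * R / n ^ 2 + 1 / n))
        ≤ 4 * R / (r₀ ^ 2 * n ^ 2) * (N * (4 / n + 1 / n)) := by gcongr
      _ = 20 * R * N / r₀ ^ 2 / n ^ 3 := by field_simp; ring
      _ ≤ 20 * R * N / r₀ ^ 2 / (4 ^ m * 2 ^ m) := by gcongr
      _ = 20 * R / r₀ ^ 2 * (q / 2 ^ m) * ((4 ^ m * q)⁻¹ * N) := by field_simp
      _ ≤ 20 * R / r₀ ^ 2 * B * ((4 ^ m * q)⁻¹ * N) := by
        gcongr
        rw [div_le_iff₀ (by positivity)]; exact hB m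
      _ ≤ 20 * R / r₀ ^ 2 * B * ((4 ^ m * q)⁻¹ * N) * (2 ^ p * L) :=
        le_mul_of_one_le_right (by positivity) hL2
      _ = 20 * B * 2 ^ p / r₀ ^ 2 * (R * L) * ((4 ^ m * q)⁻¹ * N) := by ring
      _ ≤ _ := by
        gcongr
        have : 0 ≤ (5 : ℝ) * 3 ^ p := by positivity
        linarith

/-- The curvature sum controlling the mean square discrepancy of `D`. The term `k = 0`, where the
argument is `0` by convention, only enlarges the sum and keeps it at least `1`. -/
def curvSum (p : ℝ) (D : Set E2) (R₀ : ℝ) : ℝ≥0∞ :=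
  ∑' k, ENNReal.ofReal (wt p k) * (curvN D R₀ (kc k).arg + curvN D R₀ (Real.pi + (kc k).arg))

lemma one_le_curvSum (p : ℝ) (D : Set E2) {R₀ : ℝ} (hR : 0 ≤ R₀) : 1 ≤ curvSum p D R₀ := by
  refine le_trans ?_ (ENNReal.le_tsum 0)
  have h1 : wt p 0 = 1 := by simp [wt, lev, supn]
  rw [h1, ENNReal.ofReal_one, one_mul]
  refine le_trans ?_ le_self_add
  have h2 : (1 : ℝ≥0∞) ≤ ENNReal.ofReal (1 + R₀) := by
    rw [ENNReal.one_le_ofReal]; linarith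
  unfold curvN
  exact h2.trans le_add_self

/-- Mean square bound for the partial sums over unit windows at height `O(R)`. -/
lemma psum_window {p : ℝ} (hp : 0 < p) {r₀ R₀ : ℝ} (hr : 0 < r₀) (hR₀ : 0 < R₀) :
    ∃ C : ℝ, 0 ≤ C ∧ ∀ D : Set E2, IsDom D r₀ R₀ → ∀ R T : ℝ, 2 ≤ R → 1 ≤ T → T ≤ 4 * R → ∀ j : ℕ,
      ∫⁻ t in Ioc T (T + 1), ENNReal.ofReal (‖psum D (r₀ / (2 * Real.sqrt R)) j t‖ ^ 2) ≤
        ENNReal.ofReal (C * (R * Real.log R ^ p)) * curvSum p D R₀ := by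
  obtain ⟨C, hC0, hC⟩ := coeff_le hp hr
  set K := 150 * (4 / r₀ ^ 2 * (1 + 4 * R₀) ^ 2) * 128 * (1 + R₀ ^ 2) with hK
  have hK0 : 0 < K := by positivity
  refine ⟨4 * (K * C) + 1, by positivity, ?_⟩
  intro D hD R T hR hT hTR j
  have hlog : 0 < Real.log R := Real.log_pos (by linarith)
  have hRL : 0 < R * Real.log R ^ p := by positivity
  by_cases hfin : ∀ k, curvN D R₀ (kc k).arg ≠ ∞ ∧ curvN D R₀ (Real.pi + (kc k).arg) ≠ ∞
  swap
  · have : curvSum p D R₀ = ∞ := by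
      push Not at hfin
      obtain ⟨k, hk⟩ := hfin
      refine ENNReal.tsum_eq_top_of_eq_top ⟨k, ?_⟩
      have h1 : ENNReal.ofReal (wt p k) ≠ 0 := by simpa using wt_pos p k
      refine ENNReal.mul_eq_top.2 (Or.inl ⟨h1, ?_⟩)
      rw [ENNReal.add_eq_top]
      by_cases h : curvN D R₀ (kc k).arg = ∞
      · exact Or.inl h
      · exact Or.inr (hk h)
    rw [this, ENNReal.mul_top]
    · exact le_top
    · rw [Ne, ENNReal.ofReal_eq_zero, not_le]
      exact mul_pos (by positivity) hRL
  set δ := r₀ / (2 * Real.sqrt R) with hδ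
  have hδ0 : 0 < δ := by have : 0 < Real.sqrt R := Real.sqrt_pos.2 (by linarith)
                         positivity
  set S := (box j).erase 0 with hS
  have hS0 : ∀ k ∈ S, k ≠ 0 := fun k hk => Finset.ne_of_mem_erase hk
  have half : ∀ (σ : ℝ) (c : (Fin 2 → ℤ) → ℂ), (∀ k, ‖c k‖ = ‖kap δ k‖) →
      (∀ k, curvN D R₀ (σ + (kc k).arg) ≠ ∞) →
      ∫⁻ t in Ioc T (T + 1), ENNReal.ofReal (‖halfSum D σ c S t‖ ^ 2) ≤
        ENNReal.ofReal (K * C * (R * Real.log R ^ p)) *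
          ∑ k ∈ S, ENNReal.ofReal (wt p k) * curvN D R₀ (σ + (kc k).arg) := by
    intro σ c hc hf
    refine (hD.lintegral_halfSum_le σ c S hS0 hT (fun k _ => hf k)).trans ?_
    have e : ∑ k ∈ S, ENNReal.ofReal (wt p k) * curvN D R₀ (σ + (kc k).arg) =
        ENNReal.ofReal (∑ k ∈ S, wt p k * (curvN D R₀ (σ + (kc k).arg)).toReal) := by
      rw [ENNReal.ofReal_sum_of_nonneg
        (fun k _ => mul_nonneg (wt_pos p k).le ENNReal.toReal_nonneg)]
      refine Finset.sum_congr rfl fun k _ => ?_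
      rw [ENNReal.ofReal_mul (wt_pos p k).le, ENNReal.ofReal_toReal (hf k)]
    rw [e, ← ENNReal.ofReal_mul (by positivity)]
    refine ENNReal.ofReal_le_ofReal ?_
    rw [← hK, mul_assoc K C, mul_assoc K]
    refine mul_le_mul_of_nonneg_left ?_ hK0.le
    rw [Finset.mul_sum]
    refine Finset.sum_le_sum fun k hk => ?_
    rw [hc k]
    exact hC R T _ ‖kap δ k‖ k hR (by linarith) hTR (hD.curvN_spec (hf k)).1 (norm_nonneg _)
      (norm_kap_le hδ0 k) (hS0 k hk) (fun i => norm_kap_mul_le hδ0 k i)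
  have hX := half 0 (fun k => (starRingEnd ℂ) (kap δ k)) (fun k => RCLike.norm_conj _)
    (fun k => by rw [zero_add]; exact (hfin k).1)
  have hY := half Real.pi (kap δ) (fun k => rfl) (fun k => (hfin k).2)
  have hmeas : ∀ σ c, AEMeasurable (fun t => ENNReal.ofReal (‖halfSum D σ c S t‖ ^ 2))
      (volume.restrict (Ioc T (T + 1))) := by
    intro σ c
    have : ContinuousOn (halfSum D σ c S) (Ioc T (T + 1)) := by
      refine continuousOn_finsetSum _ fun k hk t ht => ?_
      obtain ⟨d, hd, -⟩ := hD.hasDerivAt_wave σ c (hS0 k hk) (t := t) (by linarith [ht.1])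
      exact ((continuous_osc _).continuousAt.mul hd.continuousAt).continuousWithinAt
    exact ENNReal.measurable_ofReal.comp_aemeasurable
      (((this.norm.pow 2).aemeasurable measurableSet_Ioc))
  calc ∫⁻ t in Ioc T (T + 1), ENNReal.ofReal (‖psum D δ j t‖ ^ 2)
      ≤ ∫⁻ t in Ioc T (T + 1),
          (2 * ENNReal.ofReal (‖halfSum D 0 (fun k => (starRingEnd ℂ) (kap δ k)) S t‖ ^ 2) +
          2 * ENNReal.ofReal (‖halfSum D Real.pi (kap δ) S t‖ ^ 2)) := by
        refine setLIntegral_mono' measurableSet_Ioc fun t ht => ?_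
        rw [hD.psum_eq δ j (by linarith [ht.1] : 0 < t)]
        rw [show (2 : ℝ≥0∞) = ENNReal.ofReal 2 by simp, ← ENNReal.ofReal_mul (by norm_num),
          ← ENNReal.ofReal_mul (by norm_num), ← ENNReal.ofReal_add (by positivity) (by positivity)]
        refine ENNReal.ofReal_le_ofReal ?_
        set X := halfSum D 0 (fun k => (starRingEnd ℂ) (kap δ k)) S t
        set Y := halfSum D Real.pi (kap δ) S t
        have h1 := norm_add_le X ((starRingEnd ℂ) Y)
        rw [RCLike.norm_conj] at h1
        have h2 := pow_le_pow_left₀ (norm_nonneg _) h1 2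
        nlinarith [sq_nonneg (‖X‖ - ‖Y‖)]
    _ = 2 * (∫⁻ t in Ioc T (T + 1),
          ENNReal.ofReal (‖halfSum D 0 (fun k => (starRingEnd ℂ) (kap δ k)) S t‖ ^ 2)) +
        2 * (∫⁻ t in Ioc T (T + 1), ENNReal.ofReal (‖halfSum D Real.pi (kap δ) S t‖ ^ 2)) := by
        rw [lintegral_add_left' ((hmeas _ _).const_mul _), lintegral_const_mul'' _ (hmeas _ _),
          lintegral_const_mul'' _ (hmeas _ _)]
    _ ≤ 2 * (ENNReal.ofReal (K * C * (R * Real.log R ^ p)) *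
          ∑ k ∈ S, ENNReal.ofReal (wt p k) * curvN D R₀ (0 + (kc k).arg)) +
        2 * (ENNReal.ofReal (K * C * (R * Real.log R ^ p)) *
          ∑ k ∈ S, ENNReal.ofReal (wt p k) * curvN D R₀ (Real.pi + (kc k).arg)) := by
        gcongr
    _ = 2 * ENNReal.ofReal (K * C * (R * Real.log R ^ p)) * ∑ k ∈ S, ENNReal.ofReal (wt p k) *
          (curvN D R₀ (kc k).arg + curvN D R₀ (Real.pi + (kc k).arg)) := by
        simp only [zero_add, mul_add, Finset.sum_add_distrib, mul_assoc]
    _ ≤ ENNReal.ofReal ((4 * (K * C) + 1) * (R * Real.log R ^ p)) * curvSum p D R₀ := by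
        gcongr
        · rw [show (2 : ℝ≥0∞) = ENNReal.ofReal 2 by simp, ← ENNReal.ofReal_mul (by norm_num)]
          refine ENNReal.ofReal_le_ofReal ?_
          have : 0 ≤ K * C * (R * Real.log R ^ p) := by positivity
          nlinarith
        · exact ENNReal.sum_le_tsum S

/-! ### The mean square discrepancy of one domain -/

/-- Intervals of length `h ≥ 1` are covered by at most `2h` unit windows. -/
lemma psum_interval {p : ℝ} (hp : 0 < p) {r₀ R₀ : ℝ} (hr : 0 < r₀) (hR₀ : 0 < R₀) :
    ∃ C : ℝ, 0 ≤ C ∧ ∀ D : Set E2, IsDom D r₀ R₀ → ∀ R T h : ℝ, 2 ≤ R → 1 ≤ T → 1 ≤ h →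
      T + h ≤ 4 * R → ∀ j : ℕ,
      ∫⁻ t in Ioc T (T + h), ENNReal.ofReal (‖psum D (r₀ / (2 * Real.sqrt R)) j t‖ ^ 2) ≤
        ENNReal.ofReal (h * (C * (R * Real.log R ^ p))) * curvSum p D R₀ := by
  obtain ⟨C, hC0, hC⟩ := psum_window hp hr hR₀
  refine ⟨2 * C, by positivity, ?_⟩
  intro D hD R T h hR hT hh hTh j
  have hlog : 0 < Real.log R := Real.log_pos (by linarith)
  have hsub : Ioc T (T + h) ⊆ ⋃ i : Fin ⌈h⌉₊, Ioc (T + (i : ℕ)) (T + (i : ℕ) + 1) := by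
    intro t ht
    have h1 : 0 < ⌈t - T⌉₊ := Nat.ceil_pos.2 (by linarith [ht.1])
    have h2 : t - T ≤ ⌈t - T⌉₊ := Nat.le_ceil _
    have h3 : (⌈t - T⌉₊ : ℝ) < t - T + 1 := Nat.ceil_lt_add_one (by linarith [ht.1])
    have h4 : ⌈t - T⌉₊ ≤ ⌈h⌉₊ := Nat.ceil_le_ceil (by linarith [ht.2])
    obtain ⟨i, hi⟩ : ∃ i, ⌈t - T⌉₊ = i + 1 := ⟨⌈t - T⌉₊ - 1, by omega⟩
    rw [hi] at h2 h3 h4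
    push_cast at h2 h3
    refine mem_iUnion.2 ⟨⟨i, by omega⟩, ?_, ?_⟩ <;>
      (dsimp only; linarith)
  set f := fun t => ENNReal.ofReal (‖psum D (r₀ / (2 * Real.sqrt R)) j t‖ ^ 2) with hf
  calc ∫⁻ t in Ioc T (T + h), f t
      ≤ ∫⁻ t in ⋃ i : Fin ⌈h⌉₊, Ioc (T + (i : ℕ)) (T + (i : ℕ) + 1), f t := lintegral_mono_set hsub
    _ ≤ ∑ i : Fin ⌈h⌉₊, ∫⁻ t in Ioc (T + (i : ℕ)) (T + (i : ℕ) + 1), f t := by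
        rw [← tsum_fintype (L := .unconditional _)]
        exact lintegral_iUnion_le _ _
    _ ≤ ∑ i : Fin ⌈h⌉₊, ENNReal.ofReal (C * (R * Real.log R ^ p)) * curvSum p D R₀ := by
        refine Finset.sum_le_sum fun i _ => ?_
        have hi : ((i : ℕ) : ℝ) < h := Nat.lt_ceil.1 i.2
        exact hC D hD R (T + (i : ℕ)) hR (by linarith [Nat.cast_nonneg (α := ℝ) (i : ℕ)]) (by linarith) j
    _ = ENNReal.ofReal (⌈h⌉₊ * (C * (R * Real.log R ^ p))) * curvSum p D R₀ := by
        rw [Finset.sum_const, Finset.card_univ, Fintype.card_fin, nsmul_eq_mul, ← mul_assoc,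
          ENNReal.ofReal_mul (Nat.cast_nonneg _), ENNReal.ofReal_natCast]
    _ ≤ _ := by
        refine mul_le_mul_left (ENNReal.ofReal_le_ofReal ?_) _
        have : (⌈h⌉₊ : ℝ) < h + 1 := Nat.ceil_lt_add_one (by linarith)
        have h2 : (⌈h⌉₊ : ℝ) ≤ 2 * h := by linarith
        calc (⌈h⌉₊ : ℝ) * (C * (R * Real.log R ^ p)) ≤ 2 * h * (C * (R * Real.log R ^ p)) := by
              gcongr
          _ = _ := by ring

lemma lintegral_shift (f : ℝ → ℝ≥0∞) (a b c : ℝ) :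
    ∫⁻ t in Ioc a b, f (t + c) = ∫⁻ t in Ioc (a + c) (b + c), f t := by
  have h := (measurePreserving_add_right volume c).setLIntegral_comp_preimage_emb
    (measurableEmbedding_addRight c) f (Ioc (a + c) (b + c))
  rw [← h]
  simp

lemma ofReal_integral_le {s : Set ℝ} {f : ℝ → ℝ} (hf : ∀ t, 0 ≤ f t) :
    ENNReal.ofReal (∫ t in s, f t) ≤ ∫⁻ t in s, ENNReal.ofReal (f t) := by
  by_cases h : IntegrableOn f s
  · exact (ofReal_integral_eq_lintegral_ofReal h (Filter.Eventually.of_forall hf)).le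
  · rw [integral_undef h]; simp

/-- The mean square discrepancy of a domain in terms of its curvature sum. The count is smoothed
at scale `R^{-1/2}`. -/
lemma meanSquare_le {p : ℝ} (hp : 0 < p) {r₀ R₀ : ℝ} (hr : 0 < r₀) (hr1 : r₀ ≤ 1) (hR₀ : 0 < R₀) :
    ∃ C : ℝ, 0 ≤ C ∧ ∀ D : Set E2, IsDom D r₀ R₀ → ∀ R h : ℝ, 2 ≤ R → 1 ≤ h → h ≤ R →
      ENNReal.ofReal (meanSquare D R h ^ 2) ≤
        ENNReal.ofReal (C * (R * Real.log R ^ p)) * curvSum p D R₀ := by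
  obtain ⟨C, hC0, hC⟩ := psum_interval hp hr hR₀
  refine ⟨3 * (C + C + 400 * R₀ ^ 4 * 2 ^ p), by positivity, ?_⟩
  intro D hD R h hR hh hhR
  have hlog2 : (0.6931471803 : ℝ) < Real.log 2 := Real.log_two_gt_d9
  have hlogR : Real.log 2 ≤ Real.log R := Real.log_le_log (by norm_num) hR
  have hL0 : 0 < Real.log R := by linarith
  have hL2 : 1 ≤ 2 ^ p * Real.log R ^ p := by
    rw [← Real.mul_rpow (by norm_num) hL0.le]
    exact Real.one_le_rpow (by linarith) hp.le
  have hs2 : Real.sqrt R ^ 2 = R := Real.sq_sqrt (by linarith)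
  have hs1 : 1 < Real.sqrt R := by rw [Real.lt_sqrt (by norm_num)]; linarith
  set δ := r₀ / (2 * Real.sqrt R) with hδ
  set η := 1 / Real.sqrt R with hη
  have hδ0 : 0 < δ := by positivity
  have hη0 : 0 < η := by positivity
  have hη1 : η < 1 := by rw [hη, div_lt_one (by positivity)]; exact hs1
  have hδη : 2 * δ = η * r₀ := by rw [hδ, hη]; field_simp
  have hδ1 : δ ≤ 1 := by nlinarith
  have hsη : Real.sqrt R * η = 1 := by rw [hη]; field_simp
  have hA := fun j => hC D hD R (R + η) h hR (by linarith) hh (by linarith) j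
  have hB := fun j => hC D hD R (R - η) h hR (by linarith) hh (by linarith) j
  set X := ENNReal.ofReal (h * (C * (R * Real.log R ^ p))) * curvSum p D R₀ with hX
  set P : ℕ → ℝ → ℝ≥0∞ := fun j t => ENNReal.ofReal (‖psum D δ j t‖ ^ 2) with hP
  set Q : ℕ → ℝ → ℝ≥0∞ := fun j t =>
    3 * (P j (t + η) + P j (t - η) + ENNReal.ofReal (400 * R₀ ^ 4 * R)) with hQ
  have hmP : ∀ j c, -R ≤ c → AEMeasurable (fun t => P j (t + c)) (volume.restrict (Ioc R (R + h))) := by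
    intro j c hc
    have h1 : ContinuousOn (fun t => psum D δ j (t + c)) (Ioc R (R + h)) :=
      (hD.continuousOn_psum δ j).comp (by fun_prop) fun t ht => by
        show 0 < t + c
        linarith [ht.1]
    exact ENNReal.measurable_ofReal.comp_aemeasurable ((h1.norm.pow 2).aemeasurable measurableSet_Ioc)
  have hmP1 := fun j => hmP j η (by linarith)
  have hmP2 := fun j => hmP j (-η) (by linarith)
  have hmQ : ∀ j, AEMeasurable (Q j) (volume.restrict (Ioc R (R + h))) := fun j =>
    (((hmP1 j).add (hmP2 j)).add_const _).const_mul _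
  have hpt : ∀ t ∈ Ioc R (R + h),
      ENNReal.ofReal (latticeRest D t ^ 2) ≤ Filter.liminf (fun j => Q j t) Filter.atTop := by
    intro t ht
    obtain ⟨p₁, p₂, h1, h2, h3⟩ := hD.sandwich hδ0 hδ1 hη0 hδη.le (by linarith [ht.1] : η < t)
    have hlim : ∀ {u : ℝ} {q : ℂ}, Filter.Tendsto (fun j => psum D δ j u) Filter.atTop (nhds q) →
        Filter.Tendsto (fun j => P j u) Filter.atTop (nhds (ENNReal.ofReal (‖q‖ ^ 2))) :=
      fun hq => ENNReal.tendsto_ofReal ((hq.norm).pow 2)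
    have hQt : Filter.Tendsto (fun j => Q j t) Filter.atTop (nhds (3 * (ENNReal.ofReal (‖p₁‖ ^ 2) +
        ENNReal.ofReal (‖p₂‖ ^ 2) + ENNReal.ofReal (400 * R₀ ^ 4 * R)))) :=
      ENNReal.Tendsto.const_mul (((hlim h1).add (hlim h2)).add tendsto_const_nhds)
        (Or.inr (by simp))
    rw [hQt.liminf_eq]
    rw [show (3 : ℝ≥0∞) = ENNReal.ofReal 3 by simp, ← ENNReal.ofReal_add (by positivity) (by positivity),
      ← ENNReal.ofReal_add (by positivity) (by positivity), ← ENNReal.ofReal_mul (by norm_num)]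
    refine ENNReal.ofReal_le_ofReal (h3.trans ?_)
    have ht2 : t ≤ 2 * R := by linarith [ht.2]
    have ht0 : 0 ≤ t := by linarith [ht.1]
    have h5 : 2 * t * η + η ^ 2 ≤ 5 * Real.sqrt R := by
      have : t * η ≤ 2 * Real.sqrt R := by
        calc t * η ≤ 2 * R * η := by gcongr
          _ = 2 * Real.sqrt R * (Real.sqrt R * η) := by rw [← hs2]; simp; ring
          _ = 2 * Real.sqrt R := by rw [hsη, mul_one]
      nlinarith
    have h6 : ((2 * t * η + η ^ 2) * (4 * R₀ ^ 2)) ^ 2 ≤ 400 * R₀ ^ 4 * R := by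
      calc ((2 * t * η + η ^ 2) * (4 * R₀ ^ 2)) ^ 2 ≤ (5 * Real.sqrt R * (4 * R₀ ^ 2)) ^ 2 := by
            gcongr
        _ = 400 * R₀ ^ 4 * Real.sqrt R ^ 2 := by ring
        _ = _ := by rw [hs2]
    linarith
  have hQint : ∀ j, ∫⁻ t in Ioc R (R + h), Q j t ≤
      ENNReal.ofReal (h * (3 * (C + C + 400 * R₀ ^ 4 * 2 ^ p) * (R * Real.log R ^ p))) *
        curvSum p D R₀ := by
    intro j
    have e1 : ∫⁻ t in Ioc R (R + h), P j (t + η) ≤ X := by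
      rw [lintegral_shift]
      have := hA j
      rwa [show R + η + h = R + h + η by ring] at this
    have e2 : ∫⁻ t in Ioc R (R + h), P j (t - η) ≤ X := by
      simp only [sub_eq_add_neg]
      rw [lintegral_shift]
      have := hB j
      rwa [show R - η + h = R + h + -η by ring, sub_eq_add_neg] at this
    have e3 : ∫⁻ t in Ioc R (R + h), ENNReal.ofReal (400 * R₀ ^ 4 * R) ≤
        ENNReal.ofReal (h * (400 * R₀ ^ 4 * 2 ^ p * (R * Real.log R ^ p))) * curvSum p D R₀ := by
      rw [setLIntegral_const, Real.volume_Ioc, show R + h - R = h by ring, mul_comm,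
        ← ENNReal.ofReal_mul (by linarith)]
      refine le_trans (ENNReal.ofReal_le_ofReal ?_)
        (le_mul_of_one_le_right zero_le (one_le_curvSum p D hR₀.le))
      refine mul_le_mul_of_nonneg_left ?_ (by linarith)
      calc 400 * R₀ ^ 4 * R ≤ 400 * R₀ ^ 4 * R * (2 ^ p * Real.log R ^ p) :=
            le_mul_of_one_le_right (by positivity) hL2
        _ = _ := by ring
    calc ∫⁻ t in Ioc R (R + h), Q j t
        = 3 * ((∫⁻ t in Ioc R (R + h), P j (t + η)) + (∫⁻ t in Ioc R (R + h), P j (t - η)) +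
            (∫⁻ t in Ioc R (R + h), ENNReal.ofReal (400 * R₀ ^ 4 * R))) := by
          have g1 := lintegral_const_mul'' 3 (((hmP1 j).add (hmP2 j)).add_const
            (ENNReal.ofReal (400 * R₀ ^ 4 * R)))
          have g2 := lintegral_add_left' ((hmP1 j).add (hmP2 j))
            (fun _ => ENNReal.ofReal (400 * R₀ ^ 4 * R))
          have g3 := lintegral_add_left' (hmP1 j) (fun t => P j (t + -η))
          simp only [Pi.add_apply, ← sub_eq_add_neg] at g1 g2 g3
          rw [← g3, ← g2, ← g1]
      _ ≤ 3 * (X + X + ENNReal.ofReal (h * (400 * R₀ ^ 4 * 2 ^ p * (R * Real.log R ^ p))) *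
            curvSum p D R₀) := by gcongr
      _ = _ := by
          rw [hX, ← add_mul, ← add_mul, ← mul_assoc, show (3 : ℝ≥0∞) = ENNReal.ofReal 3 by simp,
            ← ENNReal.ofReal_add (by positivity) (by positivity),
            ← ENNReal.ofReal_add (by positivity) (by positivity), ← ENNReal.ofReal_mul (by norm_num)]
          congr 2
          ring
  have hI : ENNReal.ofReal (∫ t in R..(R + h), latticeRest D t ^ 2) ≤
      ENNReal.ofReal (h * (3 * (C + C + 400 * R₀ ^ 4 * 2 ^ p) * (R * Real.log R ^ p))) *
        curvSum p D R₀ := by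
    rw [intervalIntegral.integral_of_le (by linarith)]
    refine (ofReal_integral_le fun t => sq_nonneg _).trans ?_
    refine (setLIntegral_mono' measurableSet_Ioc hpt).trans ?_
    refine (lintegral_liminf_le' hmQ).trans ?_
    refine (Filter.liminf_le_liminf (Filter.Eventually.of_forall hQint)).trans ?_
    simp
  rw [meanSquare, Real.sq_sqrt (mul_nonneg (by positivity)
    (intervalIntegral.integral_nonneg (by linarith) fun t _ => sq_nonneg _)),
    ENNReal.ofReal_mul (by positivity)]
  refine (mul_le_mul_right hI _).trans ?_
  rw [← mul_assoc, ← ENNReal.ofReal_mul (by positivity)]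
  refine le_of_eq ?_
  congr 2
  field_simp

/-! ### Rotations -/

lemma rot_zero' (ϑ : ℝ) (x : E2) : rot ϑ x 0 = Real.cos ϑ * x 0 - Real.sin ϑ * x 1 := rfl
lemma rot_one' (ϑ : ℝ) (x : E2) : rot ϑ x 1 = Real.sin ϑ * x 0 + Real.cos ϑ * x 1 := rfl

lemma rot_rot_neg (ϑ : ℝ) (x : E2) : rot ϑ (rot (-ϑ) x) = x := by
  have h := Real.sin_sq_add_cos_sq ϑ
  ext i
  fin_cases i
  · show rot ϑ (rot (-ϑ) x) 0 = x 0
    simp only [rot_zero', rot_one', Real.cos_neg, Real.sin_neg]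
    linear_combination (x 0) * h
  · show rot ϑ (rot (-ϑ) x) 1 = x 1
    simp only [rot_zero', rot_one', Real.cos_neg, Real.sin_neg]
    linear_combination (x 1) * h

lemma norm_rot (ϑ : ℝ) (x : E2) : ‖rot ϑ x‖ = ‖x‖ := by
  have h := Real.sin_sq_add_cos_sq ϑ
  rw [EuclideanSpace.norm_eq, EuclideanSpace.norm_eq]
  congr 1
  simp only [Fin.sum_univ_two, rot_zero', rot_one', Real.norm_eq_abs, sq_abs]
  linear_combination (x 0 ^ 2 + x 1 ^ 2) * h

lemma rot_image (ϑ : ℝ) (Ω : Set E2) : rot ϑ '' Ω = rot (-ϑ) ⁻¹' Ω := by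
  refine image_eq_preimage_of_inverse ?_ ?_ ▸ rfl
  · intro x
    have := rot_rot_neg (-ϑ) x
    rwa [neg_neg] at this
  · exact rot_rot_neg ϑ

lemma isLinearMap_rot (ϑ : ℝ) : IsLinearMap ℝ (rot ϑ) where
  map_add x y := by
    ext i
    fin_cases i
    · show rot ϑ (x + y) 0 = rot ϑ x 0 + rot ϑ y 0
      simp only [rot_zero', PiLp.add_apply]; ring
    · show rot ϑ (x + y) 1 = rot ϑ x 1 + rot ϑ y 1
      simp only [rot_one', PiLp.add_apply]; ring
  map_smul c x := by
    ext i
    fin_cases i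
    · show rot ϑ (c • x) 0 = c * rot ϑ x 0
      simp only [rot_zero', PiLp.smul_apply, smul_eq_mul]; ring
    · show rot ϑ (c • x) 1 = c * rot ϑ x 1
      simp only [rot_one', PiLp.smul_apply, smul_eq_mul]; ring

lemma continuous_rot (ϑ : ℝ) : Continuous (rot ϑ) :=
  ((isLinearMap_rot ϑ).mk' _).continuous_of_finiteDimensional

lemma IsDom.rotated {Ω : Set E2} {r₀ R₀ : ℝ} (h : IsDom Ω r₀ R₀) (ϑ : ℝ) :
    IsDom (rot ϑ '' Ω) r₀ R₀ where
  conv := h.conv.is_linear_image (isLinearMap_rot ϑ)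
  opn := by rw [rot_image]; exact h.opn.preimage (continuous_rot _)
  r_pos := h.r_pos
  ball_sub := by
    rw [rot_image]
    intro x hx
    refine h.ball_sub ?_
    rw [mem_ball_zero_iff] at hx ⊢
    rwa [norm_rot]
  norm_le := by
    rintro _ ⟨x, hx, rfl⟩
    rw [norm_rot]
    exact h.norm_le x hx

lemma hgt_rot (Ω : Set E2) (ϑ φ : ℝ) : hgt (rot ϑ '' Ω) φ = hgt Ω (φ - ϑ) := by
  have : turned (rot ϑ '' Ω) φ = turned Ω (φ - ϑ) := by
    unfold turned
    rw [rot_image, ← preimage_comp]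
    congr 1
    funext p
    ext i
    fin_cases i
    · show rot (-ϑ) (frame φ p) 0 = frame (φ - ϑ) p 0
      simp only [rot_zero', frame_zero, frame_one, Real.cos_sub, Real.sin_sub, Real.cos_neg,
        Real.sin_neg]
      ring
    · show rot (-ϑ) (frame φ p) 1 = frame (φ - ϑ) p 1
      simp only [rot_one', frame_zero, frame_one, Real.cos_sub, Real.sin_sub, Real.cos_neg,
        Real.sin_neg]
      ring
  rw [hgt, hgt, this]

lemma curvN_rot (Ω : Set E2) (R₀ ϑ φ : ℝ) : curvN (rot ϑ '' Ω) R₀ φ = curvN Ω R₀ (φ - ϑ) := by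
  unfold curvN curvMax
  simp only [hgt_rot]
  congr! 8 <;> ring

/-! ### Summing functions of weak type -/

/-- A truncated value is bounded by its dyadic layers. -/
lemma min_le_dyadic {a : ℝ} (ha : 0 < a) (x : ℝ≥0∞) (n : ℕ) :
    min x (ENNReal.ofReal (a * 2 ^ n)) ≤ ENNReal.ofReal a +
      ∑ i ∈ Finset.range n, if ENNReal.ofReal (a * 2 ^ i) < x then ENNReal.ofReal (a * 2 ^ i) else 0 := by
  induction n with
  | zero => simp
  | succ n ih =>
    rw [Finset.sum_range_succ, ← add_assoc]
    refine le_trans ?_ (add_le_add_left ih _)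
    split_ifs with h
    · rw [min_eq_right h.le, ← ENNReal.ofReal_add (by positivity) (by positivity)]
      refine (min_le_right _ _).trans (ENNReal.ofReal_le_ofReal (le_of_eq (by ring)))
    · rw [min_eq_left (not_lt.1 h), add_zero]
      exact min_le_left _ _

/-- Stein and Weiss: a weighted sum of functions uniformly of weak type `L¹` is of weak type `L¹`
as soon as the weights are summable against the logarithms of their inverses. -/
lemma stein_weiss {ι : Type*} [Countable ι] {w : ι → ℝ} {n : ι → ℕ} (hw : ∀ k, 0 < w k)
    {W M V : ℝ} (hW0 : 0 < W) (hM0 : 0 ≤ M) (hV0 : 0 ≤ V)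
    (hW : ∑' k, ENNReal.ofReal (w k) ≤ ENNReal.ofReal W)
    (hM : ∑' k, ENNReal.ofReal (w k * n k) ≤ ENNReal.ofReal M)
    (hn : ∀ k, 2 * W / w k ≤ 2 ^ n k) {f : ι → ℝ → ℝ≥0∞} (hf : ∀ k, Measurable (f k)) {I : Set ℝ}
    (hV : ∀ k, ∀ s : ℝ, 0 < s →
      volume {ϑ ∈ I | ENNReal.ofReal s < f k ϑ} ≤ ENNReal.ofReal (V / s))
    {s : ℝ} (hs : 0 < s) :
    volume {ϑ ∈ I | ENNReal.ofReal s < ∑' k, ENNReal.ofReal (w k) * f k ϑ} ≤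
      ENNReal.ofReal ((V * W + 2 * (V * M)) / s) := by
  set a := s / (2 * W) with ha
  have ha0 : 0 < a := by positivity
  set G : ι → ℝ → ℝ≥0∞ := fun k ϑ => ∑ i ∈ Finset.range (n k),
    if ENNReal.ofReal (a * 2 ^ i) < f k ϑ then ENNReal.ofReal (a * 2 ^ i) else 0 with hG
  have hms : ∀ k (c : ℝ≥0∞), MeasurableSet {ϑ | c < f k ϑ} := fun k c =>
    measurableSet_lt measurable_const (hf k)
  have hmG : ∀ k, Measurable (G k) := fun k =>
    Finset.measurable_fun_sum _ fun i _ => Measurable.ite (hms k _) measurable_const measurable_const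
  set H : ℝ → ℝ≥0∞ := fun ϑ => ∑' k, ENNReal.ofReal (w k) * G k ϑ with hH
  have hmH : Measurable H := Measurable.tsum fun k => (hmG k).const_mul _
  have hsub : {ϑ ∈ I | ENNReal.ofReal s < ∑' k, ENNReal.ofReal (w k) * f k ϑ} ⊆
      (⋃ k, {ϑ ∈ I | ENNReal.ofReal (s / w k) < f k ϑ}) ∪
        ({ϑ | ENNReal.ofReal (s / 2) ≤ H ϑ} ∩ I) := by
    rintro ϑ ⟨hϑ, hlt⟩
    by_cases hB : ∃ k, ENNReal.ofReal (s / w k) < f k ϑ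
    · obtain ⟨k, hk⟩ := hB
      exact Or.inl (mem_iUnion.2 ⟨k, hϑ, hk⟩)
    · push Not at hB
      refine Or.inr ⟨?_, hϑ⟩
      show ENNReal.ofReal (s / 2) ≤ H ϑ
      have h1 : ∑' k, ENNReal.ofReal (w k) * f k ϑ ≤ ENNReal.ofReal (s / 2) + H ϑ := by
        calc ∑' k, ENNReal.ofReal (w k) * f k ϑ
            ≤ ∑' k, ENNReal.ofReal (w k) * (ENNReal.ofReal a + G k ϑ) := by
              refine ENNReal.tsum_le_tsum fun k => ?_
              refine mul_le_mul_right (le_trans ?_ (min_le_dyadic ha0 (f k ϑ) (n k))) _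
              refine le_min le_rfl ((hB k).trans (ENNReal.ofReal_le_ofReal ?_))
              calc s / w k = a * (2 * W / w k) := by rw [ha]; field_simp
                _ ≤ a * 2 ^ n k := by gcongr; exact hn k
          _ = (∑' k, ENNReal.ofReal (w k)) * ENNReal.ofReal a + H ϑ := by
              simp only [mul_add]
              rw [ENNReal.tsum_add, ENNReal.tsum_mul_right]
          _ ≤ ENNReal.ofReal W * ENNReal.ofReal a + H ϑ := by gcongr
          _ = ENNReal.ofReal (s / 2) + H ϑ := by
              rw [← ENNReal.ofReal_mul hW0.le, ha]
              congr 2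
              field_simp
      have h2 : ENNReal.ofReal s = ENNReal.ofReal (s / 2) + ENNReal.ofReal (s / 2) := by
        rw [← ENNReal.ofReal_add (by positivity) (by positivity), add_halves]
      have h3 := hlt.le.trans h1
      rw [h2] at h3
      exact (ENNReal.add_le_add_iff_left ENNReal.ofReal_ne_top).1 h3
  have m1 : volume (⋃ k, {ϑ ∈ I | ENNReal.ofReal (s / w k) < f k ϑ}) ≤ ENNReal.ofReal (V * W / s) := by
    refine (measure_iUnion_le _).trans ?_
    calc ∑' k, volume {ϑ ∈ I | ENNReal.ofReal (s / w k) < f k ϑ}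
        ≤ ∑' k, ENNReal.ofReal (V / s) * ENNReal.ofReal (w k) := by
          refine ENNReal.tsum_le_tsum fun k => (hV k _ (div_pos hs (hw k))).trans (le_of_eq ?_)
          rw [← ENNReal.ofReal_mul (by positivity)]
          congr 1
          have := hw k
          field_simp
      _ ≤ ENNReal.ofReal (V / s) * ENNReal.ofReal W := by
          rw [ENNReal.tsum_mul_left]; gcongr
      _ = _ := by rw [← ENNReal.ofReal_mul (by positivity)]; congr 1; ring
  have hIG : ∀ k, ∫⁻ ϑ in I, G k ϑ ≤ ENNReal.ofReal (n k * V) := by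
    intro k
    rw [hG]
    simp only
    rw [lintegral_finsetSum _ fun i _ => Measurable.ite (hms k _) measurable_const measurable_const]
    calc ∑ i ∈ Finset.range (n k), ∫⁻ ϑ in I,
          (if ENNReal.ofReal (a * 2 ^ i) < f k ϑ then ENNReal.ofReal (a * 2 ^ i) else 0)
        ≤ ∑ i ∈ Finset.range (n k), ENNReal.ofReal V := by
          refine Finset.sum_le_sum fun i _ => ?_
          have e : (fun ϑ => if ENNReal.ofReal (a * 2 ^ i) < f k ϑ then ENNReal.ofReal (a * 2 ^ i) else 0)
              = {ϑ | ENNReal.ofReal (a * 2 ^ i) < f k ϑ}.indicator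
                fun _ => ENNReal.ofReal (a * 2 ^ i) := by
            ext ϑ; simp [indicator]
          rw [e, lintegral_indicator_const (hms k _), Measure.restrict_apply (hms k _)]
          have := hV k (a * 2 ^ i) (by positivity)
          rw [show {ϑ | ENNReal.ofReal (a * 2 ^ i) < f k ϑ} ∩ I =
            {ϑ ∈ I | ENNReal.ofReal (a * 2 ^ i) < f k ϑ} by ext; simp [and_comm]]
          refine (mul_le_mul_right this _).trans (le_of_eq ?_)
          rw [← ENNReal.ofReal_mul (by positivity)]
          congr 1
          field_simp
      _ = _ := by
          rw [Finset.sum_const, Finset.card_range, nsmul_eq_mul,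
            ENNReal.ofReal_mul (Nat.cast_nonneg _), ENNReal.ofReal_natCast]
  have hIH : ∫⁻ ϑ in I, H ϑ ≤ ENNReal.ofReal (V * M) := by
    rw [hH]
    simp only
    rw [lintegral_tsum fun k => ((hmG k).const_mul _).aemeasurable]
    calc ∑' k, ∫⁻ ϑ in I, ENNReal.ofReal (w k) * G k ϑ
        ≤ ∑' k, ENNReal.ofReal V * ENNReal.ofReal (w k * n k) := by
          refine ENNReal.tsum_le_tsum fun k => ?_
          rw [lintegral_const_mul _ (hmG k)]
          refine (mul_le_mul_right (hIG k) _).trans (le_of_eq ?_)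
          rw [← ENNReal.ofReal_mul (hw k).le, ← ENNReal.ofReal_mul hV0]
          congr 1
          ring
      _ ≤ _ := by
          rw [ENNReal.tsum_mul_left, ENNReal.ofReal_mul hV0]; gcongr
  have m2 : volume ({ϑ | ENNReal.ofReal (s / 2) ≤ H ϑ} ∩ I) ≤ ENNReal.ofReal (2 * (V * M) / s) := by
    have h1 := mul_meas_ge_le_lintegral (μ := volume.restrict I) hmH (ENNReal.ofReal (s / 2))
    rw [Measure.restrict_apply (measurableSet_le measurable_const hmH)] at h1
    have h2 := h1.trans hIH
    rw [mul_comm, ← ENNReal.le_div_iff_mul_le (Or.inl (by simpa using hs))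
      (Or.inl ENNReal.ofReal_ne_top), ← ENNReal.ofReal_div_of_pos (by positivity)] at h2
    refine h2.trans (le_of_eq ?_)
    congr 1
    field_simp
  refine (measure_mono hsub).trans ((measure_union_le _ _).trans ((add_le_add m1 m2).trans ?_))
  rw [← ENNReal.ofReal_add (by positivity) (by positivity), add_div]

/-- There are at most `25 · 4^m` lattice vectors of dyadic level `m`. -/
lemma tsum_lev_le (F : ℕ → ℝ≥0∞) : ∑' k, F (lev k) ≤ ∑' m : ℕ, 25 * 4 ^ m * F m := by
  have h1 : ∀ k, F (lev k) = ∑' m, if m = lev k then F m else 0 := fun k => by rw [tsum_ite_eq]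
  simp only [h1]
  rw [ENNReal.tsum_comm]
  refine ENNReal.tsum_le_tsum fun m => ?_
  have h2 : ∀ k ∉ box (2 ^ (m + 1)), (if m = lev k then F m else 0) = 0 := by
    intro k hk
    refine if_neg fun hm => hk ?_
    have h3 : supn k < 2 ^ (m + 1) := by
      rw [hm]; exact Nat.lt_pow_succ_log_self (by norm_num) _
    rw [mem_box]
    have h4 : (k 0).natAbs ≤ supn k := le_max_left _ _
    have h5 : (k 1).natAbs ≤ supn k := le_max_right _ _
    intro i
    fin_cases i
    · show |k 0| ≤ _
      zify at h3 h4
      exact_mod_cast (h4.trans h3.le)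
    · show |k 1| ≤ _
      zify at h3 h5
      exact_mod_cast (h5.trans h3.le)
  rw [tsum_eq_sum h2]
  calc ∑ k ∈ box (2 ^ (m + 1)), (if m = lev k then F m else 0)
      ≤ ∑ k ∈ box (2 ^ (m + 1)), F m := Finset.sum_le_sum fun k _ => by split_ifs <;> simp
    _ = ((2 * 2 ^ (m + 1) + 1) ^ 2 : ℕ) * F m := by
        rw [Finset.sum_const, nsmul_eq_mul]
        congr 2
        rw [box, Fintype.card_piFinset]
        simp only [Int.card_Icc, Finset.prod_const, Finset.card_univ, Fintype.card_fin]
        generalize 2 ^ (m + 1) = q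
        congr 1
        omega
    _ ≤ ((25 * 4 ^ m : ℕ) : ℝ≥0∞) * F m := by
        refine mul_le_mul_left (Nat.cast_le.2 ?_) _
        have h6 : 1 ≤ (2 : ℕ) ^ m := Nat.one_le_two_pow
        have h7 : (4 : ℕ) ^ m = 2 ^ m * 2 ^ m := by rw [← mul_pow]; norm_num
        rw [h7, pow_succ 2 m]
        generalize (2 : ℕ) ^ m = q at *
        nlinarith [Nat.mul_le_mul h6 h6, Nat.mul_le_mul_right q h6]
    _ = _ := by push_cast; rfl

/-- The entropy condition `∑ w_k log (1 / w_k) < ∞` for the dyadic weights; `log (1 / w_k)` is of the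
order of the level of `k`. -/
lemma sum_wt {p : ℝ} (hp : 2 < p) : ∃ S : ℝ, 0 ≤ S ∧
    ∑' k, ENNReal.ofReal (wt p k * ((lev k : ℝ) + 1)) ≤ ENNReal.ofReal S := by
  have hs : Summable fun m : ℕ => 25 * ((m + 1 : ℕ) : ℝ) ^ (1 - p) :=
    ((summable_nat_add_iff 1).2 (Real.summable_nat_rpow.2 (by linarith))).mul_left 25
  refine ⟨∑' m : ℕ, 25 * ((m + 1 : ℕ) : ℝ) ^ (1 - p), tsum_nonneg fun m => by positivity, ?_⟩
  refine (tsum_lev_le fun m => ENNReal.ofReal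
    (((4 : ℝ) ^ m * ((m : ℝ) + 1) ^ p)⁻¹ * ((m : ℝ) + 1))).trans ?_
  rw [ENNReal.ofReal_tsum_of_nonneg (fun m => by positivity) hs]
  refine ENNReal.tsum_le_tsum fun m => le_of_eq ?_
  rw [show (25 * 4 ^ m : ℝ≥0∞) = ENNReal.ofReal (25 * 4 ^ m) by
    rw [ENNReal.ofReal_mul (by norm_num), ENNReal.ofReal_pow (by norm_num)]; simp,
    ← ENNReal.ofReal_mul (by positivity)]
  congr 1
  have hm : (0 : ℝ) < (m : ℝ) + 1 := by positivity
  push_cast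
  rw [Real.rpow_sub hm, Real.rpow_one]
  have : (0 : ℝ) < ((m : ℝ) + 1) ^ p := by positivity
  field_simp

/-- The weighted sums relevant for the lattice point problem are of weak type `L¹`. -/
lemma weak_sum {p : ℝ} (hp : 2 < p) {V : ℝ} (hV0 : 0 ≤ V) : ∃ B : ℝ, 0 ≤ B ∧
    ∀ (f : (Fin 2 → ℤ) → ℝ → ℝ≥0∞) (I : Set ℝ), (∀ k, Measurable (f k)) →
      (∀ k, ∀ s : ℝ, 0 < s →
        volume {ϑ ∈ I | ENNReal.ofReal s < f k ϑ} ≤ ENNReal.ofReal (V / s)) →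
      ∀ s : ℝ, 0 < s →
        volume {ϑ ∈ I | ENNReal.ofReal s < ∑' k, ENNReal.ofReal (wt p k) * f k ϑ} ≤
          ENNReal.ofReal (B / s) := by
  obtain ⟨S, hS0, hS⟩ := sum_wt hp
  obtain ⟨C, hC0, hC⟩ := exists_rpow_le p
  obtain ⟨n₀, hn₀⟩ := pow_unbounded_of_one_lt (2 * (S + 1) * C) (one_lt_two (α := ℝ))
  refine ⟨V * (S + 1) + 2 * (V * ((n₀ + 3) * S)), by positivity, ?_⟩
  intro f I hf hV s hs
  refine stein_weiss (n := fun k => n₀ + 3 * lev k) (wt_pos p) (by positivity) (by positivity) hV0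
    ?_ ?_ ?_ hf hV hs
  · refine le_trans (ENNReal.tsum_le_tsum fun k => ENNReal.ofReal_le_ofReal ?_)
      (hS.trans (ENNReal.ofReal_le_ofReal (by linarith)))
    exact le_mul_of_one_le_right (wt_pos p k).le (by linarith [Nat.cast_nonneg (α := ℝ) (lev k)])
  · calc ∑' k, ENNReal.ofReal (wt p k * ((n₀ + 3 * lev k : ℕ) : ℝ))
        ≤ ∑' k, ENNReal.ofReal (n₀ + 3) * ENNReal.ofReal (wt p k * ((lev k : ℝ) + 1)) := by
          refine ENNReal.tsum_le_tsum fun k => ?_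
          rw [← ENNReal.ofReal_mul (by positivity)]
          refine ENNReal.ofReal_le_ofReal ?_
          have := wt_pos p k
          push_cast
          have h : (n₀ : ℝ) + 3 * lev k ≤ (n₀ + 3) * (lev k + 1) := by
            have : (0 : ℝ) ≤ n₀ * lev k := by positivity
            nlinarith
          calc wt p k * (n₀ + 3 * lev k) ≤ wt p k * ((n₀ + 3) * (lev k + 1)) := by gcongr
            _ = _ := by ring
      _ ≤ _ := by
          rw [ENNReal.tsum_mul_left, ENNReal.ofReal_mul (by positivity)]; gcongr
  · intro k
    have h1 := hC (lev k)
    rw [wt, div_inv_eq_mul]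
    calc 2 * (S + 1) * (4 ^ lev k * ((lev k : ℝ) + 1) ^ p)
        ≤ 2 * (S + 1) * (4 ^ lev k * (C * 2 ^ lev k)) := by gcongr
      _ = 2 * (S + 1) * C * 8 ^ lev k := by
          rw [show (8 : ℝ) = 4 * 2 by norm_num, mul_pow]; ring
      _ ≤ 2 ^ n₀ * 8 ^ lev k := by gcongr
      _ = 2 ^ (n₀ + 3 * lev k) := by
          rw [pow_add, pow_mul]; norm_num

/-! ### The maximal constant -/

lemma exists_isDom {Ω : Set E2} (hconv : Convex ℝ Ω) (hopen : IsOpen Ω)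
    (hbdd : Bornology.IsBounded Ω) (h0 : (0 : E2) ∈ Ω) :
    ∃ r₀ R₀ : ℝ, 0 < r₀ ∧ r₀ ≤ 1 ∧ 0 < R₀ ∧ IsDom Ω r₀ R₀ := by
  obtain ⟨r, hr, hb⟩ := Metric.isOpen_iff.1 hopen 0 h0
  obtain ⟨R₀, hR₀, hn⟩ := hbdd.exists_pos_norm_le
  exact ⟨min r 1, R₀, lt_min hr one_pos, min_le_right _ _, hR₀, hconv, hopen, lt_min hr one_pos,
    (Metric.ball_subset_ball (min_le_left _ _)).trans hb, hn⟩

lemma curvSum_rot (p : ℝ) (Ω : Set E2) (R₀ ϑ : ℝ) : curvSum p (rot ϑ '' Ω) R₀ =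
    (∑' k, ENNReal.ofReal (wt p k) * curvN Ω R₀ ((kc k).arg - ϑ)) +
      ∑' k, ENNReal.ofReal (wt p k) * curvN Ω R₀ (Real.pi + (kc k).arg - ϑ) := by
  rw [← ENNReal.tsum_add, curvSum]
  simp only [curvN_rot, mul_add]

/-- The curvature sums of the rotated domains are of weak type `L¹` in the angle. -/
lemma IsDom.weak_curvSum {Ω : Set E2} {r₀ R₀ : ℝ} (hD : IsDom Ω r₀ R₀) {p : ℝ} (hp : 2 < p) :
    ∃ B : ℝ, 0 ≤ B ∧ ∀ s : ℝ, 0 < s →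
      volume {ϑ ∈ Icc (-Real.pi) Real.pi | ENNReal.ofReal s < curvSum p (rot ϑ '' Ω) R₀} ≤
        ENNReal.ofReal (B / s) := by
  obtain ⟨V, hV0, hV⟩ := hD.weak_curvN
  obtain ⟨B, hB0, hB⟩ := weak_sum hp hV0
  have hm := hD.measurable_curvN
  have hpi := Real.pi_lt_d2
  have hpi0 := Real.pi_pos
  have key : ∀ c : ℝ, -Real.pi ≤ c → c ≤ 2 * Real.pi → ∀ s : ℝ, 0 < s →
      volume {ϑ ∈ Icc (-Real.pi) Real.pi | ENNReal.ofReal s < curvN Ω R₀ (c - ϑ)} ≤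
        ENNReal.ofReal (V / s) := by
    intro c hc1 hc2 s hs
    have hms : MeasurableSet {φ ∈ Icc (-10 : ℝ) 10 | ENNReal.ofReal s < curvN Ω R₀ φ} :=
      measurableSet_Icc.inter (measurableSet_lt measurable_const hm)
    refine le_trans ?_ (hV s hs)
    rw [← (Measure.measurePreserving_sub_left volume c).measure_preimage hms.nullMeasurableSet]
    refine measure_mono ?_
    rintro ϑ ⟨⟨h1, h2⟩, h3⟩
    exact ⟨⟨by linarith, by linarith⟩, h3⟩
  have harg : ∀ k, -Real.pi ≤ (kc k).arg ∧ (kc k).arg ≤ Real.pi := fun k =>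
    ⟨(Complex.neg_pi_lt_arg _).le, Complex.arg_le_pi _⟩
  have t1 := hB (fun k ϑ => curvN Ω R₀ ((kc k).arg - ϑ)) (Icc (-Real.pi) Real.pi)
    (fun k => hm.comp (measurable_const.sub measurable_id))
    (fun k => key _ (by linarith [harg k]) (by linarith [harg k]))
  have t2 := hB (fun k ϑ => curvN Ω R₀ (Real.pi + (kc k).arg - ϑ)) (Icc (-Real.pi) Real.pi)
    (fun k => hm.comp (measurable_const.sub measurable_id))
    (fun k => key _ (by linarith [harg k]) (by linarith [harg k]))
  refine ⟨4 * B, by positivity, fun s hs => ?_⟩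
  refine le_trans (measure_mono ?_) ((measure_union_le _ _).trans
    ((add_le_add (t1 (s / 2) (by positivity)) (t2 (s / 2) (by positivity))).trans (le_of_eq ?_)))
  · rintro ϑ ⟨hϑ, h⟩
    rw [curvSum_rot] at h
    by_contra hn
    rw [mem_union, not_or] at hn
    have h1 := not_lt.1 fun h' => hn.1 ⟨hϑ, h'⟩
    have h2 := not_lt.1 fun h' => hn.2 ⟨hϑ, h'⟩
    have h3 := h.trans_le (add_le_add h1 h2)
    rw [← ENNReal.ofReal_add (by positivity) (by positivity), add_halves] at h3
    exact lt_irrefl _ h3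
  · rw [← ENNReal.ofReal_add (by positivity) (by positivity)]
    congr 1
    field_simp
    ring

lemma IsDom.measurable_curvSum_rot {Ω : Set E2} {r₀ R₀ : ℝ} (hD : IsDom Ω r₀ R₀) (p : ℝ) :
    Measurable fun ϑ => curvSum p (rot ϑ '' Ω) R₀ := by
  simp only [curvSum_rot]
  exact (Measurable.tsum fun k => (hD.measurable_curvN.comp
    (measurable_const.sub measurable_id)).const_mul _).add
    (Measurable.tsum fun k => (hD.measurable_curvN.comp
    (measurable_const.sub measurable_id)).const_mul _)

/-- Theorem 1.4: for an arbitrary bounded open convex planar domain `Ω`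
containing the origin and any `ε > 0` there is a measurable function
`𝒞 : [−π,π] → [0,∞]` of weak type `L²` (so finite a.e.) such that
`𝒢_{A_ϑΩ}(R,h) ≤ 𝒞(ϑ) √R (log R)^{1+ε}` for all `ϑ`, all `R ≥ 2` and all `1 ≤ h ≤ R`. -/
theorem statement3 (Ω : Set E2) (hconv : Convex ℝ Ω) (hopen : IsOpen Ω)
    (hbdd : Bornology.IsBounded Ω) (h0 : (0 : E2) ∈ Ω) (ε : ℝ) (hε : 0 < ε) :
    ∃ 𝒞 : ℝ → ℝ≥0∞, Measurable 𝒞 ∧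
      (∃ B : ℝ, ∀ s : ℝ, 0 < s →
        ENNReal.ofReal (s ^ 2) *
            volume {ϑ ∈ Set.Icc (-Real.pi) Real.pi | ENNReal.ofReal s < 𝒞 ϑ} ≤
          ENNReal.ofReal B) ∧
      ∀ ϑ ∈ Set.Icc (-Real.pi) Real.pi, ∀ R h : ℝ, 2 ≤ R → 1 ≤ h → h ≤ R →
        ENNReal.ofReal (meanSquare (rot ϑ '' Ω) R h) ≤
          𝒞 ϑ * ENNReal.ofReal (Real.sqrt R * Real.log R ^ ((1 : ℝ) + ε)) := by
  obtain ⟨r₀, R₀, hr, hr1, hR₀, hD⟩ := exists_isDom hconv hopen hbdd h0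
  obtain ⟨C, hC0, hC⟩ := meanSquare_le (p := 2 + 2 * ε) (by linarith) hr hr1 hR₀
  obtain ⟨B, hB0, hB⟩ := hD.weak_curvSum (p := 2 + 2 * ε) (by linarith)
  have hsq : ∀ x : ℝ≥0∞, (x ^ (1 / 2 : ℝ)) ^ 2 = x := fun x => by
    rw [← ENNReal.rpow_natCast, ← ENNReal.rpow_mul]; norm_num
  refine ⟨fun ϑ => (ENNReal.ofReal (C + 1) * curvSum (2 + 2 * ε) (rot ϑ '' Ω) R₀) ^ (1 / 2 : ℝ),
    ((hD.measurable_curvSum_rot _).const_mul _).pow_const _, ⟨B * (C + 1), fun s hs => ?_⟩, ?_⟩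
  · have hsub : {ϑ ∈ Set.Icc (-Real.pi) Real.pi | ENNReal.ofReal s <
        (ENNReal.ofReal (C + 1) * curvSum (2 + 2 * ε) (rot ϑ '' Ω) R₀) ^ (1 / 2 : ℝ)} ⊆
        {ϑ ∈ Set.Icc (-Real.pi) Real.pi | ENNReal.ofReal (s ^ 2 / (C + 1)) <
          curvSum (2 + 2 * ε) (rot ϑ '' Ω) R₀} := by
      rintro ϑ ⟨hϑ, h⟩
      refine ⟨hϑ, ?_⟩
      have h2 := ENNReal.pow_lt_pow_left_iff two_ne_zero |>.2 h
      rw [hsq, ← ENNReal.ofReal_pow hs.le] at h2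
      rw [ENNReal.ofReal_div_of_pos (by positivity)]
      exact ENNReal.div_lt_of_lt_mul' h2
    calc ENNReal.ofReal (s ^ 2) * volume {ϑ ∈ Set.Icc (-Real.pi) Real.pi | ENNReal.ofReal s <
          (ENNReal.ofReal (C + 1) * curvSum (2 + 2 * ε) (rot ϑ '' Ω) R₀) ^ (1 / 2 : ℝ)}
        ≤ ENNReal.ofReal (s ^ 2) * ENNReal.ofReal (B / (s ^ 2 / (C + 1))) :=
          mul_le_mul_right ((measure_mono hsub).trans (hB _ (by positivity))) _
      _ = ENNReal.ofReal (B * (C + 1)) := by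
          rw [← ENNReal.ofReal_mul (by positivity)]
          congr 1
          field_simp
  · intro ϑ _ R h hR hh hhR
    have hlog : 0 < Real.log R := Real.log_pos (by linarith)
    have hms : 0 ≤ meanSquare (rot ϑ '' Ω) R h := Real.sqrt_nonneg _
    by_contra! hlt
    have h2 := (ENNReal.pow_lt_pow_left_iff two_ne_zero).2 hlt
    rw [mul_pow, hsq, ← ENNReal.ofReal_pow hms, ← ENNReal.ofReal_pow (by positivity)] at h2
    have h3 := h2.trans_le (hC _ (hD.rotated ϑ) R h hR hh hhR)
    refine absurd h3 (not_lt.2 ?_)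
    have e : (Real.sqrt R * Real.log R ^ ((1 : ℝ) + ε)) ^ 2 = R * Real.log R ^ (2 + 2 * ε) := by
      rw [mul_pow, Real.sq_sqrt (by linarith), ← Real.rpow_natCast, ← Real.rpow_mul hlog.le]
      congr 2
      push_cast
      ring
    rw [e, mul_right_comm, ← ENNReal.ofReal_mul (by positivity)]
    gcongr
    linarith

end
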